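/- arXiv:1506.06819 — 2 statements merged into one kernel-verified Lean document; each statement's English description precedes it below -/
import Mathlib

section
/- Let r ≥ 2 and n_1,…,n_r be positive integers, let K = K_{n_1,…,n_r} be the complete colorful complex, and fix 1 ≤ k ≤ r−1. Call a set T ⊆ F_k a maximal spanning k-forest of K if the columns of ∂_k indexed by T are linearly independent over ℚ and |T| = rank_ℚ(∂_k), and set t(T) := the cardinality of the torsion subgroup of ker_ℤ(∂_{k−1}) / (the subgroup generated by the columns of ∂_k indexed by T). Then Adin's formula holds: ∑_T t(T)² = ∏_{D⊆[r], |D|≤k} σ_D^{C(r−2−|D|, k−|D|)·π_D}, where σ_D = ∑_{i∈[r]∖D} n_i, π_D = ∏_{i∈D}(n_i−1), and the binomial coefficient C(a,b) is taken to be 1 when b = 0 (even when a < 0) and 0 when 0 ≤ a < b. -/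
open Matrix

namespace ColorfulComplex

variable {r : ℕ} (n : Fin r → ℕ)

/-- The vertex set of the complete colorful complex: the `t`-th vertex of color `j` is
`⟨j, t⟩`. -/
abbrev Vtx (n : Fin r → ℕ) := Σ j : Fin r, Fin (n j)

/-- A fixed linear order on the vertices, compatible with the color classes:
vertices of smaller colors come first. -/
def ord (v : Vtx n) : ℕ := (∑ i ∈ Finset.univ.filter (fun i => i < v.1), n i) + v.2

/-- The `c`-element faces of the complete colorful complex: `c`-element sets of vertices
with at most one vertex of each color. -/
def Face (c : ℕ) :=
  {σ : Finset (Vtx n) // σ.card = c ∧ ∀ v ∈ σ, ∀ w ∈ σ, v.1 = w.1 → v = w}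

instance (c : ℕ) : Fintype (Face n c) := by unfold Face; infer_instance
instance (c : ℕ) : DecidableEq (Face n c) := by unfold Face; infer_instance

/-- The `k`-th boundary matrix of the complete colorful complex: rows are indexed by
`k`-element faces, columns by `(k+1)`-element faces; the `(σ, τ)` entry is `(-1)^i` if
`σ = τ ∖ {x}` with `x` the `i`-th smallest element of `τ` in the fixed order, and `0`
otherwise.  (`k = 0` gives the all-ones augmentation row `∂_0`.) -/
def bdry (k : ℕ) : Matrix (Face n k) (Face n (k + 1)) ℤ :=
  fun σ τ => ∑ x ∈ τ.1,
    if σ.1 = τ.1.erase x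
      then (-1 : ℤ) ^ ((τ.1.filter (fun y => ord n y < ord n x)).card) else 0

/-- `T` is a maximal spanning `k`-forest of the complete colorful complex (here
`k = e + 1`): the columns of `∂_k` indexed by `T` are linearly independent over `ℚ`, and
`|T| = rank_ℚ ∂_k`. -/
def IsForest (e : ℕ) (T : Finset (Face n (e + 2))) : Prop :=
  LinearIndependent ℚ (fun τ : T => fun σ => ((bdry n (e + 1) σ τ.1 : ℤ) : ℚ)) ∧
    T.card = ((bdry n (e + 1)).map (Int.cast : ℤ → ℚ)).rank

/-- The group `ker_ℤ(∂_{k-1}) / (subgroup generated by the columns of `∂_k` indexed by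
`T`)`, for `k = e + 1`. -/
def Hgrp (e : ℕ) (T : Finset (Face n (e + 2))) : Type _ :=
  LinearMap.ker (bdry n e).mulVecLin ⧸
    Submodule.comap (LinearMap.ker (bdry n e).mulVecLin).subtype
      (Submodule.span ℤ ((fun τ => (bdry n (e + 1))ᵀ τ) '' ↑T))

noncomputable instance (e : ℕ) (T : Finset (Face n (e + 2))) :
    AddCommGroup (Hgrp n e T) := by
  unfold Hgrp; infer_instance

noncomputable instance (e : ℕ) (T : Finset (Face n (e + 2))) : Module ℤ (Hgrp n e T) := by
  unfold Hgrp; infer_instance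

/-- `t(T)`: the number of torsion elements of `ker_ℤ(∂_{k-1}) / im_ℤ(∂_k|_T)`. -/
noncomputable def torsionCount (e : ℕ) (T : Finset (Face n (e + 2))) : ℕ :=
  Nat.card (Submodule.torsion ℤ (Hgrp n e T))

end ColorfulComplex


namespace AdinProof
open Finset

section LinAlg

/-- The maximal minor of `M` with columns `T` (up to a sign). -/
noncomputable def minor {ι F : Type*} [Fintype ι] [DecidableEq ι] [DecidableEq F]
    (M : Matrix ι F ℤ) (T : Finset F) : ℤ :=
  if h : Fintype.card ι = Fintype.card T then
    det (M.submatrix id (fun i => ((Fintype.equivOfCardEq h : ι ≃ T) i : F))) else 0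

theorem cauchy_binet {ι F : Type*} [Fintype ι] [DecidableEq ι] [Fintype F] [DecidableEq F]
    (M : Matrix ι F ℤ) :
    det (M * Mᵀ) = ∑ T : Finset F, minor M T ^ 2 := by
  classical
  have h1 : det (M * Mᵀ) = ∑ p : ι → F, (∏ i, M i (p i)) * det (M.submatrix id p) := by
    have hrow : (M * Mᵀ) = fun i => ∑ f : F, M i f • (Mᵀ f) := by
      ext i j
      simp [Matrix.mul_apply, Finset.sum_apply]
    have := (detRowAlternating (n := ι) (R := ℤ)).toMultilinearMap.map_sum
      (fun (i : ι) (f : F) => M i f • (Mᵀ f))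
    have h2 : det (M * Mᵀ) = ∑ p : ι → F, det (fun i => M i (p i) • (Mᵀ (p i))) := by
      rw [hrow]; exact this
    rw [h2]
    refine Finset.sum_congr rfl fun p _ => ?_
    have := (detRowAlternating (n := ι) (R := ℤ)).toMultilinearMap.map_smul_univ
      (fun i => M i (p i)) (fun i => Mᵀ (p i))
    have h3 : det (fun i => M i (p i) • (Mᵀ (p i))) = (∏ i, M i (p i)) • det (fun i => Mᵀ (p i)) :=
      this
    rw [h3, smul_eq_mul, ← det_transpose (M.submatrix id p)]
    rfl
  rw [h1, ← Finset.sum_fiberwise (g := fun p : ι → F => Finset.univ.image p)]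
  refine Finset.sum_congr rfl fun T _ => ?_
  unfold minor
  split_ifs with h
  · set e : ι ≃ T := Fintype.equivOfCardEq h with he
    have hb : ∑ p ∈ Finset.univ.filter (fun p : ι → F => Finset.univ.image p = T),
        (∏ i, M i (p i)) * det (M.submatrix id p) =
        ∑ π : Equiv.Perm ι, (∏ i, M i (e (π i))) *
          det (M.submatrix id (fun i => ((e (π i) : T) : F))) := by
      symm
      refine Finset.sum_bij (fun π _ => fun i => ((e (π i) : T) : F)) ?_ ?_ ?_ ?_
      · intro π _
        simp only [Finset.mem_filter, Finset.mem_univ, true_and]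
        ext x
        simp only [Finset.mem_image, Finset.mem_univ, true_and]
        constructor
        · rintro ⟨i, rfl⟩; exact (e (π i)).2
        · intro hx
          exact ⟨π.symm (e.symm ⟨x, hx⟩), by simp⟩
      · intro π _ π' _ hh
        ext i
        have := congrFun hh i
        simpa using this
      · intro p hp
        simp only [Finset.mem_filter, Finset.mem_univ, true_and] at hp
        have hm : ∀ i, p i ∈ T := fun i => hp ▸ Finset.mem_image_of_mem p (Finset.mem_univ i)
        let q : ι → ι := fun i => e.symm ⟨p i, hm i⟩
        have hs : Function.Surjective q := by
          intro j
          have : ((e j : T) : F) ∈ Finset.univ.image p := by rw [hp]; exact (e j).2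
          obtain ⟨i, -, hi⟩ := Finset.mem_image.1 this
          refine ⟨i, ?_⟩
          simp [q, hi]
        have hbij : Function.Bijective q := Finite.surjective_iff_bijective.1 hs
        refine ⟨Equiv.ofBijective q hbij, Finset.mem_univ _, ?_⟩
        ext i
        simp [q]
      · intro π _; rfl
    rw [hb, sq]
    have h4 : ∀ π : Equiv.Perm ι, det (M.submatrix id (fun i => ((e (π i) : T) : F))) =
        Equiv.Perm.sign π * det (M.submatrix id (fun i => ((e i : T) : F))) := by
      intro π
      exact det_permute' π (M.submatrix id (fun i => ((e i : T) : F)))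
    simp_rw [h4]
    have h5 : det (M.submatrix id (fun i => ((e i : T) : F))) =
        ∑ π : Equiv.Perm ι, (Equiv.Perm.sign π : ℤ) * ∏ i, M i (e (π i)) := by
      rw [← det_transpose, det_apply']
      rfl
    generalize det (M.submatrix id (fun i => ((e i : T) : F))) = d at h5 ⊢
    conv_rhs => lhs; rw [h5]
    rw [Finset.sum_mul]
    refine Finset.sum_congr rfl fun π _ => ?_
    ring
  · rw [sq, zero_mul]
    refine Finset.sum_eq_zero fun p hp => ?_
    simp only [Finset.mem_filter, Finset.mem_univ, true_and] at hp
    have hni : ¬ Function.Injective p := by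
      intro hi
      apply h
      rw [← hp, Fintype.card_coe, Finset.card_image_of_injective _ hi, Finset.card_univ]
    simp only [Function.Injective, not_forall] at hni
    obtain ⟨i, j, hij, hne⟩ := hni
    rw [det_zero_of_column_eq hne (fun k => by simp [hij]), mul_zero]

theorem det_gram_nonneg {ι F : Type*} [Fintype ι] [DecidableEq ι] [Fintype F] [DecidableEq F]
    (M : Matrix ι F ℤ) : 0 ≤ det (M * Mᵀ) := by
  rw [cauchy_binet]
  exact Finset.sum_nonneg fun _ _ => sq_nonneg _

variable {F ι ι' : Type*} [Fintype F] [DecidableEq F] [Fintype ι] [DecidableEq ι]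
  [Fintype ι'] [DecidableEq ι']

theorem gram_key (B : Matrix F ι ℤ) (N : Matrix ι F ℤ) (S : Matrix F ι' ℤ) (M : Matrix ι' F ℤ)
    (hNB : N * B = 1) (hMS : M * S = 1) (hMB : M * B = 0) (hNS : N * S = 0)
    (hsum : B * N + S * M = 1) : det (Bᵀ * B) = det (M * Mᵀ) := by
  let U := fromCols B S
  let V := fromRows N M
  let W := fromCols B Mᵀ
  have hUV : U * V = 1 := by simp [U, V, fromCols_mul_fromRows, hsum]
  have hVU : V * U = 1 := by simp [U, V, hNB, hMS, hMB, hNS]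
  have h1 : det (Uᵀ * W) = det (Bᵀ * B) := by
    have hb : Bᵀ * Mᵀ = 0 := by rw [← transpose_mul, hMB, transpose_zero]
    have hs : Sᵀ * Mᵀ = 1 := by rw [← transpose_mul, hMS, transpose_one]
    simp [U, W, transpose_fromCols, hb, hs]
  have h2 : det (V * W) = det (M * Mᵀ) := by
    simp [V, W, hNB, hMB]
  have h3 : Uᵀ * W = (Uᵀ * U) * (V * W) := by
    rw [Matrix.mul_assoc, ← Matrix.mul_assoc U, hUV, Matrix.one_mul]
  have h4 : det (Uᵀ * U) * det (V * Vᵀ) = 1 := by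
    rw [← det_mul, Matrix.mul_assoc, ← Matrix.mul_assoc U, hUV, Matrix.one_mul, ← transpose_mul,
      hVU, transpose_one, det_one]
  have h5 : 0 ≤ det (Uᵀ * U) := by
    have := det_gram_nonneg Uᵀ
    rwa [transpose_transpose] at this
  have h6 : det (Uᵀ * U) = 1 := by
    rcases Int.eq_one_or_neg_one_of_mul_eq_one h4 with h | h
    · exact h
    · rw [h] at h5; norm_num at h5
  rw [← h1, h3, det_mul, h6, one_mul, h2]

theorem lap_det {F0 F2 : Type*} [Fintype F0] [Fintype F2]
    (B : Matrix F ι ℤ) (N : Matrix ι F ℤ) (S : Matrix F ι' ℤ) (M : Matrix ι' F ℤ)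
    (hNB : N * B = 1) (hMS : M * S = 1) (hMB : M * B = 0) (hNS : N * S = 0)
    (hsum : B * N + S * M = 1) (M2 : Matrix ι F2 ℤ) (B' : Matrix F0 ι' ℤ) :
    det ((B * M2) * (B * M2)ᵀ + (B' * M)ᵀ * (B' * M)) =
      det (M2 * M2ᵀ) * det (M * Mᵀ) ^ 2 * det (B'ᵀ * B') := by
  let U := fromCols B S
  let V := fromRows N M
  let W := fromCols B Mᵀ
  have hUV : U * V = 1 := by simp [U, V, fromCols_mul_fromRows, hsum]
  have hVU : V * U = 1 := by simp [U, V, hNB, hMS, hMB, hNS]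
  have h1 : det (Wᵀ * U) = det (Bᵀ * B) := by
    rw [← det_transpose, transpose_mul, transpose_transpose]
    have hb : Bᵀ * Mᵀ = 0 := by rw [← transpose_mul, hMB, transpose_zero]
    have hs : Sᵀ * Mᵀ = 1 := by rw [← transpose_mul, hMS, transpose_one]
    simp [U, W, transpose_fromCols, hb, hs]
  have h2 : det (V * W) = det (M * Mᵀ) := by
    simp [V, W, hNB, hMB]
  let G := fromBlocks (M2 * M2ᵀ) 0 0 (B'ᵀ * B')
  have hG : (B * M2) * (B * M2)ᵀ + (B' * M)ᵀ * (B' * M) = W * (G * Wᵀ) := by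
    simp only [W, G, transpose_fromCols, transpose_transpose, fromBlocks_mul_fromRows,
      fromCols_mul_fromRows, transpose_mul, Matrix.zero_mul, add_zero, zero_add, Matrix.mul_assoc]
  rw [hG]
  have h3 : W * (G * Wᵀ) = U * (V * (W * (G * Wᵀ))) := by
    rw [← Matrix.mul_assoc U, hUV, Matrix.one_mul]
  rw [h3, det_comm' hUV hVU]
  have h4 : V * (W * (G * Wᵀ)) * U = (V * W) * G * (Wᵀ * U) := by
    simp only [Matrix.mul_assoc]
  rw [h4, det_mul, det_mul, h1, h2, gram_key B N S M hNB hMS hMB hNS hsum]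
  have : det G = det (M2 * M2ᵀ) * det (B'ᵀ * B') := by simp [G]
  rw [this]; ring

/-- Rank factorization of an integer matrix. -/
theorem exists_factor {F0 F1 : Type*} [Fintype F0] [Fintype F1] [DecidableEq F1]
    (A : Matrix F0 F1 ℤ) :
    ∃ (ρ : ℕ) (B : Matrix F0 (Fin ρ) ℤ) (M : Matrix (Fin ρ) F1 ℤ) (S : Matrix F1 (Fin ρ) ℤ),
      A = B * M ∧ M * S = 1 ∧ ∀ x, B *ᵥ x = 0 → x = 0 := by
  let L := LinearMap.range A.mulVecLin
  let b : Module.Basis (Fin (Module.finrank ℤ L)) ℤ L := Module.finBasis ℤ L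
  obtain ⟨s, hs⟩ := Module.projective_lifting_property A.mulVecLin.rangeRestrict
    (LinearMap.id : L →ₗ[ℤ] L) (LinearMap.surjective_rangeRestrict _)
  have hs' : ∀ l, A.mulVecLin.rangeRestrict (s l) = l := fun l => LinearMap.congr_fun hs l
  let B : Matrix F0 (Fin (Module.finrank ℤ L)) ℤ := fun σ i => (b i : F0 → ℤ) σ
  have hB : ∀ x, B *ᵥ x = ((b.equivFun.symm x : L) : F0 → ℤ) := by
    intro x
    ext σ
    simp [B, Matrix.mulVec, dotProduct, Module.Basis.equivFun_symm_apply, Finset.sum_apply,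
      mul_comm]
  refine ⟨_, B,
    LinearMap.toMatrix' (b.equivFun.toLinearMap ∘ₗ A.mulVecLin.rangeRestrict),
    LinearMap.toMatrix' (s ∘ₗ b.equivFun.symm.toLinearMap), ?_, ?_, ?_⟩
  · apply Matrix.toLin'.injective
    ext1 x
    ext1
    rw [Matrix.toLin'_mul, Matrix.toLin'_toMatrix']
    simp only [LinearMap.comp_apply, Matrix.toLin'_apply, hB]
    simp
  · rw [← LinearMap.toMatrix'_comp]
    rw [← LinearMap.toMatrix'_id]
    congr 1
    ext1 x
    ext1
    simp only [LinearMap.comp_apply, hs', LinearEquiv.coe_coe, LinearEquiv.apply_symm_apply,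
      LinearMap.id_apply]
  · intro x hx
    rw [hB] at hx
    have : b.equivFun.symm x = 0 := Subtype.ext hx
    exact (LinearEquiv.map_eq_zero_iff _).1 this

end LinAlg
end AdinProof

namespace AdinProof
open Finset

section Forest
variable {F0 F1 F2 ι : Type*} [Fintype F0] [DecidableEq F0] [Fintype F1] [DecidableEq F1]
  [Fintype F2] [DecidableEq F2] [Fintype ι] [DecidableEq ι]

theorem rank_factor (B : Matrix F1 ι ℤ) (M : Matrix ι F2 ℤ) (N : Matrix ι F1 ℤ) (S : Matrix F2 ι ℤ)
    (hNB : N * B = 1) (hMS : M * S = 1) :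
    ((B * M).map (Int.cast : ℤ → ℚ)).rank = Fintype.card ι := by
  let c : ℤ →+* ℚ := Int.castRingHom ℚ
  have hm : (B * M).map (Int.cast : ℤ → ℚ) = B.map c * M.map c := Matrix.map_mul (f := c)
  rw [hm]
  apply le_antisymm
  · exact (Matrix.rank_mul_le_left _ _).trans (Matrix.rank_le_card_width _)
  · have h1 : N.map c * (B.map c * M.map c) * S.map c = 1 := by
      rw [← Matrix.map_mul, ← Matrix.map_mul, ← Matrix.map_mul, ← Matrix.mul_assoc, hNB,
        Matrix.one_mul, hMS]
      simp [Matrix.map_one]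
    calc Fintype.card ι = (1 : Matrix ι ι ℚ).rank := by simp
      _ = (N.map c * (B.map c * M.map c) * S.map c).rank := by rw [h1]
      _ ≤ (N.map c * (B.map c * M.map c)).rank := Matrix.rank_mul_le_left _ _
      _ ≤ _ := Matrix.rank_mul_le_right _ _

theorem linInd_iff (B : Matrix F1 ι ℤ) (M : Matrix ι F2 ℤ) (N : Matrix ι F1 ℤ)
    (hNB : N * B = 1) (T : Finset F2) (e : ι ≃ T) :
    LinearIndependent ℚ (fun τ : T => fun σ => (((B * M) σ τ.1 : ℤ) : ℚ)) ↔
      det (M.submatrix id (fun i => ((e i : T) : F2))) ≠ 0 := by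
  let c : ℤ →+* ℚ := Int.castRingHom ℚ
  let P := M.submatrix id (fun i => ((e i : T) : F2))
  rw [← linearIndependent_equiv e]
  have h1 : ((fun τ : T => fun σ => (((B * M) σ τ.1 : ℤ) : ℚ)) ∘ e) = (B.map c * P.map c).col := by
    ext i σ
    simp [P, Matrix.mul_apply, c, Matrix.col]
  rw [h1, ← Matrix.mulVec_injective_iff]
  have h2 : Function.Injective (B.map c).mulVec := by
    intro x y hxy
    have := congrArg (fun v => (N.map c) *ᵥ v) hxy
    simp only [Matrix.mulVec_mulVec, ← Matrix.map_mul, hNB] at this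
    simpa [Matrix.map_one] using this
  have h3 : (B.map c * P.map c).mulVec = (B.map c).mulVec ∘ (P.map c).mulVec := by
    ext1 x; simp [Matrix.mulVec_mulVec]
  rw [h3, h2.of_comp_iff, Matrix.mulVec_injective_iff_isUnit, Matrix.isUnit_iff_isUnit_det,
    isUnit_iff_ne_zero]
  have h4 : det (P.map c) = ((det P : ℤ) : ℚ) := (Int.cast_det P).symm
  rw [h4, Ne, Int.cast_eq_zero]

theorem forest_iff (B : Matrix F1 ι ℤ) (M : Matrix ι F2 ℤ) (N : Matrix ι F1 ℤ) (S : Matrix F2 ι ℤ)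
    (hNB : N * B = 1) (hMS : M * S = 1) (T : Finset F2) :
    (LinearIndependent ℚ (fun τ : T => fun σ => (((B * M) σ τ.1 : ℤ) : ℚ)) ∧
      T.card = ((B * M).map (Int.cast : ℤ → ℚ)).rank) ↔ minor M T ≠ 0 := by
  rw [rank_factor B M N S hNB hMS]
  unfold minor
  split_ifs with h
  · rw [linInd_iff B M N hNB T (Fintype.equivOfCardEq h)]
    rw [Fintype.card_coe] at h
    simp [h]
  · rw [Fintype.card_coe] at h
    simp [Ne.symm h]

theorem torsion_card (A0 : Matrix F0 F1 ℤ) (B : Matrix F1 ι ℤ) (M : Matrix ι F2 ℤ)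
    (N : Matrix ι F1 ℤ) (hNB : N * B = 1)
    (hker : ∀ z, A0 *ᵥ z = 0 ↔ ∃ x, B *ᵥ x = z) (T : Finset F2) (hT : minor M T ≠ 0) :
    Nat.card (Submodule.torsion ℤ (LinearMap.ker A0.mulVecLin ⧸
      Submodule.comap (LinearMap.ker A0.mulVecLin).subtype
        (Submodule.span ℤ ((fun τ => (B * M)ᵀ τ) '' (T : Set F2))))) = (minor M T).natAbs := by
  unfold minor at hT ⊢
  split_ifs at hT ⊢ with h
  swap
  · exact absurd rfl hT
  set e : ι ≃ T := Fintype.equivOfCardEq h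
  set P := M.submatrix id (fun i => ((e i : T) : F2)) with hP
  set L := LinearMap.ker A0.mulVecLin with hL
  set K := Submodule.comap L.subtype
        (Submodule.span ℤ ((fun τ => (B * M)ᵀ τ) '' (T : Set F2))) with hK
  have hBinj : Function.Injective B.mulVec := by
    intro x y hxy
    have := congrArg (fun v => N *ᵥ v) hxy
    simpa only [Matrix.mulVec_mulVec, hNB, Matrix.one_mulVec] using this
  have hmem : ∀ x, B *ᵥ x ∈ L := fun x => by
    rw [hL, LinearMap.mem_ker, Matrix.mulVecLin_apply, hker]; exact ⟨x, rfl⟩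
  let φ : (ι → ℤ) ≃ₗ[ℤ] L := LinearEquiv.ofBijective (B.mulVecLin.codRestrict L hmem) (by
    constructor
    · intro x y hxy
      exact hBinj (congrArg Subtype.val hxy)
    · rintro ⟨z, hz⟩
      rw [hL, LinearMap.mem_ker, Matrix.mulVecLin_apply, hker] at hz
      obtain ⟨x, hx⟩ := hz
      exact ⟨x, Subtype.ext hx⟩)
  have hφ : ∀ x, ((φ x : L) : F1 → ℤ) = B *ᵥ x := fun x => rfl
  let b : Module.Basis ι ℤ L := Module.Basis.ofEquivFun φ.symm
  -- the columns
  let v : ι → L := fun i => φ (P.col i)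
  have hvv : ∀ i, ((v i : L) : F1 → ℤ) = (B * M)ᵀ (e i) := by
    intro i
    ext σ
    simp [v, hφ, Matrix.mulVec, dotProduct, Matrix.mul_apply, P, Matrix.col]
  have hdet : b.det v = det P := by
    rw [Module.Basis.det_apply]
    congr 1
    ext i j
    simp [Module.Basis.toMatrix_apply, b, v, Matrix.col]
  have hvK : ∀ i, v i ∈ K := by
    intro i
    rw [hK, Submodule.mem_comap]
    apply Submodule.subset_span
    exact ⟨e i, (e i).2, (hvv i).symm⟩
  have hvli : LinearIndependent ℤ v := by
    have : LinearIndependent ℤ P.col := Matrix.linearIndependent_cols_of_det_ne_zero hT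
    exact this.map' φ.toLinearMap φ.ker
  have hspan : Submodule.span ℤ (Set.range v) = K := by
    apply le_antisymm
    · rw [Submodule.span_le]
      rintro _ ⟨i, rfl⟩
      exact hvK i
    · intro z hz
      rw [hK, Submodule.mem_comap] at hz
      have : (fun τ => (B * M)ᵀ τ) '' (T : Set F2) = L.subtype '' (Set.range v) := by
        ext w
        constructor
        · rintro ⟨τ, hτ, rfl⟩
          refine ⟨v (e.symm ⟨τ, hτ⟩), ⟨_, rfl⟩, ?_⟩
          simp [hvv]
        · rintro ⟨_, ⟨i, rfl⟩, rfl⟩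
          exact ⟨e i, (e i).2, (hvv i).symm⟩
      rw [this, Submodule.span_image] at hz
      obtain ⟨y, hy, hyz⟩ := hz
      rwa [← L.injective_subtype hyz]
  let bK : Module.Basis ι ℤ K := (Module.Basis.span hvli).map (LinearEquiv.ofEq _ _ hspan)
  have hbK : ((↑) ∘ bK : ι → L) = v := by
    ext1 i
    simp [bK, Module.Basis.span_apply]
  have hcard : Nat.card (L ⧸ K) = (det P).natAbs := by
    rw [← Submodule.natAbs_det_basis_change b K bK, hbK, hdet]
  have hne : Nat.card (L ⧸ K) ≠ 0 := by rw [hcard]; simpa using hT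
  have htop : Submodule.torsion ℤ (L ⧸ K) = ⊤ := by
    rw [eq_top_iff]
    intro x _
    rw [Submodule.mem_torsion_iff]
    refine ⟨⟨(Nat.card (L ⧸ K) : ℤ), ?_⟩, ?_⟩
    · exact mem_nonZeroDivisors_of_ne_zero (by exact_mod_cast hne)
    · show (Nat.card (L ⧸ K) : ℤ) • x = 0
      rw [natCast_zsmul]
      exact card_nsmul_eq_zero'
  rw [htop, ← hcard]
  exact Nat.card_congr (Equiv.Set.univ _)

end Forest
end AdinProof

namespace AdinProof
open Finset

section Tensor
variable {ι : Type*} [Fintype ι] [DecidableEq ι] {O : ι → Type*} [∀ i, Fintype (O i)]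
  [∀ i, DecidableEq (O i)] {R : Type*} [CommRing R]

/-- Tensor (Kronecker) product of a family of matrices. -/
def tens (A : ∀ i, Matrix (O i) (O i) R) : Matrix (∀ i, O i) (∀ i, O i) R :=
  fun f g => ∏ i, A i (f i) (g i)

theorem tens_mul (A B : ∀ i, Matrix (O i) (O i) R) :
    tens A * tens B = tens (fun i => A i * B i) := by
  ext f g
  simp only [tens, Matrix.mul_apply, ← Finset.prod_mul_distrib]
  rw [Finset.prod_univ_sum, Fintype.piFinset_univ]

theorem tens_one : tens (fun i => (1 : Matrix (O i) (O i) R)) = 1 := by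
  ext f g
  simp only [tens]
  by_cases h : f = g
  · subst h; simp
  · obtain ⟨i, hi⟩ := Function.ne_iff.1 h
    rw [Matrix.one_apply_ne h]
    exact Finset.prod_eq_zero (Finset.mem_univ i) (Matrix.one_apply_ne hi)

theorem tens_transpose (A : ∀ i, Matrix (O i) (O i) R) : (tens A)ᵀ = tens (fun i => (A i)ᵀ) := rfl

theorem tens_add (j : ι) (A B C : ∀ i, Matrix (O i) (O i) R) (hj : A j = B j + C j)
    (hB : ∀ i, i ≠ j → A i = B i) (hC : ∀ i, i ≠ j → A i = C i) : tens A = tens B + tens C := by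
  ext f g
  simp only [tens, Matrix.add_apply]
  rw [← Finset.mul_prod_erase _ _ (Finset.mem_univ j), ← Finset.mul_prod_erase _ _ (Finset.mem_univ j),
    ← Finset.mul_prod_erase (a := j) _ (fun i => C i (f i) (g i)) (Finset.mem_univ j), hj]
  have h1 : ∏ x ∈ Finset.univ.erase j, A x (f x) (g x) = ∏ x ∈ Finset.univ.erase j, B x (f x) (g x) :=
    Finset.prod_congr rfl fun i hi => by rw [hB i (Finset.ne_of_mem_erase hi)]
  have h2 : ∏ x ∈ Finset.univ.erase j, C x (f x) (g x) = ∏ x ∈ Finset.univ.erase j, A x (f x) (g x) :=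
    Finset.prod_congr rfl fun i hi => by rw [hC i (Finset.ne_of_mem_erase hi)]
  rw [h2, h1, Matrix.add_apply, add_mul]

theorem tens_zero (j : ι) (A : ∀ i, Matrix (O i) (O i) R) (hj : A j = 0) : tens A = 0 := by
  ext f g
  exact Finset.prod_eq_zero (Finset.mem_univ j) (by rw [hj]; rfl)

theorem tens_anticomm (j : ι) (A B : ∀ i, Matrix (O i) (O i) R) (hj : A j * B j + B j * A j = 0)
    (h : ∀ i, i ≠ j → A i * B i = B i * A i) : tens A * tens B + tens B * tens A = 0 := by
  rw [tens_mul, tens_mul]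
  rw [← tens_add j (Function.update (fun i => A i * B i) j 0)]
  · exact tens_zero j _ (by simp)
  · simp [hj]
  · intro i hi; simp [hi]
  · intro i hi; simp [hi, h i hi]

end Tensor

section Local
variable {m : ℕ} {R : Type*} [CommRing R]

/-- sign -/
def lEps (m : ℕ) : Matrix (Option (Fin m)) (Option (Fin m)) ℤ :=
  Matrix.diagonal (fun x => if x = none then 1 else -1)
/-- local boundary -/
def lD (m : ℕ) : Matrix (Option (Fin m)) (Option (Fin m)) ℤ :=
  fun x y => if x = none ∧ y ≠ none then 1 else 0
/-- local homotopy -/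
def lH (a : Fin m) : Matrix (Option (Fin m)) (Option (Fin m)) ℤ :=
  fun x y => if x = some a ∧ y = none then 1 else 0
/-- local projection -/
def lP (a : Fin m) : Matrix (Option (Fin m)) (Option (Fin m)) ℤ :=
  fun x y => if y = none then 0 else (if x = y then 1 else 0) - (if x = some a then 1 else 0)

theorem eps_eps : lEps m * lEps m = 1 := by
  rw [lEps, Matrix.diagonal_mul_diagonal, ← Matrix.diagonal_one]
  congr 1; ext x; split_ifs <;> simp

theorem eps_d : lEps m * lD m = lD m := by
  ext x y; rw [lEps, Matrix.diagonal_mul, lD]; split_ifs <;> simp_all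
theorem d_eps : lD m * lEps m = - lD m := by
  ext x y; rw [lEps, Matrix.mul_diagonal, Matrix.neg_apply, lD]; split_ifs <;> simp_all
theorem eps_h (a : Fin m) : lEps m * lH a = - lH a := by
  ext x y; rw [lEps, Matrix.diagonal_mul, Matrix.neg_apply, lH]; split_ifs <;> simp_all
theorem h_eps (a : Fin m) : lH a * lEps m = lH a := by
  ext x y; rw [lEps, Matrix.mul_diagonal, lH]; split_ifs <;> simp_all
theorem eps_P (a : Fin m) : lEps m * lP a = - lP a := by
  ext x y; rw [lEps, Matrix.diagonal_mul, Matrix.neg_apply, lP]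
  cases x <;> cases y <;> simp
theorem P_eps (a : Fin m) : lP a * lEps m = - lP a := by
  ext x y; rw [lEps, Matrix.mul_diagonal, Matrix.neg_apply, lP]
  cases x <;> cases y <;> simp
theorem d_P (a : Fin m) : lD m * lP a = 0 := by
  ext x y
  rw [Matrix.mul_apply, Fintype.sum_option]
  cases x <;> cases y <;> simp [lD, lP, Finset.sum_sub_distrib]
theorem P_d (a : Fin m) : lP a * lD m = 0 := by
  ext x y
  rw [Matrix.mul_apply, Fintype.sum_option]
  cases x <;> cases y <;> simp [lD, lP]
theorem d_d : lD m * lD m = 0 := by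
  ext x y
  rw [Matrix.mul_apply, Fintype.sum_option]
  cases x <;> cases y <;> simp [lD]
theorem d_h (a : Fin m) : lD m * lH a + lH a * lD m = 1 - lP a := by
  ext x y
  rw [Matrix.add_apply, Matrix.mul_apply, Matrix.mul_apply, Fintype.sum_option, Fintype.sum_option]
  cases x <;> cases y <;> simp [lD, lH, lP, Matrix.one_apply]
theorem eps_dt : lEps m * (lD m)ᵀ = - (lD m)ᵀ := by
  ext x y; rw [lEps, Matrix.diagonal_mul, Matrix.neg_apply, transpose_apply, lD]
  split_ifs <;> simp_all
theorem dt_eps : (lD m)ᵀ * lEps m = (lD m)ᵀ := by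
  ext x y; rw [lEps, Matrix.mul_diagonal, transpose_apply, lD]; split_ifs <;> simp_all
theorem epst : (lEps m)ᵀ = lEps m := by simp [lEps]

/-- local laplacian -/
def lL (m : ℕ) : Matrix (Option (Fin m)) (Option (Fin m)) ℤ :=
  lD m * (lD m)ᵀ + (lD m)ᵀ * lD m

theorem lL_apply (x y : Option (Fin m)) :
    lL m x y = if x = none then (if y = none then (m : ℤ) else 0) else (if y = none then 0 else 1) := by
  rw [lL, Matrix.add_apply, Matrix.mul_apply, Matrix.mul_apply, Fintype.sum_option,
    Fintype.sum_option]
  cases x <;> cases y <;> simp [lD]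

/-- diagonalizing local matrix -/
def lQ (a : Fin m) : Matrix (Option (Fin m)) (Option (Fin m)) ℚ :=
  fun x y => match x, y with
    | none, none => 1
    | none, some _ => 0
    | some _, none => 0
    | some v, some w => if w = a then 1 else (if v = w then 1 else 0) - (if v = a then 1 else 0)
/-- its inverse -/
def lR (a : Fin m) : Matrix (Option (Fin m)) (Option (Fin m)) ℚ :=
  fun x y => match x, y with
    | none, none => 1
    | none, some _ => 0
    | some _, none => 0
    | some w, some v => if w = a then 1 / (m : ℚ) else (if w = v then 1 else 0) - 1 / (m : ℚ)

/-- local eigenvalues -/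
def lev (a : Fin m) (x : Option (Fin m)) : ℕ := if x = none ∨ x = some a then m else 0

theorem R_Q (a : Fin m) : lR a * lQ a = 1 := by
  have hm : (m : ℚ) ≠ 0 := by
    have := a.pos
    positivity
  ext x y
  rw [Matrix.mul_apply, Fintype.sum_option]
  cases x with
  | none => cases y <;> simp [lR, lQ, Matrix.one_apply]
  | some w =>
    cases y with
    | none => simp [lR, lQ, Matrix.one_apply]
    | some v =>
      simp only [lR, lQ, Matrix.one_apply, Option.some_inj, zero_mul, zero_add]
      by_cases hw : w = a
      · subst hw
        by_cases hv : v = w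
        · subst hv; simp [hm]
        · simp [hv, Ne.symm hv, Finset.sum_sub_distrib, ← Finset.mul_sum]
      · by_cases hv : v = a
        · subst hv; simp [hw, hm]
        · simp [hv, hw, mul_sub, sub_mul, Finset.sum_sub_distrib, Finset.sum_ite_eq]

theorem L_Q (a : Fin m) : (lL m).map (Int.cast : ℤ → ℚ) * lQ a =
    lQ a * Matrix.diagonal (fun x => (lev a x : ℚ)) := by
  ext x y
  rw [Matrix.mul_diagonal, Matrix.mul_apply, Fintype.sum_option]
  simp only [Matrix.map_apply, lL_apply]
  cases x with
  | none => cases y <;> simp [lQ, lev]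
  | some v =>
    cases y with
    | none => simp [lQ]
    | some w =>
      by_cases hw : w = a
      · subst hw; simp [lQ, lev]
      · simp [lQ, lev, hw, Finset.sum_sub_distrib]

end Local
end AdinProof

namespace AdinProof
open Finset

section Global
variable {r : ℕ} (n : Fin r → ℕ)

/-- slots of the `j`-th summand of the boundary -/
def sD (j : Fin r) (i : Fin r) : Matrix (Option (Fin (n i))) (Option (Fin (n i))) ℤ :=
  if i < j then lEps (n i) else if i = j then lD (n i) else 1

/-- slots of the `j`-th summand of the homotopy -/
def sH (a : ∀ j, Fin (n j)) (j : Fin r) (i : Fin r) :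
    Matrix (Option (Fin (n i))) (Option (Fin (n i))) ℤ :=
  if i < j then - lP (a i) else if i = j then lH (a i) else 1

/-- the total boundary operator -/
def tD : Matrix (∀ j : Fin r, Option (Fin (n j))) (∀ j : Fin r, Option (Fin (n j))) ℤ :=
  ∑ j, tens (sD n j)

theorem sD_anticomm_lt {i j : Fin r} (h : i < j) :
    tens (sD n i) * tens (sD n j) + tens (sD n j) * tens (sD n i) = 0 := by
  apply tens_anticomm i
  · simp [sD, h, d_eps, eps_d]
  · intro k hk
    unfold sD
    rcases lt_or_gt_of_ne hk with h1 | h1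
    · simp [h1, h1.trans h]
    · simp [h1.not_gt, hk]

theorem sD_anticomm (i j : Fin r) :
    tens (sD n i) * tens (sD n j) + tens (sD n j) * tens (sD n i) = 0 := by
  rcases lt_trichotomy i j with h | h | h
  · exact sD_anticomm_lt n h
  · subst h
    have : tens (sD n i) * tens (sD n i) = 0 := by
      rw [tens_mul]
      exact tens_zero i _ (by simp [sD, d_d])
    rw [this, add_zero]
  · rw [add_comm]; exact sD_anticomm_lt n h

theorem tD_tD : tD n * tD n = 0 := by
  have h : tD n * tD n + tD n * tD n = 0 := by
    unfold tD
    nth_rewrite 2 [Finset.sum_mul_sum]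
    rw [Finset.sum_comm, Finset.sum_mul_sum, ← Finset.sum_add_distrib]
    refine Finset.sum_eq_zero fun i _ => ?_
    rw [← Finset.sum_add_distrib]
    exact Finset.sum_eq_zero fun j _ => sD_anticomm n i j
  ext f g
  have := congrFun (congrFun h f) g
  simp only [Matrix.add_apply, Matrix.zero_apply] at this ⊢
  omega

theorem sDt_anticomm {i j : Fin r} (h : i ≠ j) :
    tens (sD n i) * (tens (sD n j))ᵀ + (tens (sD n j))ᵀ * tens (sD n i) = 0 := by
  rw [tens_transpose]
  rcases lt_or_gt_of_ne h with h | h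
  · apply tens_anticomm i
    · simp [sD, h, d_eps, eps_d, epst]
    · intro k hk
      unfold sD
      rcases lt_or_gt_of_ne hk with h1 | h1
      · simp [h1, h1.trans h, epst]
      · simp [h1.not_gt, hk]
  · apply tens_anticomm j
    · simp [sD, h, dt_eps, eps_dt]
    · intro k hk
      unfold sD
      rcases lt_or_gt_of_ne hk with h1 | h1
      · simp [h1, h1.trans h, epst]
      · simp [h1.not_gt, hk]

/-- slots of the laplacian -/
def sL (j : Fin r) (i : Fin r) : Matrix (Option (Fin (n i))) (Option (Fin (n i))) ℤ :=
  if i = j then lL (n i) else 1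

theorem sDt_self (j : Fin r) :
    tens (sD n j) * (tens (sD n j))ᵀ + (tens (sD n j))ᵀ * tens (sD n j) = tens (sL n j) := by
  rw [tens_transpose, tens_mul, tens_mul]
  symm
  apply tens_add j
  · simp [sD, sL, lL]
  · intro k hk
    unfold sD sL
    split_ifs <;> simp_all [epst, eps_eps]
  · intro k hk
    unfold sD sL
    split_ifs <;> simp_all [epst, eps_eps]

theorem tLap : tD n * (tD n)ᵀ + (tD n)ᵀ * tD n = ∑ j, tens (sL n j) := by
  unfold tD
  rw [Matrix.transpose_sum]
  nth_rewrite 2 [Finset.sum_mul_sum]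
  rw [Finset.sum_comm, Finset.sum_mul_sum, ← Finset.sum_add_distrib]
  refine Finset.sum_congr rfl fun i _ => ?_
  rw [← Finset.sum_add_distrib, Finset.sum_eq_single i]
  · exact sDt_self n i
  · intro j _ hj; exact sDt_anticomm n hj.symm
  · simp

/-- partial projections -/
def tT (a : ∀ j, Fin (n j)) (k : ℕ) :
    Matrix (∀ j : Fin r, Option (Fin (n j))) (∀ j : Fin r, Option (Fin (n j))) ℤ :=
  tens (fun i => if (i : ℕ) < k then lP (a i) else 1)

/-- the total homotopy -/
def tH (a : ∀ j, Fin (n j)) :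
    Matrix (∀ j : Fin r, Option (Fin (n j))) (∀ j : Fin r, Option (Fin (n j))) ℤ :=
  ∑ j, tens (sH n a j)

theorem sDH (a : ∀ j, Fin (n j)) {i j : Fin r} (h : i ≠ j) :
    tens (sD n i) * tens (sH n a j) + tens (sH n a j) * tens (sD n i) = 0 := by
  rcases lt_or_gt_of_ne h with h | h
  · rw [tens_mul, tens_mul, tens_zero i, tens_zero i, add_zero]
    · simp [sD, sH, h, P_d]
    · simp [sD, sH, h, d_P]
  · apply tens_anticomm j
    · simp [sD, sH, h, eps_h, h_eps]
    · intro k hk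
      unfold sD sH
      rcases lt_or_gt_of_ne hk with h1 | h1
      · simp [h1, h1.trans h, eps_P, P_eps]
      · simp [h1.not_gt, hk]

theorem sDH_self (a : ∀ j, Fin (n j)) (j : Fin r) :
    tens (sD n j) * tens (sH n a j) + tens (sH n a j) * tens (sD n j) =
      tT n a j - tT n a (j + 1) := by
  rw [eq_sub_iff_add_eq, tens_mul, tens_mul]
  have h1 : tens (fun i => sD n j i * sH n a j i) + tens (fun i => sH n a j i * sD n j i) =
      tens (fun i => if i < j then lP (a i) else if i = j then 1 - lP (a i) else 1) := by
    symm
    apply tens_add j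
    · simp [sD, sH, d_h]
    · intro k hk
      unfold sD sH
      split_ifs <;> simp_all [eps_P]
    · intro k hk
      unfold sD sH
      split_ifs <;> simp_all [P_eps]
  rw [h1]
  symm
  apply tens_add j
  · simp
  · intro k hk
    simp [hk]
  · intro k hk
    have : (k : ℕ) ≠ j := fun h => hk (Fin.ext h)
    have h2 : ((k : ℕ) < j + 1) ↔ ((k : ℕ) < j) := by omega
    simp [h2]

theorem tD_tH (a : ∀ j, Fin (n j)) :
    tD n * tH n a + tH n a * tD n = 1 - tens (fun i => lP (a i)) := by
  have h1 : tD n * tH n a + tH n a * tD n = ∑ j : Fin r, (tT n a j - tT n a (j + 1)) := by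
    unfold tD tH
    nth_rewrite 2 [Finset.sum_mul_sum]
    rw [Finset.sum_comm, Finset.sum_mul_sum, ← Finset.sum_add_distrib]
    have : ∀ i : Fin r, (tT n a i - tT n a (i + 1)) =
      ∑ j, if i = j then (tT n a j - tT n a (j + 1)) else 0 := by
        intro i; simp
    rw [Finset.sum_congr rfl fun i _ => this i]
    refine Finset.sum_congr rfl fun i _ => ?_
    rw [← Finset.sum_add_distrib]
    refine Finset.sum_congr rfl fun j _ => ?_
    split_ifs with h
    · subst h; exact sDH_self n a i
    · exact sDH n a h
  rw [h1, Fin.sum_univ_eq_sum_range (fun k => tT n a k - tT n a (k + 1)), Finset.sum_range_sub']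
  congr 1
  · simp [tT, tens_one]
  · simp [tT]

/-- total diagonalization -/
theorem tLap_Q (a : ∀ j, Fin (n j)) :
    (tD n * (tD n)ᵀ + (tD n)ᵀ * tD n).map (Int.cast : ℤ → ℚ) * tens (fun i => lQ (a i)) =
      tens (fun i => lQ (a i)) *
        Matrix.diagonal (fun f => ((∑ j, lev (a j) (f j) : ℕ) : ℚ)) := by
  have hmap : (tD n * (tD n)ᵀ + (tD n)ᵀ * tD n).map (Int.cast : ℤ → ℚ) =
      ∑ j, tens (fun i => (sL n j i).map (Int.cast : ℤ → ℚ)) := by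
    rw [tLap]
    ext f g
    simp [Matrix.sum_apply, tens]
  have hdiag : Matrix.diagonal (fun f => ((∑ j, lev (a j) (f j) : ℕ) : ℚ)) =
      ∑ j, tens (fun i => if i = j then
        Matrix.diagonal (fun x : Option (Fin (n i)) => (lev (a i) x : ℚ)) else 1) := by
    ext f g
    rw [Matrix.sum_apply]
    by_cases hfg : f = g
    · subst hfg
      rw [Matrix.diagonal_apply_eq]
      push_cast
      refine Finset.sum_congr rfl fun j _ => ?_
      unfold tens
      rw [Finset.prod_eq_single j]
      · simp
      · intro i _ hi; simp [hi]
      · simp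
    · rw [Matrix.diagonal_apply_ne _ hfg]
      symm
      refine Finset.sum_eq_zero fun j _ => ?_
      obtain ⟨i, hi⟩ := Function.ne_iff.1 hfg
      refine Finset.prod_eq_zero (Finset.mem_univ i) ?_
      beta_reduce
      split_ifs
      · exact Matrix.diagonal_apply_ne _ hi
      · exact Matrix.one_apply_ne hi
  rw [hmap, hdiag, Finset.sum_mul, Finset.mul_sum]
  refine Finset.sum_congr rfl fun j _ => ?_
  rw [tens_mul, tens_mul]
  congr 1
  ext1 i
  unfold sL
  split_ifs
  · exact L_Q (a i)
  · rw [Matrix.mul_one]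
    have : (1 : Matrix (Option (Fin (n i))) (Option (Fin (n i))) ℤ).map (Int.cast : ℤ → ℚ) = 1 := by
      simp [Matrix.map_one]
    rw [this, Matrix.one_mul]

theorem tR_Q (a : ∀ j, Fin (n j)) :
    tens (fun i => lR (a i)) * tens (fun i => lQ (a i)) = 1 := by
  rw [tens_mul, ← tens_one]
  congr 1
  ext1 i
  exact R_Q (a i)

/-- degree (number of colors used) -/
def deg {n : Fin r → ℕ} (f : ∀ j : Fin r, Option (Fin (n j))) : ℕ :=
  (Finset.univ.filter (fun j => f j ≠ none)).card

theorem deg_congr {n : Fin r → ℕ} {f g : ∀ j : Fin r, Option (Fin (n j))}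
    (h : ∀ j, f j = none ↔ g j = none) : deg f = deg g := by
  unfold deg
  congr 1
  ext j
  simp [h j]

theorem tQ_deg (a : ∀ j, Fin (n j)) (f g : ∀ j : Fin r, Option (Fin (n j)))
    (h : tens (fun i => lQ (a i)) f g ≠ 0) : deg f = deg g := by
  apply deg_congr
  intro j
  have := (Finset.prod_ne_zero_iff.1 h) j (Finset.mem_univ j)
  revert this
  cases f j <;> cases g j <;> simp [lQ]

theorem tR_deg (a : ∀ j, Fin (n j)) (f g : ∀ j : Fin r, Option (Fin (n j)))
    (h : tens (fun i => lR (a i)) f g ≠ 0) : deg f = deg g := by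
  apply deg_congr
  intro j
  have := (Finset.prod_ne_zero_iff.1 h) j (Finset.mem_univ j)
  revert this
  cases f j <;> cases g j <;> simp [lR]

theorem tP_deg (a : ∀ j, Fin (n j)) (f g : ∀ j : Fin r, Option (Fin (n j)))
    (h : tens (fun i => lP (a i)) f g ≠ 0) : deg g = r := by
  have : (Finset.univ.filter (fun j => g j ≠ none)) = Finset.univ := by
    ext j
    have := (Finset.prod_ne_zero_iff.1 h) j (Finset.mem_univ j)
    have h2 : g j ≠ none := by
      intro h0
      apply this
      simp [lP, h0]
    simp [h2]
  rw [deg, this, Finset.card_univ, Fintype.card_fin]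

theorem sD_apply (j : Fin r) (f g : ∀ j : Fin r, Option (Fin (n j))) :
    tens (sD n j) f g = if g j ≠ none ∧ f = Function.update g j none then
      (-1) ^ (Finset.univ.filter (fun i => i < j ∧ g i ≠ none)).card else 0 := by
  split_ifs with h
  · obtain ⟨h1, rfl⟩ := h
    rw [← Finset.prod_const, Finset.prod_filter]
    unfold tens
    refine Finset.prod_congr rfl fun i _ => ?_
    unfold sD
    rcases lt_trichotomy i j with h | h | h
    · simp [h, h.ne, lEps]
    · subst h; simp [lD, h1]
    · rw [Function.update_of_ne h.ne']
      simp [h.not_gt, h.ne']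
  · by_contra hne
    apply h
    have hp := Finset.prod_ne_zero_iff.1 hne
    have hj := hp j (Finset.mem_univ j)
    simp [sD, lD] at hj
    refine ⟨hj.2, ?_⟩
    ext1 i
    by_cases hi : i = j
    · subst hi; simp [hj.1]
    · rw [Function.update_of_ne hi]
      have := hp i (Finset.mem_univ i)
      unfold sD at this
      by_contra hne2
      apply this
      split_ifs
      · exact Matrix.diagonal_apply_ne _ hne2
      · exact Matrix.one_apply_ne hne2

theorem tD_deg (f g : ∀ j : Fin r, Option (Fin (n j))) (h : tD n f g ≠ 0) :
    deg g = deg f + 1 := by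
  unfold tD at h
  rw [Matrix.sum_apply] at h
  obtain ⟨j, -, hj⟩ := Finset.exists_ne_zero_of_sum_ne_zero h
  rw [sD_apply] at hj
  split_ifs at hj with h2
  · obtain ⟨h1, rfl⟩ := h2
    unfold deg
    have : (Finset.univ.filter (fun i => g i ≠ none)) =
        insert j (Finset.univ.filter (fun i => Function.update g j none i ≠ none)) := by
      ext i
      by_cases hi : i = j
      · subst hi; simp [h1]
      · simp [hi]
    rw [this, Finset.card_insert_of_notMem (by simp)]
  · exact absurd rfl hj

end Global
end AdinProof

namespace AdinProof
open Finset ColorfulComplex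

section Faces
variable {r : ℕ} {n : Fin r → ℕ}

open Classical in
/-- the function associated with a face -/
noncomputable def fn {c : ℕ} (σ : Face n c) : ∀ j : Fin r, Option (Fin (n j)) :=
  fun j => if h : ∃ t, (⟨j, t⟩ : Vtx n) ∈ σ.1 then some h.choose else none

theorem fn_mem {c : ℕ} (σ : Face n c) (v : Vtx n) : v ∈ σ.1 ↔ fn σ v.1 = some v.2 := by
  obtain ⟨j, t⟩ := v
  unfold fn
  dsimp only
  constructor
  · intro h
    have hex : ∃ t, (⟨j, t⟩ : Vtx n) ∈ σ.1 := ⟨t, h⟩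
    rw [dif_pos hex]
    have := σ.2.2 _ hex.choose_spec _ h rfl
    simpa using this
  · intro h
    split_ifs at h with hex
    have h2 := hex.choose_spec
    rw [Option.some_inj.1 h] at h2
    exact h2

theorem fn_ne_none {c : ℕ} (σ : Face n c) (j : Fin r) :
    fn σ j ≠ none ↔ ∃ t, (⟨j, t⟩ : Vtx n) ∈ σ.1 := by
  rw [Option.ne_none_iff_exists']
  simp only [fn_mem]

theorem fn_injective {c : ℕ} : Function.Injective (fn : Face n c → _) := by
  intro σ τ h
  apply Subtype.ext
  ext v
  rw [fn_mem, fn_mem, h]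

theorem fn_deg {c : ℕ} (σ : Face n c) : deg (fn σ) = c := by
  have h1 : Finset.univ.filter (fun j => fn σ j ≠ none) = σ.1.image Sigma.fst := by
    ext j
    rw [Finset.mem_filter, fn_ne_none]
    simp
  rw [deg, h1, Finset.card_image_of_injOn, σ.2.1]
  intro v hv w hw h
  exact σ.2.2 v hv w hw h

theorem fn_surj {c : ℕ} (f : ∀ j : Fin r, Option (Fin (n j))) (hf : deg f = c) :
    ∃ σ : Face n c, fn σ = f := by
  have hinj : ∀ v ∈ Finset.univ.filter (fun v : Vtx n => f v.1 = some v.2),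
      ∀ w ∈ Finset.univ.filter (fun v : Vtx n => f v.1 = some v.2), v.1 = w.1 → v = w := by
    rintro ⟨j, t⟩ hv ⟨j', t'⟩ hw h
    simp only [Finset.mem_filter, Finset.mem_univ, true_and] at hv hw h
    subst h
    rw [hv] at hw
    rw [Option.some_inj.1 hw]
  have hcard : (Finset.univ.filter (fun v : Vtx n => f v.1 = some v.2)).card = c := by
    rw [← hf, deg, ← Finset.card_image_of_injOn (f := Sigma.fst)]
    · congr 1
      ext j
      simp only [Finset.mem_image, Finset.mem_filter, Finset.mem_univ, true_and,
        Option.ne_none_iff_exists']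
      constructor
      · rintro ⟨⟨j', t⟩, h, rfl⟩; exact ⟨t, h⟩
      · rintro ⟨t, h⟩; exact ⟨⟨j, t⟩, h, rfl⟩
    · intro v hv w hw h
      exact hinj v hv w hw h
  let σ : Face n c := ⟨_, hcard, hinj⟩
  refine ⟨σ, ?_⟩
  ext1 j
  have key : ∀ t, fn σ j = some t ↔ f j = some t := by
    intro t
    have := fn_mem σ ⟨j, t⟩
    rw [← this]
    simp [σ]
  exact Option.ext key

theorem ord_lt_of_lt {v w : Vtx n} (h : v.1 < w.1) : ord n v < ord n w := by
  unfold ord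
  have h1 : (∑ i ∈ Finset.univ.filter (fun i => i < v.1), n i) + n v.1 ≤
      ∑ i ∈ Finset.univ.filter (fun i => i < w.1), n i := by
    have hnot : v.1 ∉ Finset.univ.filter (fun i => i < v.1) := by simp
    rw [add_comm, ← Finset.sum_insert hnot]
    apply Finset.sum_le_sum_of_subset
    intro i hi
    simp only [Finset.mem_insert, Finset.mem_filter, Finset.mem_univ, true_and] at hi ⊢
    rcases hi with rfl | hi
    · exact h
    · exact hi.trans h
  have := v.2.2
  omega

theorem ord_lt_iff {c : ℕ} (τ : Face n c) {v w : Vtx n} (hv : v ∈ τ.1) (hw : w ∈ τ.1) :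
    ord n v < ord n w ↔ v.1 < w.1 := by
  refine ⟨fun h => ?_, ord_lt_of_lt⟩
  rcases lt_trichotomy v.1 w.1 with h1 | h1 | h1
  · exact h1
  · rw [τ.2.2 v hv w hw h1] at h; exact absurd h (lt_irrefl _)
  · exact absurd (ord_lt_of_lt h1) (by omega)

theorem bdry_eq (k : ℕ) (σ : Face n k) (τ : Face n (k + 1)) :
    bdry n k σ τ = tD n (fn σ) (fn τ) := by
  unfold tD bdry
  rw [Matrix.sum_apply]
  have h0 : ∑ j, tens (sD n j) (fn σ) (fn τ) =
      ∑ j ∈ τ.1.image Sigma.fst, tens (sD n j) (fn σ) (fn τ) := by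
    symm
    apply Finset.sum_subset (Finset.subset_univ _)
    intro j _ hj
    rw [sD_apply, if_neg]
    rintro ⟨h1, -⟩
    rw [fn_ne_none] at h1
    obtain ⟨t, ht⟩ := h1
    exact hj (Finset.mem_image.2 ⟨_, ht, rfl⟩)
  rw [h0, Finset.sum_image (fun v hv w hw h => τ.2.2 v hv w hw h)]
  refine Finset.sum_congr rfl fun x hx => ?_
  rw [sD_apply]
  have hcard : (τ.1.filter (fun y => ord n y < ord n x)).card =
      (Finset.univ.filter (fun i => i < x.1 ∧ fn τ i ≠ none)).card := by
    rw [← Finset.card_image_of_injOn (f := Sigma.fst)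
      (s := τ.1.filter (fun y => ord n y < ord n x))]
    · congr 1
      ext j
      simp only [Finset.mem_image, Finset.mem_filter, Finset.mem_univ, true_and, fn_ne_none]
      constructor
      · rintro ⟨y, ⟨hy, hlt⟩, rfl⟩
        exact ⟨(ord_lt_iff τ hy hx).1 hlt, y.2, hy⟩
      · rintro ⟨hlt, t, ht⟩
        exact ⟨⟨j, t⟩, ⟨ht, (ord_lt_iff τ ht hx).2 hlt⟩, rfl⟩
    · intro v hv w hw h
      exact τ.2.2 v (Finset.mem_filter.1 hv).1 w (Finset.mem_filter.1 hw).1 h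
  have hx' : fn τ x.1 = some x.2 := (fn_mem τ x).1 hx
  have hiff : σ.1 = τ.1.erase x ↔ (fn τ x.1 ≠ none ∧ fn σ = Function.update (fn τ) x.1 none) := by
    have hup : ∀ v : Vtx n, v ∈ τ.1.erase x ↔ Function.update (fn τ) x.1 none v.1 = some v.2 := by
      intro v
      rw [Finset.mem_erase, fn_mem]
      by_cases hv : v.1 = x.1
      · have h2 : Function.update (fn τ) x.1 none v.1 = none := by
          rw [hv]; simp
        rw [h2]
        simp only [reduceCtorEq, iff_false, not_and]
        intro hne h3
        exact hne (τ.2.2 v ((fn_mem τ v).2 h3) x hx hv)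
      · rw [Function.update_of_ne hv]
        have : v ≠ x := fun h => hv (by rw [h])
        simp [this]
    constructor
    · intro h
      refine ⟨by simp [hx'], ?_⟩
      ext1 j
      refine Option.ext fun t => ?_
      have h1 := fn_mem σ ⟨j, t⟩
      have h2 := hup ⟨j, t⟩
      rw [← h] at h2
      exact h1.symm.trans h2
    · rintro ⟨-, h⟩
      ext v
      rw [fn_mem, h, hup]
  rw [hcard]
  simp only [hiff]

/-- Sum over faces as a sum over functions. -/
theorem sum_faces {c : ℕ} {R : Type*} [AddCommMonoid R] (g : (∀ j : Fin r, Option (Fin (n j))) → R)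
    (hg : ∀ f, deg f ≠ c → g f = 0) : ∑ σ : Face n c, g (fn σ) = ∑ f, g f := by
  classical
  rw [← Finset.sum_image (s := Finset.univ) (g := fn) (f := g)
    (fun x _ y _ h => fn_injective h)]
  apply Finset.sum_subset (Finset.subset_univ _)
  intro f _ hf
  apply hg
  intro h
  obtain ⟨σ, rfl⟩ := fn_surj f h
  exact hf (Finset.mem_image_of_mem _ (Finset.mem_univ _))

theorem bdry_bdry (k : ℕ) : bdry n k * bdry n (k + 1) = 0 := by
  ext σ ρ
  rw [Matrix.mul_apply]
  simp only [bdry_eq]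
  rw [sum_faces (fun f => tD n (fn σ) f * tD n f (fn ρ))]
  · rw [← Matrix.mul_apply, tD_tD]; rfl
  · intro f hf
    by_contra h
    have := tD_deg n _ _ (left_ne_zero_of_mul h)
    rw [fn_deg] at this
    exact hf this

theorem up_eq (k : ℕ) (σ τ : Face n k) :
    (bdry n k * (bdry n k)ᵀ) σ τ = (tD n * (tD n)ᵀ) (fn σ) (fn τ) := by
  rw [Matrix.mul_apply]
  simp only [bdry_eq, transpose_apply]
  rw [sum_faces (fun f => tD n (fn σ) f * tD n (fn τ) f)]
  · rw [Matrix.mul_apply]; rfl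
  · intro f hf
    by_contra h
    have := tD_deg n _ _ (left_ne_zero_of_mul h)
    rw [fn_deg] at this
    exact hf this

theorem down_eq (k : ℕ) (σ τ : Face n (k + 1)) :
    ((bdry n k)ᵀ * bdry n k) σ τ = ((tD n)ᵀ * tD n) (fn σ) (fn τ) := by
  rw [Matrix.mul_apply]
  simp only [bdry_eq, transpose_apply]
  rw [sum_faces (fun f => tD n f (fn σ) * tD n f (fn τ))]
  · rw [Matrix.mul_apply]; rfl
  · intro f hf
    by_contra h
    have := tD_deg n _ _ (left_ne_zero_of_mul h)
    rw [fn_deg] at this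
    omega

theorem down_zero (σ τ : Face n 0) : ((tD n)ᵀ * tD n) (fn σ) (fn τ) = 0 := by
  rw [Matrix.mul_apply]
  refine Finset.sum_eq_zero fun f _ => ?_
  by_contra h
  have := tD_deg n _ _ (left_ne_zero_of_mul h)
  rw [fn_deg] at this
  omega

/-- Exactness below the top degree. -/
theorem exact_aux (a : ∀ j, Fin (n j)) (c : ℕ) (hc : c < r) (z : Face n c → ℤ)
    (hz : ∀ f, deg f + 1 = c → ∑ σ, tD n f (fn σ) * z σ = 0) :
    ∃ w, bdry n c *ᵥ w = z := by
  classical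
  -- extension by zero
  let Z : (∀ j : Fin r, Option (Fin (n j))) → ℤ :=
    fun f => if h : deg f = c then z (fn_surj f h).choose else 0
  have hZ : ∀ σ : Face n c, Z (fn σ) = z σ := by
    intro σ
    have h := fn_deg σ
    simp only [Z, dif_pos h]
    congr 1
    exact fn_injective (fn_surj (fn σ) h).choose_spec
  have hZ0 : ∀ f, deg f ≠ c → Z f = 0 := fun f hf => by simp only [Z, dif_neg hf]
  have hDZ : tD n *ᵥ Z = 0 := by
    ext f
    show ∑ g, tD n f g * Z g = 0
    rw [← sum_faces (c := c) (fun g => tD n f g * Z g) (fun g hg => by simp [hZ0 g hg])]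
    simp only [hZ]
    by_cases h : deg f + 1 = c
    · exact hz f h
    · refine Finset.sum_eq_zero fun σ _ => ?_
      by_contra h2
      have := tD_deg n _ _ (left_ne_zero_of_mul h2)
      rw [fn_deg] at this
      exact h this.symm
  have hPZ : tens (fun i => lP (a i)) *ᵥ Z = 0 := by
    ext f
    refine Finset.sum_eq_zero fun g _ => ?_
    by_contra h2
    have h3 := tP_deg n a _ _ (left_ne_zero_of_mul h2)
    have h4 : deg g = c := by
      by_contra h5
      exact (right_ne_zero_of_mul h2) (hZ0 g h5)
    omega
  have hmain : tD n *ᵥ (tH n a *ᵥ Z) = Z := by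
    have := congrArg (fun A => A *ᵥ Z) (tD_tH n a)
    simp only [Matrix.add_mulVec, Matrix.sub_mulVec, ← Matrix.mulVec_mulVec, hDZ, hPZ,
      Matrix.mulVec_zero, add_zero, sub_zero, Matrix.one_mulVec] at this
    exact this
  refine ⟨fun τ => (tH n a *ᵥ Z) (fn τ), ?_⟩
  ext σ
  rw [← hZ σ]
  conv_rhs => rw [← hmain]
  show ∑ τ, bdry n c σ τ * (tH n a *ᵥ Z) (fn τ) = ∑ g, tD n (fn σ) g * (tH n a *ᵥ Z) g
  simp only [bdry_eq]
  apply sum_faces (fun g => tD n (fn σ) g * (tH n a *ᵥ Z) g)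
  intro f hf
  by_contra h
  have := tD_deg n _ _ (left_ne_zero_of_mul h)
  rw [fn_deg] at this
  exact hf this

theorem exact_zero (a : ∀ j, Fin (n j)) (hr : 0 < r) (z : Face n 0 → ℤ) :
    ∃ w, bdry n 0 *ᵥ w = z :=
  exact_aux a 0 hr z (fun f hf => by omega)

theorem exact_succ (a : ∀ j, Fin (n j)) (c : ℕ) (hc : c + 1 < r) (z : Face n (c + 1) → ℤ)
    (hz : bdry n c *ᵥ z = 0) : ∃ w, bdry n (c + 1) *ᵥ w = z := by
  refine exact_aux a (c + 1) hc z (fun f hf => ?_)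
  obtain ⟨σ, rfl⟩ := fn_surj (c := c) f (by omega)
  have := congrFun hz σ
  simp only [Matrix.mulVec, dotProduct, bdry_eq] at this
  exact this

/-- Determinant of the laplacian in degree `c`. -/
theorem lap_det_faces (a : ∀ j, Fin (n j)) (c : ℕ) (Lm : Matrix (Face n c) (Face n c) ℤ)
    (hL : ∀ σ τ, Lm σ τ = (tD n * (tD n)ᵀ + (tD n)ᵀ * tD n) (fn σ) (fn τ)) :
    det Lm = ∏ σ : Face n c, ((∑ j, lev (a j) (fn σ j) : ℕ) : ℤ) := by
  classical
  let Q : Matrix (Face n c) (Face n c) ℚ := (tens (fun i => lQ (a i))).submatrix fn fn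
  let Ri : Matrix (Face n c) (Face n c) ℚ := (tens (fun i => lR (a i))).submatrix fn fn
  let Dg : Matrix (Face n c) (Face n c) ℚ :=
    Matrix.diagonal (fun σ => ((∑ j, lev (a j) (fn σ j) : ℕ) : ℚ))
  have h1 : Ri * Q = 1 := by
    ext σ τ
    rw [Matrix.mul_apply]
    show ∑ ρ : Face n c, tens (fun i => lR (a i)) (fn σ) (fn ρ) *
      tens (fun i => lQ (a i)) (fn ρ) (fn τ) = _
    rw [sum_faces (fun f => tens (fun i => lR (a i)) (fn σ) f *
      tens (fun i => lQ (a i)) f (fn τ)), ← Matrix.mul_apply, tR_Q, Matrix.one_apply,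
      Matrix.one_apply]
    · simp only [fn_injective.eq_iff]
    · intro f hf
      by_contra h
      have := tR_deg n a _ _ (left_ne_zero_of_mul h)
      rw [fn_deg] at this
      exact hf this.symm
  have h2 : Lm.map (Int.cast : ℤ → ℚ) * Q = Q * Dg := by
    ext σ τ
    rw [Matrix.mul_diagonal, Matrix.mul_apply]
    have := congrFun (congrFun (tLap_Q n a) (fn σ)) (fn τ)
    rw [Matrix.mul_diagonal, Matrix.mul_apply] at this
    show _ = tens (fun i => lQ (a i)) (fn σ) (fn τ) * _
    rw [← this]
    simp only [Matrix.map_apply, hL]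
    apply sum_faces (fun f => (((tD n * (tD n)ᵀ + (tD n)ᵀ * tD n) (fn σ) f : ℤ) : ℚ) *
      tens (fun i => lQ (a i)) f (fn τ))
    intro f hf
    by_contra h
    have := tQ_deg n a _ _ (right_ne_zero_of_mul h)
    rw [fn_deg] at this
    exact hf this
  have h3 : det Q ≠ 0 := by
    intro h
    have := congrArg det h1
    rw [det_mul, h, mul_zero, det_one] at this
    exact zero_ne_one this
  have h4 := congrArg det h2
  rw [det_mul, det_mul, mul_comm, det_diagonal] at h4
  have h5 := mul_left_cancel₀ h3 h4
  have h6 : ((det Lm : ℤ) : ℚ) = det (Lm.map (Int.cast : ℤ → ℚ)) := Int.cast_det Lm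
  rw [← h6] at h5
  have : ((det Lm : ℤ) : ℚ) =
      ((∏ σ : Face n c, ((∑ j, lev (a j) (fn σ j) : ℕ) : ℤ) : ℤ) : ℚ) := by
    rw [h5]; push_cast; rfl
  exact_mod_cast this

end Faces
end AdinProof

namespace AdinProof
open Finset ColorfulComplex

section Count
variable {r : ℕ} {n : Fin r → ℕ}

/-- colors where `f` has a vertex different from the base vertex -/
def nb (a : ∀ j, Fin (n j)) (f : ∀ j : Fin r, Option (Fin (n j))) : Finset (Fin r) :=
  Finset.univ.filter (fun j => f j ≠ none ∧ f j ≠ some (a j))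

theorem sum_lev (a : ∀ j, Fin (n j)) (f : ∀ j : Fin r, Option (Fin (n j))) :
    ∑ j, lev (a j) (f j) = ∑ j ∈ (nb a f)ᶜ, n j := by
  have : (nb a f)ᶜ = Finset.univ.filter (fun j => f j = none ∨ f j = some (a j)) := by
    ext j
    simp only [nb, Finset.mem_compl, Finset.mem_filter, Finset.mem_univ, true_and]
    tauto
  rw [this, Finset.sum_filter]
  rfl

theorem card_fiber (a : ∀ j, Fin (n j)) (c : ℕ) (D : Finset (Fin r)) :
    ((Finset.univ : Finset (∀ j : Fin r, Option (Fin (n j)))).filter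
      (fun f => deg f = c ∧ nb a f = D)).card =
      (if D.card ≤ c then Nat.choose (r - D.card) (c - D.card) else 0) * ∏ i ∈ D, (n i - 1) := by
  classical
  -- the set of base-vertex colors
  let eb : (∀ j : Fin r, Option (Fin (n j))) → Finset (Fin r) :=
    fun f => Finset.univ.filter (fun j => f j = some (a j))
  have hdeg : ∀ f, deg f = (nb a f).card + (eb f).card := by
    intro f
    rw [← Finset.card_union_of_disjoint]
    · unfold deg
      congr 1
      ext j
      simp only [nb, eb, Finset.mem_union, Finset.mem_filter, Finset.mem_univ, true_and]
      constructor
      · intro h; by_cases h2 : f j = some (a j)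
        · exact Or.inr h2
        · exact Or.inl ⟨h, h2⟩
      · rintro (h | h)
        · exact h.1
        · simp [h]
    · rw [Finset.disjoint_left]
      intro j h1 h2
      simp only [nb, eb, Finset.mem_filter, Finset.mem_univ, true_and] at h1 h2
      exact h1.2 h2
  split_ifs with hD
  · rw [Finset.card_eq_sum_card_fiberwise (f := eb)
      (t := Finset.powersetCard (c - D.card) Dᶜ)]
    · have : ∀ E ∈ Finset.powersetCard (c - D.card) Dᶜ,
          (((Finset.univ : Finset (∀ j : Fin r, Option (Fin (n j)))).filter
            (fun f => deg f = c ∧ nb a f = D)).filter (fun f => eb f = E)).card =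
          ∏ i ∈ D, (n i - 1) := by
        intro E hE
        rw [Finset.mem_powersetCard] at hE
        have hset : (((Finset.univ : Finset (∀ j : Fin r, Option (Fin (n j)))).filter
            (fun f => deg f = c ∧ nb a f = D)).filter (fun f => eb f = E)) =
            Fintype.piFinset (fun i => if i ∈ D then (Finset.univ.erase none).erase (some (a i))
              else if i ∈ E then {some (a i)} else {none}) := by
          ext f
          simp only [Finset.mem_filter, Finset.mem_univ, true_and, Fintype.mem_piFinset]
          constructor
          · rintro ⟨⟨-, hn⟩, he⟩ i
            have h1 : i ∈ D ↔ (f i ≠ none ∧ f i ≠ some (a i)) := by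
              rw [← hn]; simp [nb]
            have h2 : i ∈ E ↔ f i = some (a i) := by
              rw [← he]; simp [eb]
            split_ifs with h3 h4
            · simp [(h1.1 h3).1, (h1.1 h3).2]
            · simp [h2.1 h4]
            · rw [h1] at h3; rw [h2] at h4
              simp only [Finset.mem_singleton]
              by_contra h5
              exact h3 ⟨h5, h4⟩
          · intro h
            have hn : nb a f = D := by
              ext i
              have hi := h i
              simp only [nb, Finset.mem_filter, Finset.mem_univ, true_and]
              split_ifs at hi with h3 h4
              · simp at hi
                simp [h3, hi.1, hi.2]
              · simp at hi; simp [h3, hi]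
              · simp at hi; simp [h3, hi]
            have he : eb f = E := by
              ext i
              have hi := h i
              simp only [eb, Finset.mem_filter, Finset.mem_univ, true_and]
              split_ifs at hi with h3 h4
              · have h5 : i ∉ E := fun h6 => (Finset.mem_compl.1 (hE.1 h6)) h3
                simp at hi
                simp [h5, hi.1]
              · simp at hi; simp [h4, hi]
              · simp at hi; simp [h4, hi]
            refine ⟨⟨?_, hn⟩, he⟩
            rw [hdeg, hn, he, hE.2]
            omega
        rw [hset, Fintype.card_piFinset]
        rw [← Finset.prod_subset (Finset.subset_univ D)]
        · refine Finset.prod_congr rfl fun i hi => ?_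
          rw [if_pos hi, Finset.card_erase_of_mem (by simp), Finset.card_erase_of_mem (by simp)]
          simp
        · intro i _ hi
          rw [if_neg hi]
          split_ifs <;> simp
      rw [Finset.sum_congr rfl this, Finset.sum_const, Finset.card_powersetCard, Finset.card_compl,
        Fintype.card_fin, smul_eq_mul]
    · intro f hf
      simp only [Finset.coe_filter, Finset.mem_univ, true_and, Set.mem_setOf_eq] at hf
      rw [Finset.mem_coe, Finset.mem_powersetCard]
      constructor
      · intro i hi
        rw [Finset.mem_compl, ← hf.2]
        simp only [nb, eb, Finset.mem_filter, Finset.mem_univ, true_and] at hi ⊢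
        tauto
      · have := hdeg f
        rw [hf.1, hf.2] at this
        omega
  · rw [zero_mul, Finset.card_eq_zero]
    ext f
    simp only [Finset.mem_filter, Finset.mem_univ, true_and, Finset.notMem_empty, iff_false]
    rintro ⟨h1, h2⟩
    have := hdeg f
    rw [h1, h2] at this
    omega

theorem prod_lev (a : ∀ j, Fin (n j)) (c : ℕ) :
    ∏ σ : Face n c, (∑ j, lev (a j) (fn σ j)) =
      ∏ D : Finset (Fin r), (∑ i ∈ Dᶜ, n i) ^
        ((if D.card ≤ c then Nat.choose (r - D.card) (c - D.card) else 0) *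
          ∏ i ∈ D, (n i - 1)) := by
  classical
  have h1 : ∏ σ : Face n c, (∑ j, lev (a j) (fn σ j)) =
      ∏ f ∈ (Finset.univ : Finset (∀ j : Fin r, Option (Fin (n j)))).filter (fun f => deg f = c),
        (∑ j, lev (a j) (f j)) := by
    refine Finset.prod_bij (fun σ _ => fn σ) ?_ ?_ ?_ ?_
    · intro σ _; simp [fn_deg]
    · intro σ _ τ _ h; exact fn_injective h
    · intro f hf
      obtain ⟨σ, hσ⟩ := fn_surj (c := c) f (by simpa using hf)
      exact ⟨σ, Finset.mem_univ _, hσ⟩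
    · intro σ _; rfl
  rw [h1, ← Finset.prod_fiberwise (g := nb a)]
  refine Finset.prod_congr rfl fun D _ => ?_
  rw [← card_fiber a c D, Finset.filter_filter, ← Finset.prod_const]
  refine Finset.prod_congr rfl fun f hf => ?_
  rw [sum_lev, (Finset.mem_filter.1 hf).2.2]

/-- the right-hand side of Adin's formula -/
def rhs (n : Fin r → ℕ) (c : ℕ) : ℕ :=
  ∏ D : Finset (Fin r), (∑ i ∈ Dᶜ, n i) ^
    ((if D.card ≤ c then Nat.choose (r - 2 - D.card) (c - D.card) else 0) *
          ∏ i ∈ D, (n i - 1))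

theorem rhs_pos (hn : ∀ j, 1 ≤ n j) (c : ℕ) (hc : c < r) : 0 < rhs n c := by
  unfold rhs
  refine Finset.prod_pos fun D _ => ?_
  split_ifs with h
  · apply pow_pos
    have hne : (Dᶜ).Nonempty := by
      rw [← Finset.card_pos, Finset.card_compl, Fintype.card_fin]
      omega
    exact Finset.sum_pos (fun i _ => hn i) hne
  · simp

theorem prod_lev_zero (a : ∀ j, Fin (n j)) :
    ∏ σ : Face n 0, (∑ j, lev (a j) (fn σ j)) = rhs n 0 := by
  rw [prod_lev, rhs]
  refine Finset.prod_congr rfl fun D _ => ?_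
  congr 2
  split_ifs with h
  · have : D.card = 0 := by omega
    simp [this]
  · rfl

theorem prod_lev_one (a : ∀ j, Fin (n j)) (hr : 1 < r) :
    ∏ σ : Face n 1, (∑ j, lev (a j) (fn σ j)) = rhs n 1 * rhs n 0 ^ 2 := by
  rw [prod_lev, rhs, rhs, ← Finset.prod_pow, ← Finset.prod_mul_distrib]
  refine Finset.prod_congr rfl fun D _ => ?_
  rw [← pow_mul, ← pow_add]
  congr 1
  rw [mul_right_comm, ← add_mul]
  congr 1
  rcases Nat.lt_or_ge 1 D.card with h | h
  · simp [h.not_ge, (show ¬ D.card = 0 by omega), (show ¬ D = ∅ by rintro rfl; simp at h)]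
  · rcases (show D.card = 0 ∨ D.card = 1 by omega) with h | h
    · simp [h]; omega
    · simp [h]

theorem prod_lev_succ (a : ∀ j, Fin (n j)) (c : ℕ) (hr : c + 2 < r) :
    ∏ σ : Face n (c + 2), (∑ j, lev (a j) (fn σ j)) =
      rhs n (c + 2) * rhs n (c + 1) ^ 2 * rhs n c := by
  rw [prod_lev, rhs, rhs, rhs, ← Finset.prod_pow, ← Finset.prod_mul_distrib,
    ← Finset.prod_mul_distrib]
  refine Finset.prod_congr rfl fun D _ => ?_
  rw [← pow_mul, ← pow_add, ← pow_add]
  congr 1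
  rw [mul_right_comm, ← add_mul, ← add_mul]
  congr 1
  generalize D.card = d
  rcases Nat.lt_or_ge (c + 2) d with h | h
  · rw [if_neg (by omega), if_neg (by omega), if_neg (by omega), if_neg (by omega)]
    norm_num
  · rcases (show d = c + 2 ∨ d = c + 1 ∨ d ≤ c by omega) with h | h | h
    · subst h; simp
    · subst h
      have h1 : c + 2 - (c + 1) = 1 := by omega
      simp [h1]
      omega
    · rw [if_pos (by omega), if_pos (by omega), if_pos (by omega), if_pos (by omega)]
      obtain ⟨m, rfl⟩ : ∃ m, r = m + 2 + d := ⟨r - 2 - d, by omega⟩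
      obtain ⟨k, rfl⟩ : ∃ k, c = k + d := ⟨c - d, by omega⟩
      have e1 : m + 2 + d - d = m + 2 := by omega
      have e2 : k + d + 2 - d = k + 2 := by omega
      have e3 : m + 2 + d - 2 - d = m := by omega
      have e4 : k + d + 1 - d = k + 1 := by omega
      have e5 : k + d - d = k := by omega
      rw [e1, e2, e3, e4, e5, Nat.choose_succ_succ (m + 1) (k + 1), Nat.choose_succ_succ m k,
        Nat.choose_succ_succ m (k + 1)]
      simp only [Nat.succ_eq_add_one, show k + 1 + 1 = k + 2 from rfl]
      ring

end Count

section Main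

theorem cancel_left {F ι κ : Type*} [Fintype ι] (B : Matrix F ι ℤ)
    (hinj : ∀ x, B *ᵥ x = 0 → x = 0) (X Y : Matrix ι κ ℤ) (h : B * X = B * Y) : X = Y := by
  ext i k
  have h1 : B *ᵥ (fun i => X i k - Y i k) = 0 := by
    ext σ
    have := congrFun (congrFun h σ) k
    simp only [Matrix.mul_apply] at this
    simp [Matrix.mulVec, dotProduct, mul_sub, Finset.sum_sub_distrib, this]
  have := congrFun (hinj _ h1) i
  simpa [sub_eq_zero] using this

theorem exists_split {F ι ι' : Type*} [Fintype F] [DecidableEq F] [Fintype ι] [DecidableEq ι]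
    [Fintype ι'] [DecidableEq ι'] (B : Matrix F ι ℤ) (S : Matrix F ι' ℤ) (M : Matrix ι' F ℤ)
    (hinj : ∀ x, B *ᵥ x = 0 → x = 0) (hMS : M * S = 1) (hMB : M * B = 0)
    (hex : ∀ z, M *ᵥ z = 0 → ∃ x, B *ᵥ x = z) :
    ∃ N : Matrix ι F ℤ, N * B = 1 ∧ N * S = 0 ∧ B * N + S * M = 1 := by
  have h0 : M * (1 - S * M) = 0 := by
    rw [Matrix.mul_sub, Matrix.mul_one, ← Matrix.mul_assoc, hMS, Matrix.one_mul, sub_self]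
  have h1 : ∀ f : F, ∃ x, B *ᵥ x = (1 - S * M).col f := by
    intro f
    apply hex
    ext i
    exact congrFun (congrFun h0 i) f
  choose x hx using h1
  let N : Matrix ι F ℤ := fun i f => x f i
  have hBN : B * N = 1 - S * M := by
    ext σ f
    exact congrFun (hx f) σ
  refine ⟨N, ?_, ?_, ?_⟩
  · apply cancel_left B hinj
    rw [← Matrix.mul_assoc, hBN, Matrix.sub_mul, Matrix.mul_assoc, hMB]
    simp
  · apply cancel_left B hinj
    rw [← Matrix.mul_assoc, hBN, Matrix.sub_mul, Matrix.mul_assoc, hMS]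
    simp
  · rw [hBN]; simp

theorem main_aux (r e : ℕ) (n : Fin r → ℕ) (hn : ∀ j, 1 ≤ n j) (hk : e + 1 < r) :
    (∑ᶠ T ∈ {T | IsForest n e T}, (torsionCount n e T) ^ 2) = rhs n (e + 1) := by
  classical
  let a : ∀ j, Fin (n j) := fun j => ⟨0, hn j⟩
  choose ρ B M S hA hMS hB using fun c => exists_factor (bdry n c)
  have hBS : ∀ c, B c = bdry n c * S c := fun c => by
    conv_rhs => rw [hA c]
    rw [Matrix.mul_assoc, hMS, Matrix.mul_one]
  have hMv : ∀ c z, bdry n c *ᵥ z = 0 ↔ M c *ᵥ z = 0 := by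
    intro c z
    rw [hA c, ← Matrix.mulVec_mulVec]
    exact ⟨fun h => hB c _ h, fun h => by rw [h, Matrix.mulVec_zero]⟩
  have hMB : ∀ c, M c * B (c + 1) = 0 := by
    intro c
    ext i j
    have h1 : bdry n c * B (c + 1) = 0 := by
      rw [hBS, ← Matrix.mul_assoc, bdry_bdry, Matrix.zero_mul]
    have h2 : bdry n c *ᵥ (B (c + 1)).col j = 0 := by
      ext σ; exact congrFun (congrFun h1 σ) j
    rw [hMv] at h2
    exact congrFun h2 i
  have hsplit : ∀ c, c + 1 < r → ∃ N : Matrix (Fin (ρ (c + 1))) (Face n (c + 1)) ℤ,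
      N * B (c + 1) = 1 ∧ N * S c = 0 ∧ B (c + 1) * N + S c * M c = 1 := by
    intro c hc
    apply exists_split _ _ _ (hB _) (hMS _) (hMB _)
    intro z hz
    rw [← hMv] at hz
    obtain ⟨w, hw⟩ := exact_succ a c hc z hz
    rw [hA (c + 1), ← Matrix.mulVec_mulVec] at hw
    exact ⟨_, hw⟩
  have hsplit0 : ∃ N : Matrix (Fin (ρ 0)) (Face n 0) ℤ,
      N * B 0 = 1 ∧ N * (0 : Matrix (Face n 0) (Fin 0) ℤ) = 0 ∧
        B 0 * N + (0 : Matrix (Face n 0) (Fin 0) ℤ) * (0 : Matrix (Fin 0) (Face n 0) ℤ) = 1 := by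
    apply exists_split _ _ _ (hB _) (by ext i; exact i.elim0) (by simp)
    intro z _
    obtain ⟨w, hw⟩ := exact_zero a (by omega) z
    rw [hA 0, ← Matrix.mulVec_mulVec] at hw
    exact ⟨_, hw⟩
  -- determinants of the Laplacians
  have hlap0 : det (M 0 * (M 0)ᵀ) = rhs n 0 := by
    obtain ⟨N, h1, h2, h3⟩ := hsplit0
    have h4 := lap_det (B 0) N 0 0 h1 (by ext i; exact i.elim0) (by simp) h2 h3 (M 0)
      (0 : Matrix (Fin 0) (Fin 0) ℤ)
    rw [← hA 0] at h4
    have h5 := lap_det_faces a 0 (bdry n 0 * (bdry n 0)ᵀ) (fun σ τ => by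
      rw [up_eq, Matrix.add_apply, down_zero, add_zero])
    rw [← prod_lev_zero a]
    push_cast at h5 ⊢
    rw [← h5]
    simpa using h4.symm
  have hg0 : det ((B 0)ᵀ * B 0) = 1 := by
    obtain ⟨N, h1, h2, h3⟩ := hsplit0
    rw [gram_key (B 0) N 0 0 h1 (by ext i; exact i.elim0) (by simp) h2 h3]
    simp
  have hg : ∀ c, c + 1 < r → det ((B (c + 1))ᵀ * B (c + 1)) = det (M c * (M c)ᵀ) := by
    intro c hc
    obtain ⟨N, h1, h2, h3⟩ := hsplit c hc
    exact gram_key _ N _ _ h1 (hMS c) (hMB c) h2 h3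
  have hlap : ∀ c, c + 1 < r → ((∏ σ : Face n (c + 1), (∑ j, lev (a j) (fn σ j)) : ℕ) : ℤ) =
      det (M (c + 1) * (M (c + 1))ᵀ) * det (M c * (M c)ᵀ) ^ 2 * det ((B c)ᵀ * B c) := by
    intro c hc
    obtain ⟨N, h1, h2, h3⟩ := hsplit c hc
    rw [← lap_det _ N _ _ h1 (hMS c) (hMB c) h2 h3 (M (c + 1)) (B c), ← hA, ← hA,
      lap_det_faces a (c + 1) _ (fun σ τ => by
        rw [Matrix.add_apply, Matrix.add_apply, up_eq, down_eq])]
    push_cast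
    rfl
  have hpos : ∀ c, c < r → (rhs n c : ℤ) ≠ 0 := fun c hc => by
    exact_mod_cast (rhs_pos hn c hc).ne'
  have hlap1 : 1 < r → det (M 1 * (M 1)ᵀ) = rhs n 1 := by
    intro hr
    have := hlap 0 hr
    rw [hg0, mul_one, hlap0, prod_lev_one a hr] at this
    push_cast at this
    exact (mul_right_cancel₀ (pow_ne_zero 2 (hpos 0 (by omega))) this).symm
  have htau : ∀ c, c + 1 < r → det (M c * (M c)ᵀ) = rhs n c ∧
      det (M (c + 1) * (M (c + 1))ᵀ) = rhs n (c + 1) := by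
    intro c
    induction c with
    | zero => intro hr; exact ⟨hlap0, hlap1 hr⟩
    | succ c ih =>
      intro hr
      obtain ⟨h1, h2⟩ := ih (by omega)
      refine ⟨h2, ?_⟩
      have := hlap (c + 1) hr
      rw [hg c (by omega), h2, h1, prod_lev_succ a c hr] at this
      push_cast at this
      have h3 := mul_right_cancel₀ (hpos c (by omega)) this
      exact (mul_right_cancel₀ (pow_ne_zero 2 (hpos (c + 1) (by omega))) h3).symm
  -- forests
  obtain ⟨N, hN1, -, -⟩ := hsplit e hk
  have hforest : ∀ T, IsForest n e T ↔ minor (M (e + 1)) T ≠ 0 := by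
    intro T
    unfold IsForest
    rw [← forest_iff (B (e + 1)) (M (e + 1)) N (S (e + 1)) hN1 (hMS _) T, ← hA]
  have htors : ∀ T, minor (M (e + 1)) T ≠ 0 →
      torsionCount n e T = (minor (M (e + 1)) T).natAbs := by
    intro T hT
    have := torsion_card (bdry n e) (B (e + 1)) (M (e + 1)) N hN1 (fun z => by
      constructor
      · intro hz
        obtain ⟨w, hw⟩ := exact_succ a e hk z hz
        rw [hA (e + 1), ← Matrix.mulVec_mulVec] at hw
        exact ⟨_, hw⟩
      · rintro ⟨x, rfl⟩
        rw [hMv, Matrix.mulVec_mulVec, hMB, Matrix.zero_mulVec]) T hT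
    rw [← hA] at this
    exact this
  have hsum : ((∑ᶠ T ∈ {T | IsForest n e T}, (torsionCount n e T) ^ 2 : ℕ) : ℤ) =
      ∑ T, minor (M (e + 1)) T ^ 2 := by
    rw [finsum_mem_def, finsum_eq_sum_of_fintype, Nat.cast_sum]
    refine Finset.sum_congr rfl fun T _ => ?_
    by_cases hT : minor (M (e + 1)) T = 0
    · rw [Set.indicator_of_notMem (by simp [hforest, hT]), hT]; simp
    · rw [Set.indicator_of_mem (by simp [hforest, hT]), htors T hT]
      simp
  rw [← cauchy_binet, (htau e hk).2] at hsum
  exact_mod_cast hsum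

end Main
end AdinProof

open ColorfulComplex

/-- **Adin's formula** for the torsion-weighted count of maximal spanning `k`-forests of
the complete colorful complex `K_{n_1,…,n_r}`, for `1 ≤ k ≤ r - 1` (here `k = e + 1`):
`∑_T t(T)² = ∏_{D ⊆ [r], |D| ≤ k} σ_D ^ (C(r-2-|D|, k-|D|) · π_D)`. -/
theorem adin_formula (r e : ℕ) (hr : 2 ≤ r) (n : Fin r → ℕ) (hn : ∀ j, 1 ≤ n j)
    (hk : e + 1 ≤ r - 1) :
    (∑ᶠ T ∈ {T | IsForest n e T}, (torsionCount n e T) ^ 2) =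
      ∏ D ∈ Finset.univ.powerset.filter (fun D : Finset (Fin r) => D.card ≤ e + 1),
        (∑ i ∈ Dᶜ, n i) ^
          (Nat.choose (r - 2 - D.card) (e + 1 - D.card) * ∏ i ∈ D, (n i - 1)) := by
  rw [AdinProof.main_aux r e n hn (by omega), AdinProof.rhs, Finset.powerset_univ,
    Finset.prod_filter]
  refine Finset.prod_congr rfl fun D _ => ?_
  split_ifs <;> simp
end

section
/- Let r ≥ 2 and n_1,…,n_r be positive integers, let K = K_{n_1,…,n_r} be the complete colorful complex, fix 1 ≤ k ≤ r−1, and introduce indeterminates v_{j,t} for j∈[r], t∈[n_j], one for each vertex. For a maximal spanning k-forest T of K (a set T ⊆ F_k with ℚ-linearly independent columns of ∂_k and |T| = rank_ℚ(∂_k)), let t(T) be the cardinality of the torsion subgroup of ker_ℤ(∂_{k−1}) / (the subgroup generated by the columns of ∂_k indexed by T). Set p_j = ∏_{t=1}^{n_j} v_{j,t}, s_j = ∑_{t=1}^{n_j} v_{j,t}, and e_{k,j} = ∑_{D⊆[r]∖{j}, |D|≤k−1} (−1)^{k−1−|D|} ∏_{t∈D} n_t. Then, as an identity of rational functions in the v_{j,t}: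 ∑_T t(T)² · ∏_{σ∈T} ∏_{(j,t): the t-th vertex of color j lies in σ} v_{j,t} = (∏_{j=1}^r p_j^{e_{k,j}}) · ∏_{D⊆[r], |D|≤k} (∑_{j∈[r]∖D} s_j)^{C(r−2−|D|, k−|D|)·π_D}, where π_D = ∏_{i∈D}(n_i−1) and the binomial coefficient C(a,b) is taken to be 1 when b = 0 (even when a < 0) and 0 when 0 ≤ a < b. -/
open Matrix MvPolynomial

open ColorfulComplex

namespace ColorfulComplex
section LinAlg

/-- Cauchy–Binet, intermediate form: sum over all functions. -/
theorem cb_aux {m F K : Type*} [Fintype m] [DecidableEq m] [Fintype F] [DecidableEq F]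
    [CommRing K] (A : Matrix m F K) (x : F → K) :
    (A * Matrix.diagonal x * Aᵀ).det =
      ∑ φ : m → F, (∏ i, A i (φ i) * x (φ i)) * (A.submatrix id φ).det := by
  have h : A * Matrix.diagonal x * Aᵀ =
      fun i => ∑ f, (A i f * x f) • (Aᵀ f) := by
    ext i j
    simp [Matrix.mul_apply, Matrix.diagonal_apply, Finset.sum_apply]
  rw [h]
  change Matrix.detRowAlternating.toMultilinearMap _ = _
  rw [MultilinearMap.map_sum]
  refine Finset.sum_congr rfl fun φ _ => ?_
  rw [MultilinearMap.map_smul_univ, smul_eq_mul]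
  congr 1
  rw [← Matrix.det_transpose (A.submatrix id φ)]
  rfl

theorem cb_term {m F K : Type*} [Fintype m] [DecidableEq m] [Fintype F] [DecidableEq F]
    [CommRing K] (A : Matrix m F K) (x : F → K) (T : Finset F) (e : m ≃ T) :
    ∑ φ ∈ Finset.univ.filter (fun φ : m → F => Function.Injective φ ∧ Finset.univ.image φ = T),
      (∏ i, A i (φ i) * x (φ i)) * (A.submatrix id φ).det =
      (A.submatrix id (fun i => (e i : F))).det ^ 2 * ∏ f ∈ T, x f := by
  have h1 : ∑ σ : Equiv.Perm m, (∏ i, A i (e (σ i)) * x (e (σ i))) *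
      (A.submatrix id (fun i => (e (σ i) : F))).det =
      (A.submatrix id (fun i => (e i : F))).det ^ 2 * ∏ f ∈ T, x f := by
    have hx : ∀ σ : Equiv.Perm m, ∏ i, x (e (σ i)) = ∏ f ∈ T, x f := by
      intro σ
      rw [← Finset.prod_coe_sort T]
      exact Fintype.prod_equiv (σ.trans e) _ _ (fun i => rfl)
    have hd : ∀ σ : Equiv.Perm m, (A.submatrix id (fun i => (e (σ i) : F))).det =
        Equiv.Perm.sign σ * (A.submatrix id (fun i => (e i : F))).det := by
      intro σ
      rw [← Matrix.det_permute' σ]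
      rfl
    simp_rw [Finset.prod_mul_distrib, hx, hd]
    rw [sq]
    have hdet : (A.submatrix id (fun i => (e i : F))).det =
        ∑ σ : Equiv.Perm m, ((Equiv.Perm.sign σ : ℤ) : K) * ∏ i, A i (e (σ i)) := by
      rw [← Matrix.det_transpose, Matrix.det_apply']
      simp
    generalize (A.submatrix id (fun i => (e i : F))).det = d at *
    rw [mul_assoc]
    conv_rhs => rw [hdet]
    rw [Finset.sum_mul]
    refine Finset.sum_congr rfl fun σ _ => ?_
    rw [← hdet]
    ring
  rw [← h1]
  symm
  refine Finset.sum_bij (fun σ _ => fun i => (e (σ i) : F)) ?_ ?_ ?_ ?_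
  · intro σ _
    simp only [Finset.mem_filter, Finset.mem_univ, true_and]
    refine ⟨fun a b h => by simpa using h, ?_⟩
    ext f
    simp only [Finset.mem_image, Finset.mem_univ, true_and]
    constructor
    · rintro ⟨a, rfl⟩; exact (e (σ a)).2
    · intro hf
      exact ⟨σ.symm (e.symm ⟨f, hf⟩), by simp⟩
  · intro σ _ τ _ h
    ext i
    have := congrFun h i
    simpa using this
  · intro φ hφ
    simp only [Finset.mem_filter, Finset.mem_univ, true_and] at hφ
    have hm : ∀ i, φ i ∈ T := fun i => by rw [← hφ.2]; simp
    have hinj : Function.Injective (fun i => e.symm ⟨φ i, hm i⟩) := by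
      intro a b h
      have := e.symm.injective h
      exact hφ.1 (by simpa using this)
    refine ⟨Equiv.ofBijective _ (Finite.injective_iff_bijective.mp hinj), Finset.mem_univ _, ?_⟩
    ext i
    simp
  · intro σ _; rfl

/-- Cauchy–Binet for `A X Aᵀ`. -/
theorem cauchy_binet {m F K : Type*} [Fintype m] [DecidableEq m] [Fintype F] [DecidableEq F]
    [CommRing K] (A : Matrix m F K) (x : F → K) (w : Finset F → K)
    (hw : ∀ T : Finset F, ∀ e : m ≃ T, w T = (A.submatrix id (fun i => (e i : F))).det ^ 2) :
    (A * Matrix.diagonal x * Aᵀ).det =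
      ∑ T ∈ Finset.univ.filter (fun T : Finset F => T.card = Fintype.card m),
        w T * ∏ f ∈ T, x f := by
  rw [cb_aux]
  have h0 : ∑ φ : m → F, (∏ i, A i (φ i) * x (φ i)) * (A.submatrix id φ).det =
      ∑ φ ∈ Finset.univ.filter (fun φ : m → F => Function.Injective φ),
        (∏ i, A i (φ i) * x (φ i)) * (A.submatrix id φ).det := by
    rw [Finset.sum_filter]
    refine Finset.sum_congr rfl fun φ _ => ?_
    split_ifs with h
    · rfl
    · rw [Function.not_injective_iff] at h
      obtain ⟨a, b, hab, hne⟩ := h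
      rw [Matrix.det_zero_of_column_eq hne, mul_zero]
      intro k
      simp [hab]
  rw [h0, ← Finset.sum_fiberwise_of_maps_to (s := Finset.univ.filter
      (fun φ : m → F => Function.Injective φ)) (t := Finset.univ.filter
      (fun T : Finset F => T.card = Fintype.card m)) (g := fun φ => Finset.univ.image φ)]
  · refine Finset.sum_congr rfl fun T hT => ?_
    simp only [Finset.mem_filter, Finset.mem_univ, true_and] at hT
    have e : m ≃ T := Fintype.equivOfCardEq (by simp [hT])
    rw [hw T e, ← cb_term A x T e, Finset.filter_filter]
  · intro φ hφ
    simp only [Finset.mem_filter, Finset.mem_univ, true_and] at hφ ⊢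
    rw [Finset.card_image_of_injective _ hφ, Finset.card_univ]

/-- Duality of Gram determinants. -/
theorem gram_dual {F p q K : Type*} [Fintype F] [DecidableEq F] [Fintype p] [DecidableEq p]
    [Fintype q] [DecidableEq q] [Field K]
    (B : Matrix F p ℤ) (M : Matrix q F ℤ) (C : Matrix p F ℤ) (N : Matrix F q ℤ)
    (hCB : C * B = 1) (hMN : M * N = 1) (hMB : M * B = 0) (hCN : C * N = 0)
    (hW : B * C + N * M = 1) (X Y : Matrix F F K) (hXY : Y * X = 1) (hY : Yᵀ = Y) :
    ((M.map (Int.castRingHom K)) * X * (M.map (Int.castRingHom K))ᵀ).det =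
      X.det * ((B.map (Int.castRingHom K))ᵀ * Y * (B.map (Int.castRingHom K))).det := by
  have hVW : fromRows C M * fromCols B N = 1 := by
    rw [fromRows_mul_fromCols, hCB, hMN, hMB, hCN, fromBlocks_one]
  have hWV : fromCols B N * fromRows C M = 1 := by
    rw [fromCols_mul_fromRows, hW]
  have hcard : Fintype.card F = Fintype.card (p ⊕ q) := by
    exact Matrix.square_of_invertible _ _ hWV hVW
  have e : F ≃ p ⊕ q := Fintype.equivOfCardEq hcard
  set W1 : Matrix F F ℤ := (fromCols B N).submatrix id e with hW1
  set V1 : Matrix F F ℤ := (fromRows C M).submatrix e id with hV1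
  have hVW1 : V1 * W1 = 1 := by
    rw [hW1, hV1]
    rw [← Matrix.submatrix_mul _ _ _ id _ Function.bijective_id, hVW, submatrix_one_equiv]
  have hdet : V1.det * W1.det = 1 := by rw [← det_mul, hVW1, det_one]
  have hVWe : V1.det = W1.det := by
    rcases Int.mul_eq_one_iff_eq_one_or_neg_one.mp hdet with h | h <;> rw [h.1, h.2]
  set c := Int.castRingHom K
  set b := B.map c
  set m := M.map c
  have hmb : m * b = 0 := by rw [← Matrix.map_mul, hMB]; simp
  have hcb : C.map c * b = 1 := by rw [← Matrix.map_mul, hCB]; simp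
  have hmn : m * N.map c = 1 := by rw [← Matrix.map_mul, hMN]; simp
  set P : Matrix F F K := (fromCols b (X * mᵀ)).submatrix id e
  set Q : Matrix F F K := (fromRows (bᵀ * Y) m).submatrix e id
  have hPQ : P = X * Qᵀ := by
    ext i j
    simp only [P, Q, submatrix_apply, id, mul_apply, transpose_apply]
    rcases h : e j with u | u
    · simp only [fromCols_apply_inl, fromRows_apply_inl]
      have : b = X * (bᵀ * Y)ᵀ := by
        rw [transpose_mul, transpose_transpose, hY, ← Matrix.mul_assoc,
          mul_eq_one_comm.mp hXY, Matrix.one_mul]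
      conv_lhs => rw [this]
      simp [mul_apply, mul_comm]
    · simp [mul_apply]
  have h1 : (V1.map c) * P = (fromBlocks 1 (C.map c * X * mᵀ) 0 (m * X * mᵀ)).submatrix e e := by
    have : V1.map c = (fromRows (C.map c) m).submatrix e id := by
      ext i j
      simp only [hV1, map_apply, submatrix_apply]
      rcases e i with u | u <;> simp [m]
    rw [this, ← Matrix.submatrix_mul _ _ _ id _ Function.bijective_id, fromRows_mul_fromCols,
      hcb, hmb, Matrix.mul_assoc, Matrix.mul_assoc]
  have h2 : Q * (W1.map c) = (fromBlocks (bᵀ * Y * b) (bᵀ * Y * N.map c) 0 1).submatrix e e := by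
    have : W1.map c = (fromCols b (N.map c)).submatrix id e := by
      ext i j
      simp only [hW1, map_apply, submatrix_apply]
      rcases e j with u | u <;> simp [b]
    rw [this, ← Matrix.submatrix_mul _ _ _ id _ Function.bijective_id, fromRows_mul_fromCols,
      hmb, hmn]
  have d1 := congrArg det h1
  have d2 := congrArg det h2
  rw [det_mul, det_submatrix_equiv_self, det_fromBlocks_zero₂₁, det_one, one_mul, hPQ, det_mul,
    det_transpose] at d1
  rw [det_mul, det_submatrix_equiv_self, det_fromBlocks_zero₂₁, det_one, mul_one] at d2
  rw [← d1, ← d2]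
  have : (V1.map c).det = (W1.map c).det := by
    have h3 := congrArg c hVWe
    rw [RingHom.map_det, RingHom.map_det] at h3
    exact h3
  rw [this]; ring

/-- determinant of the two-sided Laplacian. -/
theorem lap_det {F p q K : Type*} [Fintype F] [DecidableEq F] [Fintype p] [DecidableEq p]
    [Fintype q] [DecidableEq q] [Field K] (e : F ≃ p ⊕ q)
    (b : Matrix F p K) (m : Matrix q F K) (hmb : m * b = 0)
    (X Y : Matrix F F K) (hXY : Y * X = 1)
    (E₁ : Matrix p p K) (E₂ : Matrix q q K) :
    (b * E₁ * bᵀ * Y + X * mᵀ * E₂ * m).det =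
      (E₁.det * (bᵀ * Y * b).det) * (E₂.det * (m * X * mᵀ).det) := by
  have h1 : b * E₁ * bᵀ * Y + X * mᵀ * E₂ * m =
      (fromCols b (X * mᵀ)) * (fromBlocks E₁ 0 0 E₂ * (fromRows (bᵀ * Y) m)) := by
    rw [fromBlocks_mul_fromRows, fromCols_mul_fromRows]
    simp [Matrix.mul_assoc]
  have h2 : b * E₁ * bᵀ * Y + X * mᵀ * E₂ * m =
      (fromCols b (X * mᵀ)).submatrix id e * ((fromBlocks E₁ 0 0 E₂).submatrix e e *
        (fromRows (bᵀ * Y) m).submatrix e id) := by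
    rw [Matrix.submatrix_mul_equiv, Matrix.submatrix_mul_equiv, h1]; rfl
  have h3 : (fromRows (bᵀ * Y) m).submatrix e id * (fromCols b (X * mᵀ)).submatrix id e =
      (fromBlocks (bᵀ * Y * b) 0 0 (m * X * mᵀ)).submatrix e e := by
    rw [← Matrix.submatrix_mul _ _ _ id _ Function.bijective_id, fromRows_mul_fromCols, hmb]
    have : bᵀ * Y * (X * mᵀ) = 0 := by
      rw [Matrix.mul_assoc, ← Matrix.mul_assoc Y, hXY, Matrix.one_mul, ← transpose_mul, hmb,
        transpose_zero]
    rw [this, Matrix.mul_assoc m]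
  have h4 := congrArg det h3
  rw [det_mul, det_submatrix_equiv_self, det_fromBlocks_zero₂₁] at h4
  rw [h2, det_mul, det_mul, det_submatrix_equiv_self, det_fromBlocks_zero₂₁]
  linear_combination E₁.det * E₂.det * h4

/-- Rank factorization over `ℤ`. -/
theorem exists_factor {F G : Type*} [Fintype F] [DecidableEq F] [Fintype G] [DecidableEq G]
    (D : Matrix F G ℤ) :
    ∃ (ρ : ℕ) (B : Matrix F (Fin ρ) ℤ) (M : Matrix (Fin ρ) G ℤ) (N : Matrix G (Fin ρ) ℤ),
      D = B * M ∧ M * N = 1 ∧ ∀ v, B *ᵥ v = 0 → v = 0 := by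
  let R := LinearMap.range D.mulVecLin
  obtain ⟨ρ, ⟨bas⟩⟩ : ∃ ρ, Nonempty (Module.Basis (Fin ρ) ℤ R) := ⟨_, ⟨Module.finBasis ℤ R⟩⟩
  let B : Matrix F (Fin ρ) ℤ := Matrix.of fun f i => (bas i : F → ℤ) f
  have hB : ∀ v, B *ᵥ v = ((bas.equivFun.symm v : R) : F → ℤ) := by
    intro v
    ext f
    simp [B, mulVec, dotProduct, Module.Basis.equivFun_symm_apply, mul_comm]
  have hBinj : ∀ v, B *ᵥ v = 0 → v = 0 := by
    intro v hv
    rw [hB] at hv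
    have : bas.equivFun.symm v = 0 := Subtype.ext hv
    exact (LinearEquiv.map_eq_zero_iff _).mp this
  let M : Matrix (Fin ρ) G ℤ := fun i g =>
    bas.equivFun ⟨D *ᵥ Pi.single g 1, ⟨Pi.single g 1, rfl⟩⟩ i
  have hD : D = B * M := by
    ext f g
    have := congrFun (hB (fun i => M i g)) f
    have h2 : (B * M) f g = (B *ᵥ (fun i => M i g)) f := by
      simp [mul_apply, mulVec, dotProduct]
    rw [h2, this]
    simp only [M]
    simp
  have hex : ∀ i, ∃ w : G → ℤ, D *ᵥ w = (bas i : F → ℤ) := fun i => (bas i).2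
  choose w hw using hex
  refine ⟨ρ, B, M, Matrix.of fun g i => w i g, hD, ?_, hBinj⟩
  have key : ∀ i : Fin ρ, M *ᵥ w i = Pi.single i 1 := by
    intro i
    have : B *ᵥ (M *ᵥ w i - Pi.single i 1) = 0 := by
      rw [mulVec_sub, mulVec_mulVec, ← hD, hw]
      ext f
      simp [B]
    exact sub_eq_zero.mp (hBinj _ this)
  ext i j
  have := congrFun (key j) i
  simp only [mul_apply, one_apply]
  simp only [mulVec, dotProduct] at this
  simp only [of_apply]
  rw [this, Pi.single_apply]

theorem mul_cancel {a b t : Type*} [Fintype b] (B : Matrix a b ℤ)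
    (h : ∀ v, B *ᵥ v = 0 → v = 0) (U : Matrix b t ℤ) (hU : B * U = 0) : U = 0 := by
  ext i j
  have := h (fun i => U i j) (by
    ext a
    have := congrFun (congrFun hU a) j
    simpa [mul_apply, mulVec, dotProduct] using this)
  exact congrFun this i

theorem exists_split {F G H p q : Type*} [Fintype F] [Fintype G] [DecidableEq G] [Fintype H]
    [Fintype p] [DecidableEq p] [Fintype q] [DecidableEq q]
    (D : Matrix F G ℤ) (D' : Matrix G H ℤ)
    (B : Matrix F q ℤ) (M : Matrix q G ℤ) (N : Matrix G q ℤ)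
    (B' : Matrix G p ℤ) (M' : Matrix p H ℤ) (N' : Matrix H p ℤ)
    (hD : D = B * M) (hMN : M * N = 1) (hB : ∀ v, B *ᵥ v = 0 → v = 0)
    (hD' : D' = B' * M') (hMN' : M' * N' = 1) (hB' : ∀ v, B' *ᵥ v = 0 → v = 0)
    (hDD : D * D' = 0) (hex : ∀ v, D *ᵥ v = 0 → ∃ w, D' *ᵥ w = v) :
    M * B' = 0 ∧ ∃ C : Matrix p G ℤ, C * B' = 1 ∧ C * N = 0 ∧ B' * C + N * M = 1 := by
  have h0 : M * B' = 0 := by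
    apply mul_cancel B hB
    have : B * (M * B') = D * D' * N' := by
      rw [hD, hD']
      simp only [Matrix.mul_assoc]
      rw [hMN', Matrix.mul_one]
    rw [this, hDD, Matrix.zero_mul]
  refine ⟨h0, ?_⟩
  have hc : ∀ g : G, ∃ c : p → ℤ, B' *ᵥ c = (1 - N * M) *ᵥ Pi.single g 1 := by
    intro g
    obtain ⟨w, hw⟩ := hex ((1 - N * M) *ᵥ Pi.single g 1) (by
      rw [mulVec_mulVec, hD, Matrix.mul_sub, Matrix.mul_one, Matrix.mul_assoc,
        ← Matrix.mul_assoc M, hMN, Matrix.one_mul, sub_self, zero_mulVec])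
    refine ⟨M' *ᵥ w, ?_⟩
    rw [mulVec_mulVec, ← hD', hw]
  choose c hc using hc
  have hBC : B' * (Matrix.of fun i g => c g i) = 1 - N * M := by
    ext a g
    have := congrFun (hc g) a
    rw [mulVec_single_one] at this
    simpa [mul_apply, mulVec, dotProduct] using this
  refine ⟨Matrix.of fun i g => c g i, ?_, ?_, ?_⟩
  · rw [← sub_eq_zero]
    apply mul_cancel B' hB'
    rw [Matrix.mul_sub, ← Matrix.mul_assoc, hBC, Matrix.sub_mul, Matrix.mul_assoc N, h0]
    simp
  · apply mul_cancel B' hB'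
    rw [← Matrix.mul_assoc, hBC, Matrix.sub_mul, Matrix.mul_assoc N, hMN]
    simp
  · rw [hBC]; simp

end LinAlg
end ColorfulComplex

namespace ColorfulComplex
section Kron
set_option linter.unusedSectionVars false

variable {ι : Type*} [Fintype ι] [DecidableEq ι] {α : ι → Type*} [∀ i, Fintype (α i)]
  [∀ i, DecidableEq (α i)] {K : Type*} [CommRing K]

/-- Tensor product of a family of matrices. -/
def piKron (A : ∀ i, Matrix (α i) (α i) K) : Matrix (∀ i, α i) (∀ i, α i) K :=
  Matrix.of fun f g => ∏ i, A i (f i) (g i)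

theorem piKron_mul (A B : ∀ i, Matrix (α i) (α i) K) :
    piKron A * piKron B = piKron fun i => A i * B i := by
  ext f g
  simp only [piKron, mul_apply, of_apply, ← Finset.prod_mul_distrib]
  rw [Finset.prod_univ_sum, Fintype.piFinset_univ]

theorem piKron_diagonal (d : ∀ i, α i → K) :
    piKron (fun i => Matrix.diagonal (d i)) = Matrix.diagonal fun f : ∀ i, α i => ∏ i, d i (f i) := by
  ext f g
  simp only [piKron, of_apply, diagonal_apply]
  split_ifs with h
  · subst h; simp
  · obtain ⟨i, hi⟩ := Function.ne_iff.mp h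
    exact Finset.prod_eq_zero (Finset.mem_univ i) (by simp [hi])

/-- `A` acting on the `j`-th tensor factor. -/
def liftK (j : ι) (A : Matrix (α j) (α j) K) : Matrix (∀ i, α i) (∀ i, α i) K :=
  piKron (Function.update (fun _ => 1) j A)

theorem piKron_one : piKron (fun i => (1 : Matrix (α i) (α i) K)) = 1 := by
  have := piKron_diagonal (K := K) (fun i (_ : α i) => (1 : K))
  simpa using this

theorem liftK_apply (j : ι) (A : Matrix (α j) (α j) K) (f g : ∀ i, α i) :
    liftK j A f g = if g = Function.update f j (g j) then A (f j) (g j) else 0 := by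
  simp only [liftK, piKron, of_apply]
  rw [← Finset.mul_prod_erase _ _ (Finset.mem_univ j)]
  split_ifs with h
  · rw [Finset.prod_eq_one]
    · simp
    · intro i hi
      rw [Finset.mem_erase] at hi
      rw [Function.update_of_ne hi.1, h, Function.update_of_ne hi.1]
      simp
  · have : ∃ i, i ≠ j ∧ g i ≠ f i := by
      by_contra hc
      push Not at hc
      apply h
      ext i
      by_cases hij : i = j
      · subst hij; simp
      · rw [Function.update_of_ne hij]; exact hc i hij
    obtain ⟨i, hi, hgi⟩ := this
    rw [Finset.prod_eq_zero (i := i), mul_zero]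
    · simp [hi]
    · rw [Function.update_of_ne hi, one_apply_ne hgi.symm]

theorem liftK_diagonal (j : ι) (d : α j → K) :
    liftK j (Matrix.diagonal d) = Matrix.diagonal fun f : ∀ i, α i => d (f j) := by
  ext f g
  rw [liftK_apply, diagonal_apply, diagonal_apply]
  by_cases h : f = g
  · subst h; simp
  · rw [if_neg h]
    split_ifs with h1 h2
    · exfalso; apply h; rw [h1, ← h2]; simp
    · rfl
    · rfl

theorem liftK_conj (p : ∀ i, Matrix (α i) (α i) K) (A : ∀ i, Matrix (α i) (α i) K)
    (d : ∀ i, α i → K) (h : ∀ i, A i * p i = p i * Matrix.diagonal (d i)) :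
    (∑ j, liftK j (A j)) * piKron p =
      piKron p * Matrix.diagonal fun f : ∀ i, α i => ∑ j, d j (f j) := by
  have h2 : (Matrix.diagonal fun f : ∀ i, α i => ∑ j, d j (f j)) =
      ∑ j, liftK j (Matrix.diagonal (d j)) := by
    simp_rw [liftK_diagonal]
    ext f g
    rw [Matrix.sum_apply]
    simp only [diagonal_apply]
    split_ifs <;> simp
  rw [h2, Finset.sum_mul, Finset.mul_sum]
  refine Finset.sum_congr rfl fun j _ => ?_
  simp only [liftK]
  rw [piKron_mul, piKron_mul]
  congr 1
  funext i
  by_cases hij : i = j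
  · subst hij; simp [h]
  · simp [Function.update_of_ne hij]

theorem sub_mul_sub {G a b : Type*} [Fintype G] (A B : Matrix G G K)
    (S : G → Prop) [DecidablePred S] (u : a → G) (v : b → G)
    (hA : ∀ i h, ¬ S h → A (u i) h = 0) :
    A.submatrix u (Subtype.val : {f // S f} → G) *
        B.submatrix (Subtype.val : {f // S f} → G) v =
      (A * B).submatrix u v := by
  ext f g
  simp only [mul_apply, submatrix_apply]
  rw [← Finset.sum_subtype (Finset.univ.filter S) (by simp) (fun h => A (u f) h * B h (v g)),
    Finset.sum_filter]
  refine Finset.sum_congr rfl fun h _ => ?_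
  split_ifs with hh
  · rfl
  · rw [hA f h hh, zero_mul]

/-- The determinant of the restriction to a subtype preserved by everything. -/
theorem det_restrict {G : Type*} [Fintype G] [DecidableEq G] (L P Q : Matrix G G K) (d : G → K)
    (hPQ : P * Q = 1) (h : L * P = P * Matrix.diagonal d) (S : G → Prop) [DecidablePred S]
    (hL : ∀ f g, S f → ¬ S g → L f g = 0)
    (hP : ∀ f g, S f → ¬ S g → P f g = 0) :
    (L.submatrix (Subtype.val : {f // S f} → G) Subtype.val).det = ∏ f : {f // S f}, d f := by
  have key : ∀ A B : Matrix G G K, (∀ f g, S f → ¬ S g → A f g = 0) →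
      A.submatrix (Subtype.val : {f // S f} → G) (Subtype.val : {f // S f} → G) *
        B.submatrix (Subtype.val : {f // S f} → G) (Subtype.val : {f // S f} → G) =
      (A * B).submatrix Subtype.val Subtype.val :=
    fun A B hA => sub_mul_sub A B S _ _ fun i h hh => hA _ _ i.2 hh
  have h1 := key L P hL
  rw [h] at h1
  rw [← key P _ hP] at h1
  have h2 := key P Q hP
  rw [hPQ] at h2
  have h3 : (Matrix.diagonal d).submatrix (Subtype.val : {f // S f} → G) Subtype.val =
    Matrix.diagonal fun f : {f // S f} => d f := by
    ext f g; simp [diagonal_apply, Subtype.ext_iff]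
  have h4 : (1 : Matrix G G K).submatrix (Subtype.val : {f // S f} → G) (Subtype.val : {f // S f} → G) = 1 := by
    ext f g; simp [one_apply, Subtype.ext_iff]
  rw [h4] at h2
  rw [h3] at h1
  have d1 := congrArg det h1
  have d2 := congrArg det h2
  rw [det_mul, det_mul, det_diagonal] at d1
  rw [det_mul, det_one] at d2
  have fin : ∀ W u v d : K, W * u = u * d → u * v = 1 → W = d := by
    intro W u v d h h'
    linear_combination v * h - (W - d) * h'
  exact fin _ _ _ _ d1 d2

end Kron

section Factor
variable {K : Type*} [Field K]

/-- One tensor factor of the Laplacian. -/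
def facL {K : Type*} [CommRing K] {m : ℕ} (x : Fin m → K) : Matrix (Option (Fin m)) (Option (Fin m)) K :=
  Matrix.of fun a b => match a, b with
    | none, none => ∑ t, x t
    | some t, some _ => x t
    | _, _ => 0

def facP {m : ℕ} (x : Fin (m + 1) → K) : Matrix (Option (Fin (m + 1))) (Option (Fin (m + 1))) K :=
  Matrix.of fun a b => match a, b with
    | none, none => 1
    | some t, some u => if u = 0 then x t else (if t = u then 1 else 0) - (if t = 0 then 1 else 0)
    | _, _ => 0

def facQ {m : ℕ} (x : Fin (m + 1) → K) : Matrix (Option (Fin (m + 1))) (Option (Fin (m + 1))) K :=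
  Matrix.of fun a b => match a, b with
    | none, none => 1
    | some t, some u => if t = 0 then (∑ i, x i)⁻¹ else
        (if t = u then 1 else 0) - x t * (∑ i, x i)⁻¹
    | _, _ => 0

def facD {m : ℕ} (x : Fin m → K) : Option (Fin m) → K
  | none => ∑ t, x t
  | some t => if (t : ℕ) = 0 then ∑ t, x t else 0

theorem facQ_mul_facP {m : ℕ} (x : Fin (m + 1) → K) (hx : ∑ i, x i ≠ 0) :
    facQ x * facP x = 1 := by
  ext a b
  rw [mul_apply, Fintype.sum_option]
  rcases a with _ | a <;> rcases b with _ | b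
  · simp [facQ, facP]
  · simp [facQ, facP]
  · simp [facQ, facP]
  · simp only [facQ, facP, of_apply, zero_mul, zero_add, one_apply, Option.some.injEq]
    by_cases ha : a = 0 <;> by_cases hb : b = 0
    · subst ha hb
      simp only [if_true]
      rw [← Finset.mul_sum, inv_mul_cancel₀ hx]
    · subst ha
      simp only [if_true, if_neg hb, if_neg (Ne.symm hb)]
      rw [← Finset.mul_sum]
      simp
    · subst hb
      simp only [if_true, if_neg ha, sub_mul]
      rw [Finset.sum_sub_distrib, ← Finset.mul_sum, mul_assoc, inv_mul_cancel₀ hx]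
      simp
    · simp only [if_neg ha, if_neg hb, sub_mul]
      rw [Finset.sum_sub_distrib, ← Finset.mul_sum]
      simp [mul_sub, ha]

theorem facL_mul_facP {m : ℕ} (x : Fin (m + 1) → K) :
    facL x * facP x = facP x * Matrix.diagonal (facD x) := by
  ext a b
  rw [mul_apply, mul_diagonal, Fintype.sum_option]
  rcases a with _ | a <;> rcases b with _ | b
  · simp [facL, facP, facD]
  · simp [facL, facP, facD]
  · simp [facL, facP, facD]
  · simp only [facL, facP, facD, of_apply, zero_mul, zero_add]
    rw [← Finset.mul_sum]
    by_cases hb : b = 0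
    · subst hb; simp
    · have : (b : ℕ) ≠ 0 := fun h => hb (Fin.ext h)
      simp [hb]

theorem fac_exists {m : ℕ} (hm : 1 ≤ m) (x : Fin m → K) (hx : ∑ i, x i ≠ 0) :
    ∃ P Q : Matrix (Option (Fin m)) (Option (Fin m)) K, P * Q = 1 ∧
      facL x * P = P * Matrix.diagonal (facD x) ∧ 
      ∀ a b, a.isSome ≠ b.isSome → P a b = 0 := by
  obtain ⟨m, rfl⟩ : ∃ k, m = k + 1 := ⟨m - 1, by omega⟩
  refine ⟨facP x, facQ x, mul_eq_one_comm.mp (facQ_mul_facP x hx), facL_mul_facP x, ?_⟩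
  intro a b h
  rcases a with _ | a <;> rcases b with _ | b <;> simp [facP] at h ⊢

end Factor
end ColorfulComplex

namespace ColorfulComplex
section Cube

variable {r : ℕ} (n : Fin r → ℕ)

/-- Faces as partial colour selections. -/
abbrev Cube := ∀ j : Fin r, Option (Fin (n j))

variable {n} {R : Type*} [CommRing R]

def csgn (R : Type*) [CommRing R] (j : Fin r) (f : Cube n) : R :=
  ∏ i, if i < j ∧ f i ≠ none then -1 else 1

theorem csgn_update_of_not_lt (i j : Fin r) (h : ¬ i < j) (f : Cube n) (o) :
    csgn R j (Function.update f i o) = csgn R j f := by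
  unfold csgn
  refine Finset.prod_congr rfl fun k _ => ?_
  by_cases hk : k = i
  · subst hk; simp [h]
  · simp [Function.update_of_ne hk]

theorem csgn_update_some (i j : Fin r) (h : i < j) (f : Cube n) (hf : f i = none) (t) :
    csgn R j (Function.update f i (some t)) = - csgn R j f := by
  unfold csgn
  rw [← Finset.mul_prod_erase _ _ (Finset.mem_univ i),
    ← Finset.mul_prod_erase (a := i) _ (fun k => if k < j ∧ f k ≠ none then (-1 : R) else 1)
      (Finset.mem_univ i)]
  have : ∏ x ∈ Finset.univ.erase i, (if x < j ∧ Function.update f i (some t) x ≠ none then (-1 : R) else 1) =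
    ∏ x ∈ Finset.univ.erase i, (if x < j ∧ f x ≠ none then (-1 : R) else 1) := by
    refine Finset.prod_congr rfl fun k hk => ?_
    rw [Function.update_of_ne (Finset.ne_of_mem_erase hk)]
  rw [this]
  simp [h, hf]

theorem csgn_update_none (i j : Fin r) (h : i < j) (f : Cube n) (t) (hf : f i = some t) :
    csgn R j (Function.update f i none) = - csgn R j f := by
  have := csgn_update_some (R := R) i j h (Function.update f i none) (by simp) t
  rw [Function.update_idem, ← hf, Function.update_eq_self] at this
  rw [this, neg_neg]

theorem csgn_sq (j : Fin r) (f : Cube n) : csgn R j f * csgn R j f = 1 := by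
  unfold csgn
  rw [← Finset.prod_mul_distrib]
  refine Finset.prod_eq_one fun k _ => ?_
  split_ifs <;> simp

/-- The colour-`j` part of the boundary. -/
def dJ (R : Type*) [CommRing R] (j : Fin r) : (Cube n → R) →ₗ[R] (Cube n → R) where
  toFun z f := if f j = none then csgn R j f * ∑ t, z (Function.update f j (some t)) else 0
  map_add' z w := by
    ext f
    simp only [Pi.add_apply, Finset.sum_add_distrib]
    split_ifs <;> ring
  map_smul' c z := by
    ext f
    simp only [Pi.smul_apply, smul_eq_mul, RingHom.id_apply, ← Finset.mul_sum]
    split_ifs <;> ring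

/-- The colour-`j` part of the weighted coboundary. -/
def cJ (x : ∀ j, Fin (n j) → R) (j : Fin r) : (Cube n → R) →ₗ[R] (Cube n → R) where
  toFun z f := match f j with
    | none => 0
    | some t => csgn R j f * x j t * z (Function.update f j none)
  map_add' z w := by
    ext f
    simp only [Pi.add_apply]
    rcases f j with _ | t <;> simp [mul_add]
  map_smul' c z := by
    ext f
    simp only [Pi.smul_apply, smul_eq_mul, RingHom.id_apply]
    rcases f j with _ | t <;> simp
    ring

theorem dJ_apply_none (j : Fin r) (z : Cube n → R) (f : Cube n) (h : f j = none) :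
    dJ R j z f = csgn R j f * ∑ t, z (Function.update f j (some t)) := by
  simp [dJ, h]

theorem dJ_apply_some (j : Fin r) (z : Cube n → R) (f : Cube n) (t) (h : f j = some t) :
    dJ R j z f = 0 := by
  simp [dJ, h]

theorem cJ_apply_none (x : ∀ j, Fin (n j) → R) (j : Fin r) (z : Cube n → R) (f : Cube n)
    (h : f j = none) : cJ x j z f = 0 := by
  simp [cJ, h]

theorem cJ_apply_some (x : ∀ j, Fin (n j) → R) (j : Fin r) (z : Cube n → R) (f : Cube n)
    (t) (h : f j = some t) : cJ x j z f = csgn R j f * x j t * z (Function.update f j none) := by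
  simp [cJ, h]

theorem dJ_self (j : Fin r) : dJ (n := n) R j * dJ R j = 0 := by
  refine LinearMap.ext fun z => funext fun f => ?_
  simp only [Module.End.mul_apply, LinearMap.zero_apply, Pi.zero_apply]
  rcases h : f j with _ | t
  · rw [dJ_apply_none j _ f h]
    rw [Finset.sum_eq_zero, mul_zero]
    intro t _
    exact dJ_apply_some j _ _ t (by simp)
  · exact dJ_apply_some j _ _ t h

theorem dJ_comm (i j : Fin r) (hij : i < j) :
    dJ (n := n) R i * dJ R j + dJ R j * dJ R i = 0 := by
  refine LinearMap.ext fun z => funext fun f => ?_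
  simp only [LinearMap.add_apply, Module.End.mul_apply, LinearMap.zero_apply, Pi.zero_apply,
    Pi.add_apply]
  rcases hi : f i with _ | t
  · rcases hj : f j with _ | u
    · rw [dJ_apply_none i _ f hi, dJ_apply_none j _ f hj]
      have h1 : ∀ t, dJ R j z (Function.update f i (some t)) =
          - csgn R j f * ∑ u, z (Function.update (Function.update f i (some t)) j (some u)) := by
        intro t
        rw [dJ_apply_none j _ _ (by rw [Function.update_of_ne hij.ne']; exact hj),
          csgn_update_some i j hij f hi]
      have h2 : ∀ u, dJ R i z (Function.update f j (some u)) =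
          csgn R i f * ∑ t, z (Function.update (Function.update f i (some t)) j (some u)) := by
        intro t
        rw [dJ_apply_none i _ _ (by rw [Function.update_of_ne hij.ne]; exact hi),
          csgn_update_of_not_lt j i hij.le.not_gt f]
        simp_rw [Function.update_comm hij.ne]
      simp_rw [h1, h2]
      rw [← Finset.mul_sum, ← Finset.mul_sum, Finset.sum_comm]
      ring
    · rw [dJ_apply_none i _ f hi, dJ_apply_some j _ f u hj, add_zero, Finset.sum_eq_zero, mul_zero]
      intro t _
      exact dJ_apply_some j _ _ u (by rw [Function.update_of_ne hij.ne']; exact hj)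
  · rw [dJ_apply_some i _ f t hi, zero_add]
    rcases hj : f j with _ | u
    · rw [dJ_apply_none j _ f hj, Finset.sum_eq_zero, mul_zero]
      intro u _
      exact dJ_apply_some i _ _ t (by rw [Function.update_of_ne hij.ne]; exact hi)
    · rw [dJ_apply_some j _ f u hj]

theorem dc_comm (x : ∀ j, Fin (n j) → R) (i j : Fin r) (hij : i ≠ j) :
    dJ R i * cJ x j + cJ x j * dJ R i = 0 := by
  refine LinearMap.ext fun z => funext fun f => ?_
  simp only [LinearMap.add_apply, Module.End.mul_apply, LinearMap.zero_apply, Pi.zero_apply,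
    Pi.add_apply]
  rcases hi : f i with _ | t
  · rcases hj : f j with _ | u
    · rw [dJ_apply_none i _ f hi, cJ_apply_none x j _ f hj, add_zero, Finset.sum_eq_zero, mul_zero]
      intro t _
      exact cJ_apply_none x j _ _ (by rw [Function.update_of_ne hij.symm]; exact hj)
    · rw [dJ_apply_none i _ f hi, cJ_apply_some x j _ f u hj]
      rw [dJ_apply_none i _ _ (by rw [Function.update_of_ne hij]; exact hi)]
      have h1 : ∀ t, cJ x j z (Function.update f i (some t)) =
          csgn R j (Function.update f i (some t)) * x j u *
            z (Function.update (Function.update f j none) i (some t)) := by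
        intro t
        rw [cJ_apply_some x j _ _ u (by rw [Function.update_of_ne hij.symm]; exact hj),
          Function.update_comm hij.symm]
      simp_rw [h1]
      rcases lt_or_gt_of_ne hij with h | h
      · simp_rw [csgn_update_some i j h f hi, csgn_update_of_not_lt j i h.le.not_gt f]
        rw [← Finset.mul_sum]; ring
      · simp_rw [csgn_update_none j i h f u hj, csgn_update_of_not_lt i j h.le.not_gt f]
        rw [← Finset.mul_sum]; ring
  · rw [dJ_apply_some i _ f t hi, zero_add]
    rcases hj : f j with _ | u
    · exact cJ_apply_none x j _ f hj
    · rw [cJ_apply_some x j _ f u hj,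
        dJ_apply_some i _ _ t (by rw [Function.update_of_ne hij]; exact hi), mul_zero]

/-- The colour-`j` Laplacian. -/
def lapJ (x : ∀ j, Fin (n j) → R) (j : Fin r) : (Cube n → R) →ₗ[R] (Cube n → R) :=
  dJ R j * cJ x j + cJ x j * dJ R j

theorem dc_self_none (x : ∀ j, Fin (n j) → R) (j : Fin r) (z : Cube n → R) (f : Cube n)
    (h : f j = none) : lapJ x j z f = (∑ t, x j t) * z f := by
  simp only [lapJ, LinearMap.add_apply, Module.End.mul_apply, Pi.add_apply]
  rw [dJ_apply_none j _ f h, cJ_apply_none x j _ f h, add_zero]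
  have h1 : ∀ t, cJ x j z (Function.update f j (some t)) = csgn R j f * x j t * z f := by
    intro t
    rw [cJ_apply_some x j _ _ t (by simp), csgn_update_of_not_lt j j (lt_irrefl _),
      Function.update_idem, ← h, Function.update_eq_self]
  simp_rw [h1]
  rw [← Finset.sum_mul, ← Finset.mul_sum]
  linear_combination (∑ t, x j t) * z f * csgn_sq (R := R) j f

theorem dc_self_some (x : ∀ j, Fin (n j) → R) (j : Fin r) (z : Cube n → R) (f : Cube n) (t)
    (h : f j = some t) : lapJ x j z f =
      x j t * ∑ u, z (Function.update f j (some u)) := by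
  simp only [lapJ, LinearMap.add_apply, Module.End.mul_apply, Pi.add_apply]
  rw [dJ_apply_some j _ f t h, cJ_apply_some x j _ f t h, zero_add, dJ_apply_none j _ _ (by simp),
    csgn_update_of_not_lt j j (lt_irrefl _)]
  simp_rw [Function.update_idem]
  linear_combination (x j t * ∑ u, z (Function.update f j (some u))) * csgn_sq (R := R) j f

variable (n) in
/-- Full boundary matrix. -/
noncomputable def dM (R : Type*) [CommRing R] : Matrix (Cube n) (Cube n) R :=
  LinearMap.toMatrix' (∑ j, dJ R j)

/-- Full weighted coboundary matrix. -/
noncomputable def cM (x : ∀ j, Fin (n j) → R) : Matrix (Cube n) (Cube n) R :=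
  LinearMap.toMatrix' (∑ j, cJ x j)

theorem dM_sq : dM n R * dM n R = 0 := by
  rw [dM, ← LinearMap.toMatrix'_mul, Finset.sum_mul]
  simp_rw [Finset.mul_sum]
  have h2 : ∀ i j, dJ (n := n) R i * dJ R j = - (dJ R j * dJ R i) := by
    intro i j
    rcases lt_trichotomy i j with h | h | h
    · exact eq_neg_of_add_eq_zero_left (dJ_comm i j h)
    · subst h; simp [dJ_self]
    · exact eq_neg_of_add_eq_zero_right (dJ_comm j i h)
  have : ∑ i, ∑ j, dJ (n := n) R i * dJ R j = 0 := by
    have key : ∀ i j : Fin r, dJ (n := n) R i * dJ R j =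
        (if i < j then dJ R i * dJ R j else 0) - (if j < i then dJ R j * dJ R i else 0) := by
      intro i j
      rcases lt_trichotomy i j with h | h | h
      · simp [h, h.le.not_gt]
      · subst h; simp [dJ_self]
      · simp only [h, h.le.not_gt, if_true, if_false, zero_sub]
        exact h2 i j
    rw [Finset.sum_congr rfl fun i _ => Finset.sum_congr rfl fun j _ => key i j]
    simp_rw [Finset.sum_sub_distrib]
    rw [Finset.sum_comm, sub_self]
  rw [this]; simp

theorem lap_apply (x : ∀ j, Fin (n j) → R) :
    dM n R * cM x + cM x * dM n R =
      LinearMap.toMatrix' (∑ j, lapJ x j) := by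
  rw [dM, cM, ← LinearMap.toMatrix'_mul, ← LinearMap.toMatrix'_mul, ← map_add]
  congr 1
  rw [Finset.sum_mul_sum, Finset.sum_mul_sum, Finset.sum_comm, ← Finset.sum_add_distrib]
  refine Finset.sum_congr rfl fun j _ => ?_
  rw [← Finset.sum_add_distrib]
  rw [Finset.sum_eq_single j]
  · rfl
  · intro i _ hij
    exact dc_comm x i j hij
  · simp

end Cube
end ColorfulComplex

namespace ColorfulComplex
section Cube2

variable {r : ℕ} {n : Fin r → ℕ} {R : Type*} [CommRing R]

theorem dM_apply (f g : Cube n) : dM n R f g =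
    ∑ j, ∑ t, if f j = none ∧ g = Function.update f j (some t) then csgn R j f else 0 := by
  rw [dM, LinearMap.toMatrix'_apply, LinearMap.sum_apply, Finset.sum_apply]
  refine Finset.sum_congr rfl fun j _ => ?_
  rcases h : f j with _ | t
  · rw [dJ_apply_none j _ f h, Finset.mul_sum]
    refine Finset.sum_congr rfl fun t _ => ?_
    by_cases h2 : g = Function.update f j (some t)
    · subst h2; simp
    · simp [h2, Ne.symm h2]
  · rw [dJ_apply_some j _ f t h]; simp

theorem cM_apply (x : ∀ j, Fin (n j) → R) (f g : Cube n) : cM x f g =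
    ∑ j, ∑ t, if g j = none ∧ f = Function.update g j (some t) then csgn R j g * x j t else 0 := by
  rw [cM, LinearMap.toMatrix'_apply, LinearMap.sum_apply, Finset.sum_apply]
  refine Finset.sum_congr rfl fun j _ => ?_
  rcases h : f j with _ | t
  · rw [cJ_apply_none x j _ f h, Finset.sum_eq_zero]
    intro t _
    rw [if_neg]
    rintro ⟨_, h2⟩
    rw [h2] at h
    simp at h
  · rw [cJ_apply_some x j _ f t h]
    rw [Finset.sum_eq_single t]
    · by_cases h2 : g = Function.update f j none
      · subst h2
        rw [csgn_update_of_not_lt j j (lt_irrefl _)]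
        simp [← h]
      · rw [if_neg, Pi.single_eq_of_ne (Ne.symm h2), mul_zero]
        rintro ⟨h3, h4⟩
        apply h2
        rw [h4, Function.update_idem, ← h3, Function.update_eq_self]
    · intro u _ hu
      rw [if_neg]
      rintro ⟨_, h2⟩
      rw [h2] at h
      simp at h
      exact hu h
    · simp

def deg (f : Cube n) : ℕ := (Finset.univ.filter fun j => f j ≠ none).card

theorem deg_update_some (f : Cube n) (j) (hj : f j = none) (t) :
    deg (Function.update f j (some t)) = deg f + 1 := by
  unfold deg
  have : (Finset.univ.filter fun i => Function.update f j (some t) i ≠ none) =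
      insert j (Finset.univ.filter fun i => f i ≠ none) := by
    ext i
    by_cases h : i = j
    · subst h; simp
    · simp [Function.update_of_ne h, h]
  rw [this, Finset.card_insert_of_notMem (by simp [hj])]

theorem dM_deg (f g : Cube n) (h : deg g ≠ deg f + 1) : dM n R f g = 0 := by
  rw [dM_apply]
  refine Finset.sum_eq_zero fun j _ => Finset.sum_eq_zero fun t _ => ?_
  rw [if_neg]
  rintro ⟨h1, h2⟩
  exact h (by rw [h2, deg_update_some f j h1])

theorem cM_deg (x : ∀ j, Fin (n j) → R) (f g : Cube n) (h : deg f ≠ deg g + 1) :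
    cM x f g = 0 := by
  rw [cM_apply]
  refine Finset.sum_eq_zero fun j _ => Finset.sum_eq_zero fun t _ => ?_
  rw [if_neg]
  rintro ⟨h1, h2⟩
  exact h (by rw [h2, deg_update_some g j h1])

/-- The Laplacian. -/
def lapM (x : ∀ j, Fin (n j) → R) : Matrix (Cube n) (Cube n) R :=
  ∑ j, liftK j (facL (x j))

theorem lap_eq (x : ∀ j, Fin (n j) → R) : dM n R * cM x + cM x * dM n R = lapM x := by
  rw [lap_apply, lapM]
  ext f g
  rw [LinearMap.toMatrix'_apply, LinearMap.sum_apply, Finset.sum_apply, Matrix.sum_apply]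
  refine Finset.sum_congr rfl fun j _ => ?_
  rw [liftK_apply]
  rcases h : f j with _ | t
  · rw [dc_self_none x j _ f h]
    by_cases hfg : g = f
    · subst hfg; simp [h, facL]
    · rw [Pi.single_eq_of_ne (Ne.symm hfg), mul_zero]
      split_ifs with h2
      · rcases hg : g j with _ | u
        · exfalso; apply hfg; rw [h2, hg, ← h, Function.update_eq_self]
        · rfl
      · rfl
  · rw [dc_self_some x j _ f t h]
    rcases hg : g j with _ | u
    · rw [Finset.sum_eq_zero]
      · simp [facL]
      · intro u _
        rw [Pi.single_eq_of_ne]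
        intro h2
        rw [← h2] at hg
        simp at hg
    · rw [Finset.sum_eq_single u]
      · by_cases h2 : g = Function.update f j (some u)
        · rw [if_pos h2, h2]; simp [facL]
        · rw [if_neg h2, Pi.single_eq_of_ne (Ne.symm h2), mul_zero]
      · intro v _ hv
        rw [Pi.single_eq_of_ne]
        intro h2
        rw [← h2] at hg
        simp at hg
        exact hv hg
      · simp

variable (n) in
abbrev Gk (k : ℕ) := {f : Cube n // deg f = k}

variable (n) in
noncomputable def dS (R : Type*) [CommRing R] (k : ℕ) : Matrix (Gk n k) (Gk n (k + 1)) R :=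
  (dM n R).submatrix Subtype.val Subtype.val

noncomputable def cS (x : ∀ j, Fin (n j) → R) (k : ℕ) : Matrix (Gk n (k + 1)) (Gk n k) R :=
  (cM x).submatrix Subtype.val Subtype.val

def lapS (x : ∀ j, Fin (n j) → R) (k : ℕ) : Matrix (Gk n k) (Gk n k) R :=
  (lapM x).submatrix Subtype.val Subtype.val

theorem dS_dS (k : ℕ) : dS n R k * dS n R (k + 1) = 0 := by
  rw [dS, dS, sub_mul_sub, dM_sq]
  · rfl
  · intro i h hh
    exact dM_deg _ _ (by rw [i.2]; exact hh)

theorem lapS_zero (x : ∀ j, Fin (n j) → R) : dS n R 0 * cS x 0 = lapS x 0 := by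
  rw [dS, cS, sub_mul_sub, lapS, ← lap_eq]
  · ext i j
    simp only [submatrix_apply, Matrix.add_apply]
    rw [Matrix.mul_apply (M := cM x), Finset.sum_eq_zero, add_zero]
    intro h _
    rw [cM_deg, zero_mul]
    rw [i.2]; omega
  · intro i h hh
    exact dM_deg _ _ (by rw [i.2]; exact hh)

theorem lapS_succ (x : ∀ j, Fin (n j) → R) (k : ℕ) :
    dS n R (k + 1) * cS x (k + 1) + cS x k * dS n R k = lapS x (k + 1) := by
  rw [dS, cS, sub_mul_sub, cS, dS, sub_mul_sub, lapS, ← lap_eq]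
  · rfl
  · intro i h hh
    exact cM_deg _ _ _ (by rw [i.2]; omega)
  · intro i h hh
    exact dM_deg _ _ (by rw [i.2]; exact hh)

/-- Indicator weight of the base vertex of colour `j`. -/
def xbase (j : Fin r) : ∀ i, Fin (n i) → ℤ := fun i t => if i = j ∧ (t : ℕ) = 0 then 1 else 0

theorem lap_base_sum (j : Fin r) (hn : 1 ≤ n j) : ∑ t, xbase (n := n) j j t = 1 := by
  simp only [xbase, true_and]
  rw [Finset.sum_eq_single (⟨0, hn⟩ : Fin (n j))]
  · simp
  · intro b _ hb
    rw [if_neg]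
    intro h
    exact hb (Fin.ext h)
  · simp

theorem lap_base_apply (j : Fin r) (f g : Cube n) : lapM (xbase (n := n) j) f g =
    if g = Function.update f j (g j) then facL (xbase (n := n) j j) (f j) (g j) else 0 := by
  rw [lapM, Matrix.sum_apply, Finset.sum_eq_single j]
  · rw [liftK_apply]
  · intro i _ hij
    rw [liftK_apply]
    split_ifs
    · rcases f i with _ | t <;> rcases g i with _ | u <;> simp [xbase, facL, hij]
    · rfl
  · simp

theorem lap_base_none (j : Fin r) (hn : 1 ≤ n j) (f g : Cube n) (hf : f j = none) :
    lapM (xbase (n := n) j) f g = if f = g then 1 else 0 := by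
  rw [lap_base_apply, hf]
  by_cases hfg : f = g
  · subst hfg; simp [hf, facL, lap_base_sum j hn]
  · rw [if_neg hfg]
    split_ifs with h2
    · rcases hg : g j with _ | u
      · exfalso; apply hfg; rw [h2, hg, ← hf, Function.update_eq_self]
      · rfl
    · rfl

theorem lap_base_supp (j : Fin r) (f g : Cube n) (i : Fin r) (hij : i ≠ j)
    (h : f i ≠ g i) : lapM (xbase (n := n) j) f g = 0 := by
  rw [lap_base_apply, if_neg]
  intro h2
  apply h
  rw [h2, Function.update_of_ne hij]

theorem exact_zero (hr : 0 < r) (hn : ∀ j, 1 ≤ n j) (v : Gk n 0 → ℤ) :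
    ∃ w, dS n ℤ 0 *ᵥ w = v := by
  let j : Fin r := ⟨0, hr⟩
  refine ⟨cS (xbase j) 0 *ᵥ v, ?_⟩
  rw [mulVec_mulVec, lapS_zero]
  have : lapS (xbase (n := n) j) 0 = 1 := by
    ext f g
    have hf : f.1 j = none := by
      have := f.2
      rw [deg, Finset.card_eq_zero] at this
      by_contra hc
      have h3 : j ∈ (∅ : Finset (Fin r)) := by rw [← this]; simp [hc]
      simp at h3
    rw [lapS, submatrix_apply, lap_base_none j (hn j) _ _ hf, one_apply]
    simp [Subtype.ext_iff]
  rw [this, one_mulVec]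

theorem exact_aux (hn : ∀ j, 1 ≤ n j) (k : ℕ) (v : Gk n (k + 1) → ℤ)
    (hv : dS n ℤ k *ᵥ v = 0) (J : Finset (Fin r)) :
    ∃ w u, v = dS n ℤ (k + 1) *ᵥ w + u ∧ dS n ℤ k *ᵥ u = 0 ∧
      ∀ f : Gk n (k + 1), (∃ j ∈ J, f.1 j = none) → u f = 0 := by
  induction J using Finset.induction_on with
  | empty => exact ⟨0, v, by simp, hv, by simp⟩
  | insert j J hj ih =>
    obtain ⟨w, u, h1, h2, h3⟩ := ih
    have hL : lapS (xbase (n := n) j) (k + 1) *ᵥ u =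
        dS n ℤ (k + 1) *ᵥ (cS (xbase j) (k + 1) *ᵥ u) := by
      rw [← lapS_succ, add_mulVec, ← mulVec_mulVec, ← mulVec_mulVec, h2, mulVec_zero, add_zero]
    refine ⟨w + cS (xbase j) (k + 1) *ᵥ u, u - lapS (xbase (n := n) j) (k + 1) *ᵥ u, ?_, ?_, ?_⟩
    · rw [hL, mulVec_add, h1]; abel
    · rw [mulVec_sub, h2, hL, mulVec_mulVec, dS_dS, zero_mulVec, sub_zero]
    · rintro f ⟨i, hi, hfi⟩
      rw [Pi.sub_apply]
      by_cases hij : i = j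
      · subst hij
        have : (lapS (xbase (n := n) i) (k + 1) *ᵥ u) f = u f := by
          simp only [mulVec, dotProduct, lapS, submatrix_apply]
          simp_rw [lap_base_none i (hn i) _ _ hfi]
          rw [Finset.sum_eq_single f]
          · simp
          · intro b _ hb
            rw [if_neg (fun h => hb (Subtype.ext h).symm), zero_mul]
          · simp
        rw [this, sub_self]
      · have hiJ : i ∈ J := by
          rcases Finset.mem_insert.mp hi with h | h
          · exact absurd h hij
          · exact h
        rw [h3 f ⟨i, hiJ, hfi⟩, zero_sub, neg_eq_zero]
        simp only [mulVec, dotProduct, lapS, submatrix_apply]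
        refine Finset.sum_eq_zero fun g _ => ?_
        by_cases hg : g.1 i = none
        · rw [h3 g ⟨i, hiJ, hg⟩, mul_zero]
        · rw [lap_base_supp j _ _ i hij, zero_mul]
          rw [hfi]; exact Ne.symm hg

theorem exact_succ (hn : ∀ j, 1 ≤ n j) (k : ℕ) (hk : k + 1 < r) (v : Gk n (k + 1) → ℤ)
    (hv : dS n ℤ k *ᵥ v = 0) : ∃ w, dS n ℤ (k + 1) *ᵥ w = v := by
  obtain ⟨w, u, h1, h2, h3⟩ := exact_aux hn k v hv Finset.univ
  refine ⟨w, ?_⟩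
  have : u = 0 := by
    ext f
    apply h3
    by_contra hc
    push Not at hc
    have : deg f.1 = r := by
      unfold deg
      rw [Finset.filter_true_of_mem]
      · simp
      · exact fun j hj => hc j hj
    have h4 := f.2
    omega
  rw [h1, this, add_zero]

end Cube2
end ColorfulComplex

namespace ColorfulComplex
section DetLap

variable {r : ℕ} {n : Fin r → ℕ} {K : Type*} [Field K]

def supp (f : Cube n) : Finset (Fin r) := Finset.univ.filter fun j => f j ≠ none

def nzset (f : Cube n) : Finset (Fin r) :=
  Finset.univ.filter fun j => ∃ t, f j = some t ∧ (t : ℕ) ≠ 0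

theorem nzset_sub (f : Cube n) : nzset f ⊆ supp f := by
  intro j
  simp only [nzset, supp, Finset.mem_filter, Finset.mem_univ, true_and]
  rintro ⟨t, ht, _⟩
  simp [ht]

theorem sum_facD (x : ∀ j, Fin (n j) → K) (f : Cube n) :
    ∑ j, facD (x j) (f j) = ∑ j ∈ (nzset f)ᶜ, ∑ t, x j t := by
  rw [← Finset.sum_add_sum_compl (nzset f), Finset.sum_eq_zero, zero_add]
  · refine Finset.sum_congr rfl fun j hj => ?_
    simp only [nzset, Finset.mem_compl, Finset.mem_filter, Finset.mem_univ, true_and] at hj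
    rcases h : f j with _ | t
    · rfl
    · push Not at hj
      simp [facD, hj t h]
  · intro j hj
    simp only [nzset, Finset.mem_filter, Finset.mem_univ, true_and] at hj
    obtain ⟨t, h1, h2⟩ := hj
    simp [h1, facD, h2]

theorem card_DS (hn : ∀ j, 1 ≤ n j) (D S : Finset (Fin r)) (hDS : D ⊆ S) :
    (Finset.univ.filter fun f : Cube n => supp f = S ∧ nzset f = D).card =
      ∏ i ∈ D, (n i - 1) := by
  let a : ∀ j, Finset (Option (Fin (n j))) := fun j =>
    if j ∈ D then (Finset.univ.erase (⟨0, hn j⟩ : Fin (n j))).map Function.Embedding.some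
    else if j ∈ S then {some ⟨0, hn j⟩} else {none}
  have h1 : (Finset.univ.filter fun f : Cube n => supp f = S ∧ nzset f = D) =
      Fintype.piFinset a := by
    ext f
    simp only [Finset.mem_filter, Finset.mem_univ, true_and, Fintype.mem_piFinset]
    constructor
    · rintro ⟨rfl, rfl⟩ j
      simp only [a]
      split_ifs with h h'
      · simp only [nzset, Finset.mem_filter, Finset.mem_univ, true_and] at h
        obtain ⟨t, h1, h2⟩ := h
        rw [h1]
        simpa [Fin.ext_iff] using h2
      · simp only [nzset, supp, Finset.mem_filter, Finset.mem_univ, true_and] at h h'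
        obtain ⟨t, ht⟩ := Option.ne_none_iff_exists'.mp h'
        push Not at h
        have := h t ht
        rw [ht]
        simp [Fin.ext_iff, this]
      · simpa [supp] using h'
    · intro h
      constructor
      · ext j
        have := h j
        simp only [a] at this
        simp only [supp, Finset.mem_filter, Finset.mem_univ, true_and]
        split_ifs at this with h1 h2
        · simp only [hDS h1, iff_true]
          intro h0
          rw [h0] at this
          simp at this
        · rw [Finset.mem_singleton] at this
          simp [this, h2]
        · rw [Finset.mem_singleton] at this
          simp [this, h2]
      · ext j
        have := h j
        simp only [a] at this
        simp only [nzset, Finset.mem_filter, Finset.mem_univ, true_and]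
        split_ifs at this with h1 h2
        · simp only [h1, iff_true]
          rw [Finset.mem_map] at this
          obtain ⟨t, ht, h3⟩ := this
          refine ⟨t, h3.symm, ?_⟩
          intro h4
          exact (Finset.ne_of_mem_erase ht) (Fin.ext h4)
        · rw [Finset.mem_singleton] at this
          simp [this, h1]
        · rw [Finset.mem_singleton] at this
          simp [this, h1]
  rw [h1, Fintype.card_piFinset, ← Finset.prod_mul_prod_compl D]
  have h2 : ∏ i ∈ Dᶜ, (a i).card = 1 := by
    refine Finset.prod_eq_one fun i hi => ?_
    rw [Finset.mem_compl] at hi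
    simp only [a, if_neg hi]
    split_ifs <;> simp
  rw [h2, mul_one]
  refine Finset.prod_congr rfl fun i hi => ?_
  simp [a, hi]

theorem card_supersets (D : Finset (Fin r)) (k : ℕ) (hD : D.card ≤ k) :
    (Finset.univ.filter fun S : Finset (Fin r) => D ⊆ S ∧ S.card = k).card =
      (r - D.card).choose (k - D.card) := by
  have h : (r - D.card).choose (k - D.card) = (Finset.powersetCard (k - D.card) Dᶜ).card := by
    rw [Finset.card_powersetCard, Finset.card_compl, Fintype.card_fin]
  rw [h]
  refine Finset.card_bij' (fun S _ => S \ D) (fun U _ => U ∪ D) ?_ ?_ ?_ ?_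
  · intro S hS
    simp only [Finset.mem_filter, Finset.mem_univ, true_and] at hS
    rw [Finset.mem_powersetCard]
    refine ⟨?_, by rw [Finset.card_sdiff_of_subset hS.1, hS.2]⟩
    intro j hj
    rw [Finset.mem_compl]
    exact (Finset.mem_sdiff.mp hj).2
  · intro U hU
    rw [Finset.mem_powersetCard] at hU
    simp only [Finset.mem_filter, Finset.mem_univ, true_and]
    refine ⟨Finset.subset_union_right, ?_⟩
    rw [Finset.card_union_of_disjoint, hU.2]
    · omega
    · rw [Finset.disjoint_left]
      intro j hj
      exact Finset.mem_compl.mp (hU.1 hj)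
  · intro S hS
    simp only [Finset.mem_filter, Finset.mem_univ, true_and] at hS
    exact Finset.sdiff_union_of_subset hS.1
  · intro U hU
    rw [Finset.mem_powersetCard] at hU
    ext j
    simp only [Finset.mem_sdiff, Finset.mem_union]
    have := fun h : j ∈ U => Finset.mem_compl.mp (hU.1 h)
    tauto

theorem card_D (hn : ∀ j, 1 ≤ n j) (D : Finset (Fin r)) (k : ℕ) (hD : D.card ≤ k) :
    (Finset.univ.filter fun f : Cube n => deg f = k ∧ nzset f = D).card =
      (r - D.card).choose (k - D.card) * ∏ i ∈ D, (n i - 1) := by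
  rw [← card_supersets D k hD, Finset.card_eq_sum_card_fiberwise (f := supp)
    (t := Finset.univ.filter fun S : Finset (Fin r) => D ⊆ S ∧ S.card = k)]
  · rw [Finset.sum_congr rfl (g := fun _ => ∏ i ∈ D, (n i - 1))]
    · simp
    · intro S hS
      simp only [Finset.mem_filter, Finset.mem_univ, true_and] at hS
      rw [← card_DS hn D S hS.1, Finset.filter_filter]
      congr 1
      ext f
      simp only [Finset.mem_filter, Finset.mem_univ, true_and]
      constructor
      · rintro ⟨⟨h1, h2⟩, h3⟩; exact ⟨h3, h2⟩
      · rintro ⟨h1, h2⟩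
        refine ⟨⟨?_, h2⟩, h1⟩
        rw [← hS.2, ← h1]; rfl
  · intro f hf
    simp only [Finset.coe_filter, Finset.mem_univ, true_and, Set.mem_ofPred_eq] at hf ⊢
    refine ⟨?_, hf.1⟩
    rw [← hf.2]; exact nzset_sub f

theorem det_lapS (hn : ∀ j, 1 ≤ n j) (x : ∀ j, Fin (n j) → K) (hx : ∀ j, ∑ t, x j t ≠ 0) (k : ℕ) :
    (lapS x k).det =
      ∏ D ∈ Finset.univ.powerset.filter (fun D : Finset (Fin r) => D.card ≤ k),
        (∑ j ∈ Dᶜ, ∑ t, x j t) ^ ((r - D.card).choose (k - D.card) * ∏ i ∈ D, (n i - 1)) := by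
  have hex := fun j => fac_exists (hn j) (x j) (hx j)
  choose P Q hPQ hLP hP0 using hex
  have hzero : ∀ f g : Cube n, (∃ j, (f j).isSome ≠ (g j).isSome) → piKron P f g = 0 := by
    rintro f g ⟨j, hj⟩
    exact Finset.prod_eq_zero (Finset.mem_univ j) (hP0 j _ _ hj)
  have hdeg : ∀ f g : Cube n, deg f = k → ¬ deg g = k → ∃ j, (f j).isSome ≠ (g j).isSome := by
    intro f g hf hg
    by_contra hc
    push Not at hc
    apply hg
    rw [← hf]
    unfold deg
    congr 1
    ext j
    have := hc j
    simp only [Finset.mem_filter, Finset.mem_univ, true_and]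
    rw [← Option.isSome_iff_ne_none, ← Option.isSome_iff_ne_none, this]
  rw [lapS, lapM]
  rw [det_restrict _ (piKron P) (piKron Q) _ (by rw [piKron_mul]; simp only [hPQ]; exact piKron_one)
    (liftK_conj P (fun j => facL (x j)) (fun j => facD (x j)) hLP) (fun f => deg f = k)]
  · rw [← Finset.prod_subtype (Finset.univ.filter fun f : Cube n => deg f = k) (by simp)
      (fun f => ∑ j, facD (x j) (f j))]
    rw [← Finset.prod_fiberwise_of_maps_to (g := nzset)
      (t := Finset.univ.powerset.filter (fun D : Finset (Fin r) => D.card ≤ k))]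
    · refine Finset.prod_congr rfl fun D hD => ?_
      simp only [Finset.mem_filter] at hD
      rw [← card_D hn D k hD.2, Finset.filter_filter]
      rw [Finset.prod_congr rfl (g := fun _ => ∑ j ∈ Dᶜ, ∑ t, x j t)]
      · simp
      · intro f hf
        simp only [Finset.mem_filter, Finset.mem_univ, true_and] at hf
        rw [sum_facD, hf.2]
    · intro f hf
      simp only [Finset.mem_filter, Finset.mem_univ, true_and] at hf
      simp only [Finset.powerset_univ, Finset.mem_filter, Finset.mem_univ, true_and]
      rw [← hf]
      exact Finset.card_le_card (nzset_sub f)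
  · intro f g hf hg
    obtain ⟨j, hj⟩ := hdeg f g hf hg
    rw [Matrix.sum_apply]
    refine Finset.sum_eq_zero fun i _ => ?_
    rw [liftK_apply]
    split_ifs with h
    · have hij : j = i := by
        by_contra hji
        apply hj
        rw [h, Function.update_of_ne hji]
      subst hij
      generalize f j = a at *
      generalize g j = b at *
      rcases a with _ | a <;> rcases b with _ | b <;> simp [facL] at hj ⊢
    · rfl
  · intro f g hf hg
    exact hzero f g (hdeg f g hf hg)

end DetLap
end ColorfulComplex

namespace ColorfulComplex
section Bridge

variable {r : ℕ} {n : Fin r → ℕ}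

def toFin (f : Cube n) : Finset (Vtx n) := Finset.univ.filter fun v => f v.1 = some v.2

theorem mem_toFin (f : Cube n) (v : Vtx n) : v ∈ toFin f ↔ f v.1 = some v.2 := by simp [toFin]

theorem toFin_inj {f g : Cube n} (h : toFin f = toFin g) : f = g := by
  ext j t
  have h1 := mem_toFin f ⟨j, t⟩
  have h2 := mem_toFin g ⟨j, t⟩
  rw [h] at h1
  exact h1.symm.trans h2

theorem toFin_face (f : Cube n) : ∀ v ∈ toFin f, ∀ w ∈ toFin f, v.1 = w.1 → v = w := by
  rintro ⟨j, t⟩ hv ⟨i, u⟩ hw h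
  simp only at h
  subst h
  rw [mem_toFin] at hv hw
  simp only at hv hw
  rw [hv] at hw
  simpa using hw

theorem toFin_card (f : Cube n) : (toFin f).card = deg f := by
  have : deg f = ((toFin f).image Sigma.fst).card := by
    unfold deg
    congr 1
    ext j
    simp only [Finset.mem_filter, Finset.mem_univ, true_and, Finset.mem_image, mem_toFin]
    rw [Option.ne_none_iff_exists']
    constructor
    · rintro ⟨t, ht⟩; exact ⟨⟨j, t⟩, ht, rfl⟩
    · rintro ⟨⟨i, t⟩, ht, rfl⟩; exact ⟨t, ht⟩
  rw [this, Finset.card_image_of_injOn]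
  intro v hv w hw h
  exact toFin_face f v hv w hw h

def toFace (k : ℕ) (f : Gk n k) : Face n k :=
  ⟨toFin f.1, by rw [toFin_card]; exact f.2, toFin_face f.1⟩

theorem toFace_bij (k : ℕ) : Function.Bijective (toFace (n := n) k) := by
  constructor
  · intro f g h
    apply Subtype.ext
    apply toFin_inj
    exact congrArg Subtype.val h
  · rintro ⟨σ, hc, hσ⟩
    classical
    let f : Cube n := fun j => if h : ∃ t, (⟨j, t⟩ : Vtx n) ∈ σ then some h.choose else none
    have hf : toFin f = σ := by
      ext ⟨j, t⟩
      rw [mem_toFin]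
      simp only [f]
      constructor
      · intro h
        split_ifs at h with h1
        have h2 := h1.choose_spec
        rw [Option.some.injEq] at h
        rwa [h] at h2
      · intro h
        have h1 : ∃ t, (⟨j, t⟩ : Vtx n) ∈ σ := ⟨t, h⟩
        rw [dif_pos h1]
        have := hσ _ h _ h1.choose_spec rfl
        congr 1
        simpa using this.symm
    refine ⟨⟨f, by rw [← toFin_card, hf, hc]⟩, ?_⟩
    apply Subtype.ext
    exact hf

noncomputable def eF (k : ℕ) : Gk n k ≃ Face n k := Equiv.ofBijective _ (toFace_bij k)

theorem ord_lt {i j : Fin r} (h : i < j) (u : Fin (n i)) (t : Fin (n j)) :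
    ord n ⟨i, u⟩ < ord n ⟨j, t⟩ := by
  unfold ord
  simp only
  have h1 : insert i (Finset.univ.filter (fun k => k < i)) ⊆ Finset.univ.filter (fun k => k < j) := by
    intro k hk
    rcases Finset.mem_insert.mp hk with rfl | hk
    · simpa using h
    · simp only [Finset.mem_filter, Finset.mem_univ, true_and] at hk ⊢
      exact hk.trans h
  have h2 := Finset.sum_le_sum_of_subset (f := n) h1
  rw [Finset.sum_insert (by simp)] at h2
  have := u.2
  omega

theorem csgn_eq (j : Fin r) (f : Cube n) (hf : f j = none) (t : Fin (n j)) :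
    (-1 : ℤ) ^ (((toFin (Function.update f j (some t))).filter
      (fun y => ord n y < ord n ⟨j, t⟩)).card) = csgn ℤ j f := by
  have h1 : csgn ℤ j f = (-1 : ℤ) ^ (Finset.univ.filter fun i => i < j ∧ f i ≠ none).card := by
    unfold csgn
    rw [Finset.prod_ite]
    simp
  rw [h1]
  congr 1
  rw [← Finset.card_image_of_injOn (f := Sigma.fst)]
  · congr 1
    ext i
    simp only [Finset.mem_image, Finset.mem_filter, Finset.mem_univ, true_and, mem_toFin]
    constructor
    · rintro ⟨⟨i, u⟩, ⟨h2, h3⟩, rfl⟩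
      simp only at h2 ⊢
      rcases lt_trichotomy i j with h | h | h
      · refine ⟨h, ?_⟩
        rw [Function.update_of_ne h.ne] at h2
        simp [h2]
      · subst h
        simp at h2
        subst h2
        exact absurd h3 (lt_irrefl _)
      · exact absurd (ord_lt h t u) (not_lt.mpr h3.le)
    · rintro ⟨h2, h3⟩
      obtain ⟨u, hu⟩ := Option.ne_none_iff_exists'.mp h3
      refine ⟨⟨i, u⟩, ⟨?_, ord_lt h2 u t⟩, rfl⟩
      simp only
      rw [Function.update_of_ne h2.ne, hu]
  · intro v hv w hw h
    simp only [Finset.coe_filter, Set.mem_ofPred_eq] at hv hw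
    exact toFin_face _ v hv.1 w hw.1 h

theorem erase_iff (f g : Cube n) (j : Fin r) (t : Fin (n j)) :
    ((⟨j, t⟩ : Vtx n) ∈ toFin g ∧ toFin f = (toFin g).erase ⟨j, t⟩) ↔
      (f j = none ∧ g = Function.update f j (some t)) := by
  have key : ∀ g : Cube n, g j = some t →
      (toFin g).erase ⟨j, t⟩ = toFin (Function.update g j none) := by
    intro g hg
    ext ⟨i, u⟩
    rw [Finset.mem_erase, mem_toFin, mem_toFin]
    simp only
    by_cases hij : i = j
    · subst hij
      simp only [hg, Function.update_self]
      simp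
      intro h h2
      exact h h2.symm
    · rw [Function.update_of_ne hij]
      simp [hij]
  constructor
  · rintro ⟨h1, h2⟩
    rw [mem_toFin] at h1
    simp only at h1
    rw [key g h1] at h2
    have := toFin_inj h2
    subst this
    simp [← h1]
  · rintro ⟨h1, rfl⟩
    refine ⟨by simp [mem_toFin], ?_⟩
    rw [key _ (by simp), Function.update_idem, ← h1, Function.update_eq_self]

theorem bdry_eF (k : ℕ) (f : Gk n k) (g : Gk n (k + 1)) :
    bdry n k (eF k f) (eF (k + 1) g) = dS n ℤ k f g := by
  change (∑ x ∈ toFin g.1, if toFin f.1 = (toFin g.1).erase x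
      then (-1 : ℤ) ^ (((toFin g.1).filter (fun y => ord n y < ord n x)).card) else 0) =
    dM n ℤ f.1 g.1
  rw [dM_apply, ← Fintype.sum_sigma' (fun (j : Fin r) (t : Fin (n j)) =>
    if f.1 j = none ∧ g.1 = Function.update f.1 j (some t) then csgn ℤ j f.1 else 0)]
  rw [← Finset.sum_filter_add_sum_filter_not Finset.univ (fun v => v ∈ toFin g.1)]
  rw [Finset.filter_mem_eq_inter, Finset.univ_inter]
  rw [Finset.sum_eq_zero (s := Finset.univ.filter _), add_zero]
  · refine Finset.sum_congr rfl ?_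
    rintro ⟨j, t⟩ hv
    by_cases h : f.1 j = none ∧ g.1 = Function.update f.1 j (some t)
    · rw [if_pos h, if_pos ((erase_iff f.1 g.1 j t).mpr h).2]
      rw [← csgn_eq j f.1 h.1 t, h.2]
    · rw [if_neg h, if_neg]
      intro h2
      exact h ((erase_iff f.1 g.1 j t).mp ⟨hv, h2⟩)
  · rintro ⟨j, t⟩ hv
    simp only [Finset.mem_filter, Finset.mem_univ, true_and] at hv
    rw [if_neg]
    intro h
    exact hv ((erase_iff f.1 g.1 j t).mpr h).1

theorem dS_eq (k : ℕ) : dS n ℤ k = (bdry n k).submatrix (eF k) (eF (k + 1)) := by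
  ext f g
  rw [submatrix_apply, bdry_eF]

theorem bdry_eq (k : ℕ) : bdry n k = (dS n ℤ k).submatrix (eF k).symm (eF (k + 1)).symm := by
  rw [dS_eq]; ext; simp

theorem dS_map {K : Type*} [CommRing K] (k : ℕ) : dS n K k = (dS n ℤ k).map (Int.castRingHom K) := by
  ext f g
  simp only [dS, submatrix_apply, map_apply, dM_apply, map_sum]
  refine Finset.sum_congr rfl fun j _ => Finset.sum_congr rfl fun t _ => ?_
  split_ifs
  · simp only [csgn, map_prod]
    refine Finset.prod_congr rfl fun i _ => ?_
    split_ifs <;> simp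
  · simp

theorem bdry_bdry (k : ℕ) : bdry n k * bdry n (k + 1) = 0 := by
  rw [bdry_eq, bdry_eq, submatrix_mul_equiv, dS_dS]; rfl

theorem bdry_exact_zero (hr : 0 < r) (hn : ∀ j, 1 ≤ n j) (v : Face n 0 → ℤ) :
    ∃ w, bdry n 0 *ᵥ w = v := by
  obtain ⟨w, hw⟩ := exact_zero hr hn (v ∘ eF 0)
  refine ⟨w ∘ (eF 1).symm, ?_⟩
  rw [bdry_eq, submatrix_mulVec_equiv]
  ext σ
  simp only [Function.comp_def]
  simp [hw]

theorem bdry_exact_succ (hn : ∀ j, 1 ≤ n j) (k : ℕ) (hk : k + 1 < r) (v : Face n (k + 1) → ℤ)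
    (hv : bdry n k *ᵥ v = 0) : ∃ w, bdry n (k + 1) *ᵥ w = v := by
  obtain ⟨w, hw⟩ := exact_succ hn k hk (v ∘ eF (k + 1)) (by
    rw [dS_eq, submatrix_mulVec_equiv]
    ext σ
    have : (v ∘ (eF (k + 1))) ∘ (eF (k + 1)).symm = v := by ext; simp
    rw [this, hv]; rfl)
  refine ⟨w ∘ (eF (k + 2)).symm, ?_⟩
  rw [bdry_eq, submatrix_mulVec_equiv]
  ext σ
  simp only [Function.comp_def]
  simp [hw]

/-- Weight of a face. -/
def wt {K : Type*} [CommRing K] (x : Vtx n → K) (k : ℕ) (σ : Face n k) : K := ∏ v ∈ σ.1, x v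

theorem wt_update {K : Type*} [CommRing K] (x : Vtx n → K) (f : Cube n) (j : Fin r)
    (t : Fin (n j)) (hf : f j = none) :
    ∏ v ∈ toFin (Function.update f j (some t)), x v = x ⟨j, t⟩ * ∏ v ∈ toFin f, x v := by
  obtain ⟨h1, h2⟩ := (erase_iff f _ j t).mpr ⟨hf, rfl⟩
  rw [h2, Finset.mul_prod_erase _ _ h1]

theorem cS_wt {K : Type*} [CommRing K] (x : Vtx n → K) (k : ℕ) (g : Gk n (k + 1)) (f : Gk n k) :
    cS (fun j t => x ⟨j, t⟩) k g f * wt x k (eF k f) = wt x (k + 1) (eF (k + 1) g) * dS n K k f g := by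
  change cM (fun j t => x ⟨j, t⟩) g.1 f.1 * (∏ v ∈ toFin f.1, x v) =
    (∏ v ∈ toFin g.1, x v) * dM n K f.1 g.1
  rw [cM_apply, dM_apply, Finset.sum_mul, Finset.mul_sum]
  refine Finset.sum_congr rfl fun j _ => ?_
  rw [Finset.sum_mul, Finset.mul_sum]
  refine Finset.sum_congr rfl fun t _ => ?_
  split_ifs with h
  · rw [h.2, wt_update x _ j t h.1]; ring
  · simp

end Bridge
end ColorfulComplex

namespace ColorfulComplex
section Tower

variable {r : ℕ} {n : Fin r → ℕ} {K : Type*} [Field K]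

variable (n K) in
/-- Boundary matrix over a field. -/
def bK (k : ℕ) : Matrix (Face n k) (Face n (k + 1)) K := (bdry n k).map (Int.castRingHom K)

/-- Weight matrix. -/
def XX (x : Vtx n → K) (k : ℕ) : Matrix (Face n k) (Face n k) K := diagonal (wt x k)

/-- Inverse weight matrix. -/
def YY (x : Vtx n → K) (k : ℕ) : Matrix (Face n k) (Face n k) K := diagonal fun σ => (wt x k σ)⁻¹

theorem wt_ne (x : Vtx n → K) (hx : ∀ v, x v ≠ 0) (k : ℕ) (σ : Face n k) : wt x k σ ≠ 0 :=
  Finset.prod_ne_zero_iff.mpr fun v _ => hx v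

theorem YX (x : Vtx n → K) (hx : ∀ v, x v ≠ 0) (k : ℕ) : YY x k * XX x k = 1 := by
  rw [YY, XX, diagonal_mul_diagonal, ← diagonal_one]
  congr 1
  ext σ
  exact inv_mul_cancel₀ (wt_ne x hx k σ)

theorem YYt (x : Vtx n → K) (k : ℕ) : (YY x k)ᵀ = YY x k := diagonal_transpose _

theorem dS_bK (k : ℕ) : dS n K k = (bK n K k).submatrix (eF k) (eF (k + 1)) := by
  rw [dS_map, dS_eq]; rfl

theorem cS_bK (x : Vtx n → K) (hx : ∀ v, x v ≠ 0) (k : ℕ) :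
    cS (fun j t => x ⟨j, t⟩) k =
      (XX x (k + 1) * (bK n K k)ᵀ * YY x k).submatrix (eF (k + 1)) (eF k) := by
  ext g f
  rw [submatrix_apply, XX, YY, mul_diagonal, diagonal_mul, transpose_apply]
  have h := cS_wt x k g f
  rw [dS_bK, submatrix_apply] at h
  rw [← h, mul_assoc, mul_inv_cancel₀ (wt_ne x hx k _), mul_one]

theorem det_lap_zero (x : Vtx n → K) (hx : ∀ v, x v ≠ 0) :
    (bK n K 0 * XX x 1 * (bK n K 0)ᵀ * YY x 0).det = (lapS (fun j t => x ⟨j, t⟩) 0).det := by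
  rw [← lapS_zero, dS_bK, cS_bK x hx, submatrix_mul_equiv, det_submatrix_equiv_self]
  simp only [Matrix.mul_assoc]

theorem det_lap_succ (x : Vtx n → K) (hx : ∀ v, x v ≠ 0) (k : ℕ) :
    (bK n K (k + 1) * XX x (k + 2) * (bK n K (k + 1))ᵀ * YY x (k + 1) +
      XX x (k + 1) * (bK n K k)ᵀ * YY x k * bK n K k).det =
      (lapS (fun j t => x ⟨j, t⟩) (k + 1)).det := by
  rw [← lapS_succ, dS_bK, cS_bK x hx, submatrix_mul_equiv, dS_bK, cS_bK x hx,
    submatrix_mul_equiv]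
  rw [← det_submatrix_equiv_self (eF (k + 1))]
  simp only [Matrix.mul_assoc]
  rfl

variable (n) in
theorem fac (k : ℕ) :
    ∃ (ρ : ℕ) (B : Matrix (Face n k) (Fin ρ) ℤ) (M : Matrix (Fin ρ) (Face n (k + 1)) ℤ)
      (N : Matrix (Face n (k + 1)) (Fin ρ) ℤ),
      bdry n k = B * M ∧ M * N = 1 ∧ ∀ v, B *ᵥ v = 0 → v = 0 := exists_factor (bdry n k)

variable (n) in
noncomputable def rho (k : ℕ) : ℕ := (fac n k).choose

variable (n) in
noncomputable def BB (k : ℕ) : Matrix (Face n k) (Fin (rho n k)) ℤ := (fac n k).choose_spec.choose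

variable (n) in
noncomputable def MM (k : ℕ) : Matrix (Fin (rho n k)) (Face n (k + 1)) ℤ :=
  (fac n k).choose_spec.choose_spec.choose

variable (n) in
noncomputable def NN (k : ℕ) : Matrix (Face n (k + 1)) (Fin (rho n k)) ℤ :=
  (fac n k).choose_spec.choose_spec.choose_spec.choose

theorem bdry_fac (k : ℕ) : bdry n k = BB n k * MM n k :=
  (fac n k).choose_spec.choose_spec.choose_spec.choose_spec.1

theorem MM_NN (k : ℕ) : MM n k * NN n k = 1 :=
  (fac n k).choose_spec.choose_spec.choose_spec.choose_spec.2.1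

theorem BB_inj (k : ℕ) : ∀ v, BB n k *ᵥ v = 0 → v = 0 :=
  (fac n k).choose_spec.choose_spec.choose_spec.choose_spec.2.2

theorem split (hn : ∀ j, 1 ≤ n j) (k : ℕ) (hk : k + 1 < r) :
    MM n k * BB n (k + 1) = 0 ∧ ∃ C : Matrix (Fin (rho n (k + 1))) (Face n (k + 1)) ℤ,
      C * BB n (k + 1) = 1 ∧ C * NN n k = 0 ∧ BB n (k + 1) * C + NN n k * MM n k = 1 :=
  exists_split (bdry n k) (bdry n (k + 1)) _ _ _ _ _ _ (bdry_fac k) (MM_NN k) (BB_inj k)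
    (bdry_fac (k + 1)) (MM_NN (k + 1)) (BB_inj (k + 1)) (bdry_bdry k)
    (fun v hv => bdry_exact_succ hn k hk v hv)

variable (n K) in
noncomputable def bM (k : ℕ) : Matrix (Fin (rho n k)) (Face n (k + 1)) K :=
  (MM n k).map (Int.castRingHom K)

variable (n K) in
noncomputable def bB (k : ℕ) : Matrix (Face n k) (Fin (rho n k)) K :=
  (BB n k).map (Int.castRingHom K)

theorem bK_fac (k : ℕ) : bK n K k = bB n K k * bM n K k := by
  rw [bK, bdry_fac, Matrix.map_mul]; rfl

noncomputable def tau (x : Vtx n → K) (k : ℕ) : K := (bM n K k * XX x (k + 1) * (bM n K k)ᵀ).det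

noncomputable def gg (x : Vtx n → K) (k : ℕ) : K := ((bB n K k)ᵀ * YY x k * bB n K k).det

theorem tau_eq (hn : ∀ j, 1 ≤ n j) (x : Vtx n → K) (hx : ∀ v, x v ≠ 0) (k : ℕ) (hk : k + 1 < r) :
    tau x k = (XX x (k + 1)).det * gg x (k + 1) := by
  obtain ⟨h0, C, h1, h2, h3⟩ := split hn k hk
  exact gram_dual _ _ C (NN n k) h1 (MM_NN k) h0 h2 h3 _ _ (YX x hx _) (YYt x _)

theorem lap_tower (hn : ∀ j, 1 ≤ n j) (x : Vtx n → K) (hx : ∀ v, x v ≠ 0) (k : ℕ) (hk : k + 1 < r) :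
    (lapS (fun j t => x ⟨j, t⟩) (k + 1)).det =
      (tau x (k + 1) * gg x (k + 1)) * (gg x k * tau x k) := by
  obtain ⟨h0, C, h1, h2, h3⟩ := split hn k hk
  have hVW : fromRows C (MM n k) * fromCols (BB n (k + 1)) (NN n k) = 1 := by
    rw [fromRows_mul_fromCols, h1, MM_NN, h0, h2, fromBlocks_one]
  have hWV : fromCols (BB n (k + 1)) (NN n k) * fromRows C (MM n k) = 1 := by
    rw [fromCols_mul_fromRows, h3]
  have e : Face n (k + 1) ≃ Fin (rho n (k + 1)) ⊕ Fin (rho n k) :=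
    Fintype.equivOfCardEq (Matrix.square_of_invertible _ _ hWV hVW)
  have hmb : bM n K k * bB n K (k + 1) = 0 := by
    rw [bM, bB, ← Matrix.map_mul, h0]; simp
  have := lap_det e (bB n K (k + 1)) (bM n K k) hmb (XX x (k + 1)) (YY x (k + 1)) (YX x hx _)
    (bM n K (k + 1) * XX x (k + 2) * (bM n K (k + 1))ᵀ) ((bB n K k)ᵀ * YY x k * bB n K k)
  rw [← det_lap_succ x hx, bK_fac, bK_fac]
  rw [transpose_mul, transpose_mul]
  simp only [Matrix.mul_assoc] at this ⊢
  rw [this]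
  simp only [tau, gg, Matrix.mul_assoc]

theorem face_zero (σ : Face n 0) : σ.1 = ∅ := Finset.card_eq_zero.mp σ.2.1

theorem YY_zero (x : Vtx n → K) : YY x 0 = 1 := by
  rw [YY, ← diagonal_one]
  congr 1
  ext σ
  rw [wt, face_zero]; simp

theorem lap_tower_zero (hr : 0 < r) (hn : ∀ j, 1 ≤ n j) (x : Vtx n → K) (hx : ∀ v, x v ≠ 0) :
    (lapS (fun j t => x ⟨j, t⟩) 0).det = tau x 0 ∧ gg x 0 = 1 := by
  have hC : ∃ C : Matrix (Fin (rho n 0)) (Face n 0) ℤ, BB n 0 * C = 1 := by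
    have := fun σ : Face n 0 => bdry_exact_zero hr hn (Pi.single σ 1)
    choose w hw using this
    refine ⟨MM n 0 * Matrix.of (fun i σ => w σ i), ?_⟩
    rw [← Matrix.mul_assoc, ← bdry_fac]
    ext σ σ'
    have := congrFun (hw σ') σ
    simp only [mulVec, dotProduct] at this
    rw [mul_apply]
    simp only [of_apply]
    rw [this, one_apply, Pi.single_apply]
  obtain ⟨C, hC⟩ := hC
  have hCB : C * BB n 0 = 1 := by
    have : C * BB n 0 - 1 = 0 := by
      apply mul_cancel _ (BB_inj (n := n) 0)
      rw [Matrix.mul_sub, ← Matrix.mul_assoc, hC]; simp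
    exact sub_eq_zero.mp this
  have e : Face n 0 ≃ Fin (rho n 0) := Fintype.equivOfCardEq (Matrix.square_of_invertible _ _ hC hCB)
  -- square version of `BB`
  set S : Matrix (Fin (rho n 0)) (Fin (rho n 0)) ℤ := (BB n 0).submatrix e.symm id with hS
  have hdet : S.det * (C.submatrix id e.symm).det = 1 := by
    rw [← det_mul, hS, ← Matrix.submatrix_mul _ _ _ id _ Function.bijective_id, hC,
      submatrix_one_equiv, det_one]
  have hS2 : S.det * S.det = 1 := by
    rcases Int.mul_eq_one_iff_eq_one_or_neg_one.mp hdet with h | h <;> rw [h.1] <;> norm_num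
  have hg : gg x 0 = 1 := by
    have h1 : (bB n K 0)ᵀ * YY x 0 * bB n K 0 = (Sᵀ * S).map (Int.castRingHom K) := by
      rw [YY_zero, Matrix.mul_one, Matrix.map_mul, hS]
      rw [bB]
      have : ((BB n 0).submatrix e.symm id)ᵀ.map (Int.castRingHom K) =
        (((BB n 0).map (Int.castRingHom K))ᵀ).submatrix id e.symm := rfl
      rw [this]
      have : ((BB n 0).submatrix e.symm id).map (Int.castRingHom K) =
        (((BB n 0).map (Int.castRingHom K))).submatrix e.symm id := rfl
      rw [this, submatrix_mul_equiv]; rfl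
    rw [gg, h1]
    have := (Int.castRingHom K).map_det (Sᵀ * S)
    rw [det_mul, det_transpose, hS2] at this
    simpa using this.symm
  refine ⟨?_, hg⟩
  have := lap_det (q := Empty) (e.trans (Equiv.sumEmpty _ _).symm) (bB n K 0) 0 (by simp) (XX x 0) (YY x 0) (YX x hx _)
    (bM n K 0 * XX x 1 * (bM n K 0)ᵀ) 1
  rw [← det_lap_zero x hx, bK_fac]
  rw [transpose_mul]
  have h2 : ((bB n K 0)ᵀ * YY x 0 * bB n K 0).det = 1 := hg
  rw [h2] at this
  simp only [Matrix.mul_assoc] at this ⊢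
  simp only [Matrix.mul_zero, add_zero, det_isEmpty, mul_one] at this
  rw [this, tau, Matrix.mul_assoc]

end Tower
end ColorfulComplex

namespace ColorfulComplex
section Formula

variable {r : ℕ} {n : Fin r → ℕ} {K : Type*} [Field K]

variable (n) in
/-- Product of powers of the linear forms. -/
noncomputable def PP (Λ : Finset (Fin r) → K) (a k : ℕ) : K :=
  ∏ D ∈ Finset.univ.powerset.filter (fun D : Finset (Fin r) => D.card ≤ k),
    Λ D ^ ((a - D.card).choose (k - D.card) * ∏ i ∈ D, (n i - 1))

theorem PP_zero (Λ : Finset (Fin r) → K) (a b : ℕ) : PP n Λ a 0 = PP n Λ b 0 := by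
  refine Finset.prod_congr rfl fun D hD => ?_
  simp

theorem PP_pascal (Λ : Finset (Fin r) → K) (a k : ℕ) (hk : k ≤ a) :
    PP n Λ (a + 1) (k + 1) = PP n Λ a (k + 1) * PP n Λ a k := by
  have h : PP n Λ a k = ∏ D ∈ Finset.univ.powerset.filter (fun D : Finset (Fin r) => D.card ≤ k + 1),
    Λ D ^ (if D.card ≤ k then (a - D.card).choose (k - D.card) * ∏ i ∈ D, (n i - 1) else 0) := by
    rw [PP, Finset.prod_filter, Finset.prod_filter]
    refine Finset.prod_congr rfl fun D _ => ?_
    by_cases h1 : D.card ≤ k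
    · rw [if_pos h1, if_pos (by omega), if_pos h1]
    · simp [h1]
  rw [h, PP, PP, ← Finset.prod_mul_distrib]
  refine Finset.prod_congr rfl fun D hD => ?_
  rw [← pow_add]
  congr 1
  simp only [Finset.mem_filter] at hD
  by_cases h1 : D.card ≤ k
  · rw [if_pos h1, ← add_mul]
    congr 1
    obtain ⟨b, hb⟩ := Nat.exists_eq_add_of_le (h1.trans hk)
    obtain ⟨c, hc⟩ := Nat.exists_eq_add_of_le h1
    rw [show a + 1 - D.card = b + 1 by omega, show k + 1 - D.card = c + 1 by omega,
      show a - D.card = b by omega, show k - D.card = c by omega, Nat.choose_succ_succ, add_comm]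
  · have : D.card = k + 1 := by omega
    simp [this]

theorem PP_ne (Λ : Finset (Fin r) → K) (hΛ : ∀ D, D.card < r → Λ D ≠ 0) (a k : ℕ) (hk : k < r) :
    PP n Λ a k ≠ 0 := by
  refine Finset.prod_ne_zero_iff.mpr fun D hD => pow_ne_zero _ (hΛ D ?_)
  simp only [Finset.mem_filter] at hD
  omega

variable (n) in
/-- Elementary symmetric-type count. -/
def EE (k : ℕ) (j : Fin r) : ℕ := ∑ D ∈ Finset.powersetCard k (Finset.univ.erase j), ∏ t ∈ D, n t

variable (n) in
def eeF : ℕ → Fin r → ℤ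
  | 0, _ => 0
  | k + 1, j => EE n k j - eeF k j

theorem eeF_eq (e : ℕ) (j : Fin r) : eeF n (e + 1) j =
    ∑ D ∈ (Finset.univ.erase j).powerset.filter (fun D => D.card ≤ e),
        (-1 : ℤ) ^ (e - D.card) * ∏ t ∈ D, (n t : ℤ) := by
  have hE : ∀ k, (EE n k j : ℤ) = ∑ D ∈ (Finset.univ.erase j).powerset.filter (fun D => D.card = k),
      ∏ t ∈ D, (n t : ℤ) := by
    intro k
    rw [EE, Finset.powersetCard_eq_filter]
    push_cast
    rfl
  induction e with
  | zero =>
    rw [eeF, eeF, hE]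
    simp
  | succ e ih =>
    rw [eeF, ih, hE]
    have : (Finset.univ.erase j).powerset.filter (fun D => D.card ≤ e + 1) =
      (Finset.univ.erase j).powerset.filter (fun D => D.card = e + 1) ∪
      (Finset.univ.erase j).powerset.filter (fun D => D.card ≤ e) := by
      ext D
      simp only [Finset.mem_union, Finset.mem_filter]
      constructor
      · rintro ⟨h1, h2⟩
        rcases Nat.lt_or_ge D.card (e + 1) with h | h
        · exact Or.inr ⟨h1, by omega⟩
        · exact Or.inl ⟨h1, by omega⟩
      · rintro (⟨h1, h2⟩ | ⟨h1, h2⟩)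
        · exact ⟨h1, by omega⟩
        · exact ⟨h1, by omega⟩
    rw [this, Finset.sum_union]
    · rw [sub_eq_add_neg, ← Finset.sum_neg_distrib]
      congr 1
      · refine Finset.sum_congr rfl fun D hD => ?_
        simp only [Finset.mem_filter] at hD
        simp [hD.2]
      · refine Finset.sum_congr rfl fun D hD => ?_
        simp only [Finset.mem_filter] at hD
        rw [show e + 1 - D.card = (e - D.card) + 1 by omega, pow_succ]
        ring
    · rw [Finset.disjoint_left]
      intro D h1 h2
      simp only [Finset.mem_filter] at h1 h2
      omega

theorem count_fib (j : Fin r) (t : Fin (n j)) (D : Finset (Fin r)) (hD : j ∉ D) :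
    (Finset.univ.filter fun f : Cube n => f j = some t ∧ supp f = insert j D).card =
      ∏ i ∈ D, n i := by
  let a : ∀ i, Finset (Option (Fin (n i))) := fun i =>
    if i ∈ D then Finset.univ.map Function.Embedding.some
    else if h : i = j then {some (h ▸ t)} else {none}
  have h1 : (Finset.univ.filter fun f : Cube n => f j = some t ∧ supp f = insert j D) =
      Fintype.piFinset a := by
    ext f
    simp only [Finset.mem_filter, Finset.mem_univ, true_and, Fintype.mem_piFinset]
    have hs : ∀ i, i ∈ supp f ↔ f i ≠ none := by intro i; simp [supp]
    constructor
    · rintro ⟨h2, h3⟩ i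
      simp only [a]
      split_ifs with h4 h5
      · have : i ∈ supp f := by rw [h3]; simp [h4]
        rw [hs] at this
        obtain ⟨u, hu⟩ := Option.ne_none_iff_exists'.mp this
        simp [hu]
      · subst h5; simp [h2]
      · have : i ∉ supp f := by rw [h3]; simp [h4, h5]
        rw [hs] at this
        simpa using this
    · intro h
      have hj : f j = some t := by
        have := h j
        simp only [a, if_neg hD] at this
        simpa using this
      refine ⟨hj, ?_⟩
      ext i
      rw [hs]
      have hi := h i
      simp only [a] at hi
      rw [Finset.mem_insert]
      split_ifs at hi with h4 h5
      · simp at hi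
        obtain ⟨u, hu⟩ := hi
        simp [h4, ← hu]
      · subst h5; simp [hj]
      · simp at hi
        simp [h4, h5, hi]
  rw [h1, Fintype.card_piFinset]
  have h2 : ∀ i, (a i).card = if i ∈ D then n i else 1 := by
    intro i
    simp only [a]
    split_ifs <;> simp
  simp only [h2]
  rw [Finset.prod_ite_mem]
  simp

theorem count_vertex (k : ℕ) (j : Fin r) (t : Fin (n j)) :
    (Finset.univ.filter fun f : Cube n => f j = some t ∧ deg f = k + 1).card = EE n k j := by
  rw [Finset.card_eq_sum_card_fiberwise (f := fun f => (supp f).erase j)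
    (t := Finset.powersetCard k (Finset.univ.erase j)), EE]
  · refine Finset.sum_congr rfl fun D hD => ?_
    rw [Finset.mem_powersetCard] at hD
    have hj : j ∉ D := fun h => by simpa using hD.1 h
    rw [← count_fib j t D hj, Finset.filter_filter]
    congr 1
    ext f
    simp only [Finset.mem_filter, Finset.mem_univ, true_and]
    constructor
    · rintro ⟨⟨h1, h2⟩, h3⟩
      refine ⟨h1, ?_⟩
      rw [← h3, Finset.insert_erase]
      simp [supp, h1]
    · rintro ⟨h1, h3⟩
      refine ⟨⟨h1, ?_⟩, ?_⟩
      · change (supp f).card = k + 1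
        rw [h3, Finset.card_insert_of_notMem hj, hD.2]
      · rw [h3, Finset.erase_insert hj]
  · intro f hf
    simp only [Finset.coe_filter, Finset.mem_univ, true_and, Set.mem_ofPred_eq] at hf
    simp only [Finset.mem_coe, Finset.mem_powersetCard]
    refine ⟨Finset.erase_subset_erase _ (Finset.subset_univ _), ?_⟩
    have hj : j ∈ supp f := by simp [supp, hf.1]
    rw [Finset.card_erase_of_mem hj]
    have : (supp f).card = k + 1 := hf.2
    omega

theorem det_XX (x : Vtx n → K) (k : ℕ) :
    (XX x (k + 1)).det = ∏ j, (∏ t, x ⟨j, t⟩) ^ EE n k j := by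
  rw [XX, det_diagonal, ← (eF (k + 1)).prod_comp]
  have h1 : ∀ f : Gk n (k + 1), wt x (k + 1) (eF (k + 1) f) =
      ∏ v : Vtx n, if f.1 v.1 = some v.2 then x v else 1 := by
    intro f
    change ∏ v ∈ toFin f.1, x v = _
    rw [toFin, Finset.prod_filter]
  simp only [h1]
  rw [Finset.prod_comm, Fintype.prod_sigma]
  refine Finset.prod_congr rfl fun j _ => ?_
  rw [← Finset.prod_pow]
  refine Finset.prod_congr rfl fun t _ => ?_
  rw [Finset.prod_ite, Finset.prod_const, Finset.prod_const_one, mul_one, ← count_vertex k j t]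
  congr 1
  refine Finset.card_bij (fun f _ => f.1) ?_ ?_ ?_
  · intro f hf
    simp only [Finset.mem_filter, Finset.mem_univ, true_and] at hf ⊢
    exact ⟨hf, f.2⟩
  · intro f _ g _ h
    exact Subtype.ext h
  · intro f hf
    simp only [Finset.mem_filter, Finset.mem_univ, true_and] at hf
    exact ⟨⟨f, hf.2⟩, by simpa using hf.1, rfl⟩

theorem tau_formula (hr : 2 ≤ r) (hn : ∀ j, 1 ≤ n j) (x : Vtx n → K) (hx : ∀ v, x v ≠ 0)
    (hs : ∀ D : Finset (Fin r), D.card < r → (∑ j ∈ Dᶜ, ∑ t, x ⟨j, t⟩) ≠ 0)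
    (k : ℕ) (hk : k < r) :
    tau x k = (∏ j, (∏ t, x ⟨j, t⟩) ^ eeF n k j) *
      PP n (fun D => ∑ j ∈ Dᶜ, ∑ t, x ⟨j, t⟩) (r - 2) k := by
  set Λ : Finset (Fin r) → K := fun D => ∑ j ∈ Dᶜ, ∑ t, x ⟨j, t⟩ with hΛ
  have hsj : ∀ j : Fin r, ∑ t, x ⟨j, t⟩ ≠ 0 := by
    intro j
    have := hs (Finset.univ.erase j) (by
      rw [Finset.card_erase_of_mem (Finset.mem_univ _), Finset.card_univ, Fintype.card_fin]; omega)
    have h2 : (Finset.univ.erase j)ᶜ = {j} := by ext; simp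
    rw [h2, Finset.sum_singleton] at this
    exact this
  have hL : ∀ k, (lapS (fun j t => x ⟨j, t⟩) k).det = PP n Λ r k :=
    fun k => det_lapS hn (fun j t => x ⟨j, t⟩) hsj k
  obtain ⟨h0, hg0⟩ := lap_tower_zero (by omega : 0 < r) hn x hx
  have hp : ∀ j : Fin r, ∏ t, x ⟨j, t⟩ ≠ 0 := fun j => Finset.prod_ne_zero_iff.mpr fun t _ => hx _
  have hu : ∀ k, k < r → tau x k * gg x k = PP n Λ (r - 1) k := by
    intro k
    induction k with
    | zero =>
      intro _
      rw [hg0, mul_one, ← h0, hL, PP_zero]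
    | succ k ih =>
      intro hk
      have h1 := lap_tower hn x hx k hk
      rw [mul_comm (gg x k), ih (by omega), hL] at h1
      have h2 := PP_pascal (n := n) Λ (r - 1) k (by omega)
      rw [show r - 1 + 1 = r by omega] at h2
      rw [h2] at h1
      exact (mul_right_cancel₀ (PP_ne Λ hs _ _ (by omega)) h1).symm
  induction k with
  | zero =>
    rw [← h0, hL, PP_zero Λ r (r - 2)]
    simp [eeF]
  | succ k ih =>
    have h1 := tau_eq hn x hx k hk
    have h2 := hu (k + 1) hk
    have h3 := PP_pascal (n := n) Λ (r - 2) k (by omega)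
    rw [show r - 2 + 1 = r - 1 by omega] at h3
    have h4 : tau x (k + 1) * tau x k =
        (XX x (k + 1)).det * (PP n Λ (r - 2) (k + 1) * PP n Λ (r - 2) k) := by
      rw [← h3, ← h2, h1]; ring
    have h5 := ih (by omega)
    have hne : tau x k ≠ 0 := by
      rw [h5]
      refine mul_ne_zero (Finset.prod_ne_zero_iff.mpr fun j _ => zpow_ne_zero _ (hp j))
        (PP_ne Λ hs _ _ (by omega))
    apply mul_right_cancel₀ hne
    rw [h4, h5, det_XX]
    have h6 : ∏ j, (∏ t, x ⟨j, t⟩) ^ EE n k j =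
        (∏ j, (∏ t, x ⟨j, t⟩) ^ eeF n (k + 1) j) * (∏ j, (∏ t, x ⟨j, t⟩) ^ eeF n k j) := by
      rw [← Finset.prod_mul_distrib]
      refine Finset.prod_congr rfl fun j _ => ?_
      rw [← zpow_add₀ (hp j), eeF, sub_add_cancel, zpow_natCast]
    rw [h6]; ring

end Formula
end ColorfulComplex

namespace ColorfulComplex
section Comb

variable {r : ℕ} {n : Fin r → ℕ}

theorem card_torsion_of_finite (A : Type*) [AddCommGroup A] [inst : Module ℤ A] [Finite A] :
    Nat.card (Submodule.torsion ℤ A) = Nat.card A := by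
  obtain rfl : inst = AddCommGroup.toIntModule A := Subsingleton.elim _ _
  have h : Submodule.torsion ℤ A = ⊤ := by
    rw [eq_top_iff]
    intro a _
    have hne : (Nat.card A : ℤ) ≠ 0 := by exact_mod_cast Nat.card_pos.ne'
    refine (Submodule.mem_torsion_iff a).mpr ⟨⟨(Nat.card A : ℤ), mem_nonZeroDivisors_of_ne_zero hne⟩, ?_⟩
    rw [Submonoid.mk_smul]
    rw [Nat.cast_smul_eq_nsmul, card_nsmul_eq_zero']
  rw [h]
  exact Nat.card_congr (Submodule.topEquiv (R := ℤ) (M := A)).toEquiv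

theorem card_quot_range {ρ : ℕ} (S : Matrix (Fin ρ) (Fin ρ) ℤ) (hS : S.det ≠ 0) :
    Nat.card ((Fin ρ → ℤ) ⧸ LinearMap.range S.mulVecLin) = S.det.natAbs := by
  have hinj : Function.Injective S.mulVecLin := by
    rw [← LinearMap.ker_eq_bot, LinearMap.ker_eq_bot']
    intro v hv
    exact Matrix.eq_zero_of_mulVec_eq_zero hS hv
  have := Submodule.natAbs_det_equiv (LinearMap.range S.mulVecLin)
    (LinearEquiv.ofInjective S.mulVecLin hinj)
  rw [← this]
  have h2 : ((LinearMap.range S.mulVecLin).subtype.comp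
    ((LinearEquiv.ofInjective S.mulVecLin hinj : (Fin ρ → ℤ) →ₗ[ℤ] _))) = Matrix.toLin' S := by
    ext; simp
  have h3 := LinearMap.det_toLin' S
  rw [← h2] at h3
  rw [← h3]
  rfl

/-- the square submatrix of `MM` on the columns of `T` -/
noncomputable def ST (k : ℕ) {T : Finset (Face n (k + 1))} (f : Fin (rho n k) ≃ T) :
    Matrix (Fin (rho n k)) (Fin (rho n k)) ℤ := (MM n k).submatrix id (fun i => (f i).1)

theorem BB_ST (k : ℕ) {T : Finset (Face n (k + 1))} (f : Fin (rho n k) ≃ T) :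
    BB n k * ST k f = (bdry n k).submatrix id (fun i => (f i).1) := by
  rw [bdry_fac]; rfl

theorem rank_eq (hn : ∀ j, 1 ≤ n j) (e : ℕ) (he : e + 1 < r) :
    ((bdry n (e + 1)).map (Int.cast : ℤ → ℚ)).rank = rho n (e + 1) := by
  obtain ⟨h0, C, h1, h2, h3⟩ := split hn e he
  change ((bdry n (e + 1)).map (Int.castRingHom ℚ)).rank = _
  apply le_antisymm
  · rw [bdry_fac, Matrix.map_mul]
    refine (rank_mul_le_right _ _).trans ((rank_le_card_height _).trans ?_)
    simp
  · have h : (C * bdry n (e + 1) * NN n (e + 1)) = 1 := by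
      rw [bdry_fac, ← Matrix.mul_assoc, h1, Matrix.one_mul, MM_NN]
    have h4 := congrArg (fun A => Matrix.map A (Int.castRingHom ℚ)) h
    simp only [Matrix.map_mul] at h4
    have h5 : ((1 : Matrix (Fin (rho n (e + 1))) (Fin (rho n (e + 1))) ℤ).map (Int.castRingHom ℚ)) = 1 := by simp
    rw [h5] at h4
    have h6 := congrArg Matrix.rank h4
    rw [rank_one, Fintype.card_fin] at h6
    rw [← h6]
    exact (rank_mul_le_left _ _).trans (rank_mul_le_right _ _)

theorem forest_iff (hn : ∀ j, 1 ≤ n j) (e : ℕ) (he : e + 1 < r) (T : Finset (Face n (e + 2)))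
    (f : Fin (rho n (e + 1)) ≃ T) : IsForest n e T ↔ (ST (e + 1) f).det ≠ 0 := by
  obtain ⟨h0, C, h1, h2, h3⟩ := split hn e he
  have hc : T.card = rho n (e + 1) := by
    have := Fintype.card_congr f
    simpa using this.symm
  have hcb : C.map (Int.castRingHom ℚ) * (BB n (e + 1)).map (Int.castRingHom ℚ) = 1 := by
    rw [← Matrix.map_mul, h1]; simp
  have hdet : (ST (e + 1) f).det ≠ 0 ↔ ((ST (e + 1) f).map (Int.castRingHom ℚ)).det ≠ 0 := by
    have := (Int.castRingHom ℚ).map_det (ST (e + 1) f)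
    rw [RingHom.mapMatrix_apply] at this
    rw [← this]
    simp
  unfold IsForest
  rw [rank_eq hn e he, hdet, and_iff_left hc, ← linearIndependent_equiv f]
  have hcol : ((fun τ : T => fun σ => ((bdry n (e + 1) σ τ.1 : ℤ) : ℚ)) ∘ f) =
      ((BB n (e + 1)).map (Int.castRingHom ℚ) * (ST (e + 1) f).map (Int.castRingHom ℚ)).col := by
    rw [← Matrix.map_mul, BB_ST]; rfl
  rw [hcol, ← Matrix.mulVec_injective_iff, ← isUnit_iff_ne_zero, ← Matrix.isUnit_iff_isUnit_det,
    ← Matrix.mulVec_injective_iff_isUnit]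
  constructor
  · intro h v w hvw
    apply h
    change _ *ᵥ v = _ *ᵥ w
    rw [← mulVec_mulVec, ← mulVec_mulVec]
    exact congrArg _ hvw
  · intro h v w hvw
    apply h
    change _ *ᵥ v = _ *ᵥ w at hvw
    rw [← mulVec_mulVec, ← mulVec_mulVec] at hvw
    have := congrArg (fun y => C.map (Int.castRingHom ℚ) *ᵥ y) hvw
    simp only [mulVec_mulVec (M := C.map (Int.castRingHom ℚ)), hcb, one_mulVec] at this
    exact this

theorem torsion_eq (hn : ∀ j, 1 ≤ n j) (e : ℕ) (he : e + 1 < r) (T : Finset (Face n (e + 2)))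
    (f : Fin (rho n (e + 1)) ≃ T) (hf : (ST (e + 1) f).det ≠ 0) :
    torsionCount n e T = (ST (e + 1) f).det.natAbs := by
  obtain ⟨h0, C, h1, h2, h3⟩ := split hn e he
  have hDB : bdry n e * BB n (e + 1) = 0 := by
    rw [bdry_fac, Matrix.mul_assoc, h0, Matrix.mul_zero]
  have hker : ∀ v, bdry n e *ᵥ v = 0 → BB n (e + 1) *ᵥ (C *ᵥ v) = v := by
    intro v hv
    have hM : MM n e *ᵥ v = 0 := by
      apply BB_inj
      rw [mulVec_mulVec, ← bdry_fac, hv]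
    have := congrArg (fun A => A *ᵥ v) h3
    simp only [add_mulVec, ← mulVec_mulVec, hM, mulVec_zero, add_zero, one_mulVec] at this
    exact this
  let φ : LinearMap.ker (bdry n e).mulVecLin ≃ₗ[ℤ] (Fin (rho n (e + 1)) → ℤ) :=
    { toFun := fun v => C *ᵥ v.1
      map_add' := fun a b => by simp [mulVec_add]
      map_smul' := fun a b => mulVec_smul C a b.1
      invFun := fun w => ⟨BB n (e + 1) *ᵥ w, by
        rw [LinearMap.mem_ker, mulVecLin_apply, mulVec_mulVec, hDB, zero_mulVec]⟩
      left_inv := fun v => Subtype.ext (hker v.1 v.2)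
      right_inv := fun w => by
        change C *ᵥ (BB n (e + 1) *ᵥ w) = w
        rw [mulVec_mulVec, h1, one_mulVec] }
  have hspan : Submodule.span ℤ ((fun τ => (bdry n (e + 1))ᵀ τ) '' (↑T : Set (Face n (e + 2)))) =
      LinearMap.range (BB n (e + 1) * ST (e + 1) f).mulVecLin := by
    rw [Matrix.range_mulVecLin, BB_ST]
    congr 1
    ext v
    constructor
    · rintro ⟨τ, hτ, rfl⟩
      refine ⟨f.symm ⟨τ, hτ⟩, ?_⟩
      ext σ
      simp [Matrix.col]
    · rintro ⟨i, rfl⟩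
      exact ⟨(f i).1, (f i).2, rfl⟩
  have hmap : Submodule.map (φ : _ →ₗ[ℤ] _) (Submodule.comap (LinearMap.ker (bdry n e).mulVecLin).subtype
      (Submodule.span ℤ ((fun τ => (bdry n (e + 1))ᵀ τ) '' (↑T : Set (Face n (e + 2)))))) =
      LinearMap.range (ST (e + 1) f).mulVecLin := by
    rw [hspan]
    ext w
    simp only [Submodule.mem_map, Submodule.mem_comap, LinearMap.mem_range, mulVecLin_apply]
    constructor
    · rintro ⟨v, ⟨u, hu⟩, rfl⟩
      refine ⟨u, ?_⟩
      change _ = C *ᵥ v.1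
      change _ = v.1 at hu
      rw [← hu, mulVec_mulVec, ← Matrix.mul_assoc, h1, Matrix.one_mul]
    · rintro ⟨u, rfl⟩
      refine ⟨φ.symm (ST (e + 1) f *ᵥ u), ⟨u, ?_⟩, ?_⟩
      · change _ = BB n (e + 1) *ᵥ _
        rw [mulVec_mulVec]
      · exact φ.apply_symm_apply _
  have hcard : Nat.card (Hgrp n e T) = (ST (e + 1) f).det.natAbs := by
    rw [← card_quot_range _ hf]
    exact Nat.card_congr (Submodule.Quotient.equiv _ _ φ hmap).toEquiv
  have : Finite (Hgrp n e T) := by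
    apply Nat.finite_of_card_ne_zero
    rw [hcard]
    simpa using hf
  rw [torsionCount, card_torsion_of_finite, hcard]

theorem lhs_eq (hn : ∀ j, 1 ≤ n j) (e : ℕ) (he : e + 1 < r) {K : Type*} [Field K] (x : Vtx n → K) :
    (∑ᶠ T ∈ {T | IsForest n e T},
        ((torsionCount n e T ^ 2 : ℕ) : K) * ∏ σ ∈ T, ∏ v ∈ σ.1, x v) = tau x (e + 1) := by
  classical
  have h1 : ∀ T : Finset (Face n (e + 2)), ∀ f : Fin (rho n (e + 1)) ≃ T,
      (if IsForest n e T then ((torsionCount n e T ^ 2 : ℕ) : K) else 0) =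
        ((bM n K (e + 1)).submatrix id (fun i => (f i : Face n (e + 2)))).det ^ 2 := by
    intro T f
    have h2 : ((bM n K (e + 1)).submatrix id (fun i => (f i : Face n (e + 2)))).det =
        (((ST (e + 1) f).det : ℤ) : K) := by
      have := (Int.castRingHom K).map_det (ST (e + 1) f)
      rw [RingHom.mapMatrix_apply] at this
      exact this.symm
    rw [h2]
    split_ifs with h
    · rw [forest_iff hn e he T f] at h
      rw [torsion_eq hn e he T f h]
      rw [← Int.cast_natCast, Nat.cast_pow, Int.natCast_natAbs, sq_abs, Int.cast_pow]
    · rw [forest_iff hn e he T f, not_not] at h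
      simp [h]
  have h3 := cauchy_binet (bM n K (e + 1)) (wt x (e + 2)) _ h1
  rw [tau, XX]
  refine Eq.trans ?_ h3.symm
  rw [finsum_mem_eq_finite_toFinset_sum _ (Set.toFinite _)]
  have h4 : ∀ T : Finset (Face n (e + 2)), IsForest n e T → T.card = Fintype.card (Fin (rho n (e + 1))) := by
    intro T hT
    rw [hT.2, rank_eq hn e he, Fintype.card_fin]
  simp only [ite_mul, zero_mul]
  rw [← Finset.sum_filter, Finset.filter_filter]
  refine Finset.sum_congr ?_ fun T _ => rfl
  ext T
  simp only [Set.Finite.mem_toFinset, Finset.mem_filter, Finset.mem_univ, true_and]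
  exact ⟨fun h => ⟨h4 T h, h⟩, fun h => h.2⟩

end Comb
end ColorfulComplex

/-- **The weighted Adin formula of Aalipour–Duval–Martin** for the complete colorful
complex `K_{n_1,…,n_r}` and `1 ≤ k ≤ r - 1` (here `k = e + 1`), as an identity of
rational functions in the vertex variables `v_{j,t}`. -/
theorem aalipour_duval_formula (r e : ℕ) (hr : 2 ≤ r) (n : Fin r → ℕ)
    (hn : ∀ j, 1 ≤ n j) (hk : e + 1 ≤ r - 1) :
    letI K := FractionRing (MvPolynomial (Vtx n) ℚ)
    letI φ : MvPolynomial (Vtx n) ℚ →+* K := algebraMap _ _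
    letI p : Fin r → K := fun j => ∏ t : Fin (n j), φ (X ⟨j, t⟩)
    letI s : Fin r → K := fun j => ∑ t : Fin (n j), φ (X ⟨j, t⟩)
    letI ee : Fin r → ℤ := fun j =>
      ∑ D ∈ (Finset.univ.erase j).powerset.filter (fun D => D.card ≤ e),
        (-1 : ℤ) ^ (e - D.card) * ∏ t ∈ D, (n t : ℤ)
    (∑ᶠ T ∈ {T | IsForest n e T},
        ((torsionCount n e T ^ 2 : ℕ) : K) * ∏ σ ∈ T, ∏ v ∈ σ.1, φ (X v)) =
      (∏ j : Fin r, p j ^ ee j) *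
        ∏ D ∈ Finset.univ.powerset.filter (fun D : Finset (Fin r) => D.card ≤ e + 1),
          (∑ j ∈ Dᶜ, s j) ^
            (Nat.choose (r - 2 - D.card) (e + 1 - D.card) * ∏ i ∈ D, (n i - 1)) := by
  set φ : MvPolynomial (Vtx n) ℚ →+* FractionRing (MvPolynomial (Vtx n) ℚ) := algebraMap _ _ with hφ
  have hinj : Function.Injective φ := IsFractionRing.injective _ _
  have hx : ∀ v : Vtx n, φ (X v) ≠ 0 := fun v => by
    rw [Ne, map_eq_zero_iff φ hinj]
    exact X_ne_zero v
  have hs : ∀ D : Finset (Fin r), D.card < r → (∑ j ∈ Dᶜ, ∑ t, φ (X ⟨j, t⟩)) ≠ 0 := by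
    intro D hD
    have h1 : (∑ j ∈ Dᶜ, ∑ t, φ (X ⟨j, t⟩)) =
        φ (∑ j ∈ Dᶜ, ∑ t : Fin (n j), X ⟨j, t⟩) := by
      simp only [map_sum]
    rw [h1, Ne, map_eq_zero_iff φ hinj]
    intro h
    have h2 := congrArg (MvPolynomial.eval (fun _ => (1 : ℚ))) h
    simp only [map_sum, eval_X, map_zero, Finset.sum_const, Finset.card_univ, Fintype.card_fin,
      nsmul_eq_mul, mul_one] at h2
    have h3 : Dᶜ.Nonempty := by
      rw [← Finset.card_pos, Finset.card_compl, Fintype.card_fin]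
      omega
    have h4 : (0 : ℚ) < ∑ j ∈ Dᶜ, (n j : ℚ) :=
      Finset.sum_pos (fun j _ => by exact_mod_cast hn j) h3
    exact absurd h2 h4.ne'
  have h1 := lhs_eq hn e (by omega) (fun v => φ (X v))
  have h2 := tau_formula hr hn (fun v => φ (X v)) hx hs (e + 1) (by omega)
  refine h1.trans (h2.trans ?_)
  refine congrArg₂ (· * ·) ?_ rfl
  refine Finset.prod_congr rfl fun j _ => ?_
  rw [eeF_eq]
end
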